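/- arXiv:1807.07736 — 9 statements merged into one kernel-verified Lean document; each statement's English description precedes it below -/
import Mathlib

section
/- Let γ, γ̄ : I → ℝ² be two smooth unit-speed spacelike curves on the Minkowski plane with positive pointing tangent vector fields, and suppose they have the same curvature function κ (i.e. T′ = κN and T̄′ = κN̄, where T = γ′, N = J′T, T̄ = γ̄′, N̄ = J′T̄). Then there exist a matrix A ∈ SO(1,1) and a vector v ∈ ℝ² such that γ̄(x) = A γ(x) + v for all x ∈ I. -/
lemma aux_const {I : Set ℝ} (hIo : IsOpen I) (hIc : IsPreconnected I) {f : ℝ → ℝ}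
    (h : ∀ x ∈ I, HasDerivAt f 0 x) {x y : ℝ} (hx : x ∈ I) (hy : y ∈ I) : f x = f y :=
  hIo.is_const_of_deriv_eq_zero hIc
    (fun z hz => (h z hz).differentiableAt.differentiableWithinAt)
    (fun z hz => (h z hz).deriv) hx hy

lemma aux_derivs {I : Set ℝ} (hIo : IsOpen I) {γ : ℝ → Fin 2 → ℝ} {κ : ℝ → ℝ}
    (hγ : ContDiffOn ℝ (⊤ : ℕ∞) γ I)
    (hcurv : ∀ x ∈ I, deriv (deriv γ) x = κ x • ![deriv γ x 1, deriv γ x 0])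
    (x : ℝ) (hx : x ∈ I) :
    (∀ i, HasDerivAt (fun y => γ y i) (deriv γ x i) x) ∧
    HasDerivAt (fun y => deriv γ y 0) (κ x * deriv γ x 1) x ∧
    HasDerivAt (fun y => deriv γ y 1) (κ x * deriv γ x 0) x := by
  have hn : I ∈ nhds x := hIo.mem_nhds hx
  have h1 : HasDerivAt γ (deriv γ x) x :=
    ((hγ.differentiableOn (by simp)).differentiableAt hn).hasDerivAt
  have h2 : ContDiffOn ℝ 1 (deriv γ) I :=
    hγ.deriv_of_isOpen hIo (by
      have h : ((2 : ℕ∞) : WithTop ℕ∞) ≤ ((⊤ : ℕ∞) : WithTop ℕ∞) := WithTop.coe_le_coe.2 le_top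
      rw [one_add_one_eq_two]; exact h)
  have h3 : HasDerivAt (deriv γ) (deriv (deriv γ) x) x :=
    ((h2.differentiableOn (by simp)).differentiableAt hn).hasDerivAt
  rw [hcurv x hx] at h3
  have h4 := hasDerivAt_pi.1 h3
  exact ⟨hasDerivAt_pi.1 h1, by simpa using h4 0, by simpa using h4 1⟩

/-- Two smooth unit-speed spacelike curves on the Minkowski plane with
positive pointing tangent vector fields and the same curvature `κ` differ only by
a Lorentzian motion: there exist `A ∈ SO(1,1)` and `v ∈ ℝ²` with `γ̄ = A γ + v` on `I`. -/
theorem stmt_1 (I : Set ℝ) (hIo : IsOpen I) (hIc : IsPreconnected I)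
    (γ γbar : ℝ → Fin 2 → ℝ) (κ : ℝ → ℝ)
    (hγ : ContDiffOn ℝ (⊤ : ℕ∞) γ I) (hγbar : ContDiffOn ℝ (⊤ : ℕ∞) γbar I)
    (hunit : ∀ x ∈ I, deriv γ x 0 * deriv γ x 0 - deriv γ x 1 * deriv γ x 1 = 1)
    (hunitbar : ∀ x ∈ I, deriv γbar x 0 * deriv γbar x 0 - deriv γbar x 1 * deriv γbar x 1 = 1)
    (hpos : ∀ x ∈ I, 0 < deriv γ x 0)
    (hposbar : ∀ x ∈ I, 0 < deriv γbar x 0)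
    (hcurv : ∀ x ∈ I, deriv (deriv γ) x = κ x • ![deriv γ x 1, deriv γ x 0])
    (hcurvbar : ∀ x ∈ I, deriv (deriv γbar) x = κ x • ![deriv γbar x 1, deriv γbar x 0]) :
    ∃ A : Matrix (Fin 2) (Fin 2) ℝ, ∃ v : Fin 2 → ℝ,
      A.transpose * !![(1 : ℝ), 0; 0, -1] * A = !![(1 : ℝ), 0; 0, -1] ∧ A.det = 1 ∧
      ∀ x ∈ I, γbar x = A.mulVec (γ x) + v := by
  rcases I.eq_empty_or_nonempty with rfl | ⟨p, hp⟩
  · exact ⟨1, 0, by simp, by simp, by simp⟩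
  have H := aux_derivs hIo hγ hcurv
  have Hb := aux_derivs hIo hγbar hcurvbar
  obtain ⟨C, hC⟩ : ∃ C, C = deriv γ p 0 * deriv γbar p 0 - deriv γ p 1 * deriv γbar p 1 := ⟨_, rfl⟩
  obtain ⟨S, hS⟩ : ∃ S, S = deriv γ p 0 * deriv γbar p 1 - deriv γ p 1 * deriv γbar p 0 := ⟨_, rfl⟩
  have hCx : ∀ x ∈ I, deriv γ x 0 * deriv γbar x 0 - deriv γ x 1 * deriv γbar x 1 = C := by
    intro x hx
    rw [hC]
    refine aux_const hIo hIc (f := fun x => deriv γ x 0 * deriv γbar x 0 - deriv γ x 1 * deriv γbar x 1) ?_ hx hp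
    intro y hy
    obtain ⟨-, h0, h1⟩ := H y hy
    obtain ⟨-, k0, k1⟩ := Hb y hy
    refine ((h0.mul k0).sub (h1.mul k1)).congr_deriv ?_
    ring
  have hSx : ∀ x ∈ I, deriv γ x 0 * deriv γbar x 1 - deriv γ x 1 * deriv γbar x 0 = S := by
    intro x hx
    rw [hS]
    refine aux_const hIo hIc (f := fun x => deriv γ x 0 * deriv γbar x 1 - deriv γ x 1 * deriv γbar x 0) ?_ hx hp
    intro y hy
    obtain ⟨-, h0, h1⟩ := H y hy
    obtain ⟨-, k0, k1⟩ := Hb y hy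
    refine ((h0.mul k1).sub (h1.mul k0)).congr_deriv ?_
    ring
  have hCS : C * C - S * S = 1 := by
    have e1 := hunit p hp
    have e2 := hunitbar p hp
    rw [hC, hS]
    linear_combination (deriv γbar p 0 * deriv γbar p 0 - deriv γbar p 1 * deriv γbar p 1) * e1 + e2
  have g0 : ∀ x ∈ I, γbar x 0 - (C * γ x 0 + S * γ x 1) = γbar p 0 - (C * γ p 0 + S * γ p 1) := by
    intro x hx
    refine aux_const hIo hIc (f := fun x => γbar x 0 - (C * γ x 0 + S * γ x 1)) ?_ hx hp
    intro y hy
    have h := (H y hy).1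
    have k := (Hb y hy).1
    refine ((k 0).sub (((h 0).const_mul C).add ((h 1).const_mul S))).congr_deriv ?_
    rw [← hCx y hy, ← hSx y hy]
    linear_combination (-deriv γbar y 0) * hunit y hy
  have g1 : ∀ x ∈ I, γbar x 1 - (S * γ x 0 + C * γ x 1) = γbar p 1 - (S * γ p 0 + C * γ p 1) := by
    intro x hx
    refine aux_const hIo hIc (f := fun x => γbar x 1 - (S * γ x 0 + C * γ x 1)) ?_ hx hp
    intro y hy
    have h := (H y hy).1
    have k := (Hb y hy).1
    refine ((k 1).sub (((h 0).const_mul S).add ((h 1).const_mul C))).congr_deriv ?_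
    rw [← hCx y hy, ← hSx y hy]
    linear_combination (-deriv γbar y 1) * hunit y hy
  refine ⟨!![C, S; S, C], ![γbar p 0 - (C * γ p 0 + S * γ p 1), γbar p 1 - (S * γ p 0 + C * γ p 1)],
    ?_, ?_, ?_⟩
  · ext i j
    fin_cases i <;> fin_cases j <;> simp [Matrix.mul_apply, Fin.sum_univ_two] <;> linarith
  · rw [Matrix.det_fin_two_of]; exact hCS
  · intro x hx
    have a0 := g0 x hx
    have a1 := g1 x hx
    ext i
    fin_cases i <;> simp [Matrix.mulVec, dotProduct, Fin.sum_univ_two] <;> linarith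
end

section
/- Let θ : ℝ² → ℝ be smooth, let γ : ℝ² → ℝ² be smooth with γ_x(x,t) = T(x,t) = (cosh θ(x,t), sinh θ(x,t)), and set N = (sinh θ, cosh θ) and κ = θ_x. If γ satisfies the defocusing mKdV flow γ_t = −(κ²/2) T + κ_x N for all (x,t), then θ satisfies θ_t = κ_{xx} − (1/2)κ³, i.e. the potential defocusing mKdV equation θ_t = θ_{xxx} − (1/2)θ_x³, and consequently the curvature κ satisfies the defocusing mKdV equation κ_t = κ_{xxx} − (3/2)κ² κ_x. -/
theorem aux_dx {E : Type*} [NormedAddCommGroup E] [NormedSpace ℝ E] {f : ℝ × ℝ → E}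
    {x t : ℝ} (hf : DifferentiableAt ℝ f (x, t)) :
    HasDerivAt (fun x' => f (x', t)) (fderiv ℝ f (x, t) (1, 0)) x := by
  have h : HasDerivAt (fun x' : ℝ => (x', t)) ((1 : ℝ), (0 : ℝ)) x :=
    (hasDerivAt_id x).prodMk (hasDerivAt_const x t)
  exact hf.hasFDerivAt.comp_hasDerivAt x h

theorem aux_dt {E : Type*} [NormedAddCommGroup E] [NormedSpace ℝ E] {f : ℝ × ℝ → E}
    {x t : ℝ} (hf : DifferentiableAt ℝ f (x, t)) :
    HasDerivAt (fun t' => f (x, t')) (fderiv ℝ f (x, t) (0, 1)) t := by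
  have h : HasDerivAt (fun t' : ℝ => (x, t')) ((0 : ℝ), (1 : ℝ)) t :=
    (hasDerivAt_const t x).prodMk (hasDerivAt_id t)
  exact hf.hasFDerivAt.comp_hasDerivAt t h

theorem aux_smooth_fderiv {E : Type*} [NormedAddCommGroup E] [NormedSpace ℝ E] {f : ℝ × ℝ → E}
    (hf : ContDiff ℝ (⊤ : ℕ∞) f) : ContDiff ℝ (⊤ : ℕ∞) (fderiv ℝ f) :=
  hf.fderiv_right (by simp)

theorem aux_diff {E : Type*} [NormedAddCommGroup E] [NormedSpace ℝ E] {f : ℝ × ℝ → E}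
    (hf : ContDiff ℝ (⊤ : ℕ∞) f) : Differentiable ℝ f :=
  hf.differentiable (by simp)

theorem aux_smooth_dx {E : Type*} [NormedAddCommGroup E] [NormedSpace ℝ E] {f : ℝ → ℝ → E}
    (hf : ContDiff ℝ (⊤ : ℕ∞) (fun p : ℝ × ℝ => f p.1 p.2)) :
    ContDiff ℝ (⊤ : ℕ∞) (fun p : ℝ × ℝ => deriv (fun x' => f x' p.2) p.1) := by
  have : (fun p : ℝ × ℝ => deriv (fun x' => f x' p.2) p.1)
      = fun p => fderiv ℝ (fun p : ℝ × ℝ => f p.1 p.2) p (1, 0) := by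
    funext p
    exact (aux_dx (x := p.1) (t := p.2) (aux_diff hf _)).deriv
  rw [this]
  exact (aux_smooth_fderiv hf).clm_apply contDiff_const

theorem aux_comm {E : Type*} [NormedAddCommGroup E] [NormedSpace ℝ E] {f : ℝ → ℝ → E}
    (hf : ContDiff ℝ (⊤ : ℕ∞) (fun p : ℝ × ℝ => f p.1 p.2)) (x t : ℝ) :
    deriv (fun t' => deriv (fun x' => f x' t') x) t
      = deriv (fun x' => deriv (fun t' => f x' t') t) x := by
  set F : ℝ × ℝ → E := fun p => f p.1 p.2 with hF
  have h1 : ∀ x t, deriv (fun x' => f x' t) x = fderiv ℝ F (x, t) (1, 0) :=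
    fun x t => (aux_dx (aux_diff hf (x, t))).deriv
  have h2 : ∀ x t, deriv (fun t' => f x t') t = fderiv ℝ F (x, t) (0, 1) :=
    fun x t => (aux_dt (aux_diff hf (x, t))).deriv
  simp only [h1, h2]
  have hd := aux_diff (aux_smooth_fderiv hf) (x, t)
  have e1 := ((aux_dt hd).clm_apply (hasDerivAt_const t ((1 : ℝ), (0 : ℝ)))).deriv
  have e2 := ((aux_dx hd).clm_apply (hasDerivAt_const x ((0 : ℝ), (1 : ℝ)))).deriv
  rw [e1, e2]
  have hs : IsSymmSndFDerivAt ℝ F (x, t) :=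
    hf.contDiffAt.isSymmSndFDerivAt (by simp only [minSmoothness_of_isRCLikeNormedField]; exact WithTop.coe_le_coe.2 (le_top : (2 : ℕ∞) ≤ ⊤))
  simpa using hs.eq (0, 1) (1, 0)

theorem aux_hx {E : Type*} [NormedAddCommGroup E] [NormedSpace ℝ E] {f : ℝ → ℝ → E}
    (hf : ContDiff ℝ (⊤ : ℕ∞) (fun p : ℝ × ℝ => f p.1 p.2)) (x t : ℝ) :
    HasDerivAt (fun x' => f x' t) (deriv (fun x' => f x' t) x) x :=
  (aux_dx (aux_diff hf (x, t))).differentiableAt.hasDerivAt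

theorem aux_ht {E : Type*} [NormedAddCommGroup E] [NormedSpace ℝ E] {f : ℝ → ℝ → E}
    (hf : ContDiff ℝ (⊤ : ℕ∞) (fun p : ℝ × ℝ => f p.1 p.2)) (x t : ℝ) :
    HasDerivAt (fun t' => f x t') (deriv (fun t' => f x t') t) t :=
  (aux_dt (aux_diff hf (x, t))).differentiableAt.hasDerivAt

/-- If a smooth family of curves `γ(x,t)` with tangent
`γ_x = (cosh θ, sinh θ)`, normal `N = (sinh θ, cosh θ)` and curvature `κ = θ_x`
satisfies the defocusing mKdV flow `γ_t = -(κ²/2) T + κ_x N`, then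
`θ_t = κ_{xx} - κ³/2`, i.e. the potential defocusing mKdV equation
`θ_t = θ_{xxx} - (1/2)θ_x³` holds, and `κ` satisfies the defocusing mKdV equation
`κ_t = κ_{xxx} - (3/2)κ²κ_x`. -/
theorem stmt_4 (θ : ℝ → ℝ → ℝ) (γ : ℝ → ℝ → ℝ × ℝ) (κ : ℝ → ℝ → ℝ)
    (hθ : ContDiff ℝ (⊤ : ℕ∞) (fun p : ℝ × ℝ => θ p.1 p.2))
    (hγ : ContDiff ℝ (⊤ : ℕ∞) (fun p : ℝ × ℝ => γ p.1 p.2))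
    (hT : ∀ x t, deriv (fun x' => γ x' t) x = (Real.cosh (θ x t), Real.sinh (θ x t)))
    (hκ : ∀ x t, κ x t = deriv (fun x' => θ x' t) x)
    (hflow : ∀ x t, deriv (fun t' => γ x t') t =
      (-(κ x t ^ 2 / 2) * Real.cosh (θ x t) + deriv (fun x' => κ x' t) x * Real.sinh (θ x t),
       -(κ x t ^ 2 / 2) * Real.sinh (θ x t) + deriv (fun x' => κ x' t) x * Real.cosh (θ x t))) :
    (∀ x t, deriv (fun t' => θ x t') t =
      deriv (fun x' => deriv (fun x'' => κ x'' t) x') x - (1 / 2) * κ x t ^ 3) ∧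
    (∀ x t, deriv (fun t' => θ x t') t =
      deriv (fun x' => deriv (fun x'' => deriv (fun s => θ s t) x'') x') x
        - (1 / 2) * (deriv (fun x' => θ x' t) x) ^ 3) ∧
    (∀ x t, deriv (fun t' => κ x t') t =
      deriv (fun x' => deriv (fun x'' => deriv (fun s => κ s t) x'') x') x
        - (3 / 2) * κ x t ^ 2 * deriv (fun x' => κ x' t) x) := by
  have hκ' : κ = fun x t => deriv (fun x' => θ x' t) x := by
    funext x t; exact hκ x t
  have hκs : ContDiff ℝ (⊤ : ℕ∞) (fun p : ℝ × ℝ => κ p.1 p.2) := by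
    rw [hκ']; exact aux_smooth_dx hθ
  have hκ1 := aux_smooth_dx hκs
  have hκ2 := aux_smooth_dx (f := fun x t => deriv (fun x' => κ x' t) x) hκ1
  have main : ∀ x t, deriv (fun t' => θ x t') t =
      deriv (fun x' => deriv (fun x'' => κ x'' t) x') x - (1 / 2) * κ x t ^ 3 := by
    intro x t
    have hc := aux_comm hγ x t
    simp only [hT, hflow] at hc
    have a := aux_ht hθ x t
    have b := aux_hx hθ x t
    rw [← hκ] at b
    have c := aux_hx hκs x t
    have d := aux_hx (f := fun x t => deriv (fun x' => κ x' t) x) hκ1 x t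
    have l := (a.cosh.prodMk a.sinh).deriv
    have k := ((c.pow 2).div_const 2).neg
    have r := (((k.mul b.cosh).add (d.mul b.sinh)).prodMk
      ((k.mul b.sinh).add (d.mul b.cosh))).deriv
    have hc' := l.symm.trans (hc.trans r)
    rw [Prod.mk.injEq] at hc'
    obtain ⟨h1, h2⟩ := hc'
    have hcs := Real.cosh_sq (θ x t)
    simp only [Pi.neg_apply, Pi.pow_apply] at h1 h2
    norm_num at h1 h2
    linear_combination Real.cosh (θ x t) * h2 - Real.sinh (θ x t) * h1 -
      (deriv (fun t' => θ x t') t - deriv (fun x' => deriv (fun x'' => κ x'' t) x') x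
        + (1 / 2) * κ x t ^ 3) * hcs
  refine ⟨main, ?_, ?_⟩
  · intro x t
    have := main x t
    simpa only [hκ] using this
  · intro x t
    have hc := aux_comm hθ x t
    simp only [main, ← hκ] at hc
    rw [hc]
    have c := aux_hx hκs x t
    have d := aux_hx (f := fun x t => deriv (fun x' => deriv (fun x'' => κ x'' t) x') x) hκ2 x t
    have r := (d.sub ((c.pow 3).const_mul (1 / 2))).deriv
    refine Eq.trans r ?_
    norm_num
    ring
end

section
/- Let τ = τ(x,t,y) and τ̄ = τ̄(x,t,y) be smooth positive real-valued functions satisfying the bilinear equations D_x D_y τ·τ = −2 τ̄² and D_x D_y τ̄·τ̄ = −2 τ². Define θ = 2 log(τ/τ̄) and γ = (1/2)( −∂_y log(τ τ̄), ∂_y log(τ/τ̄) ). Then for every (x,t,y), γ_x = (cosh θ, sinh θ); in particular γ(·,t,y) is a unit-speed spacelike curve on the Minkowski plane with positive pointing tangent and potential function θ. -/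
lemma aux_x (f : ℝ → ℝ → ℝ → ℝ)
    (F : ℝ × ℝ × ℝ → ℝ) (hF : F = fun p : ℝ × ℝ × ℝ => f p.1 p.2.1 p.2.2)
    (h : Differentiable ℝ F) (x t y : ℝ) :
    HasDerivAt (fun x' => f x' t y) (fderiv ℝ F (x, t, y) (1, 0, 0)) x := by
  have h1 : HasDerivAt (fun x' : ℝ => ((x', t, y) : ℝ × ℝ × ℝ)) (1, 0, 0) x :=
    (hasDerivAt_id x).prodMk ((hasDerivAt_const x t).prodMk (hasDerivAt_const x y))
  have h2 := (h (x, t, y)).hasFDerivAt.comp_hasDerivAt x h1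
  subst hF
  exact h2

lemma aux_y (f : ℝ → ℝ → ℝ → ℝ)
    (F : ℝ × ℝ × ℝ → ℝ) (hF : F = fun p : ℝ × ℝ × ℝ => f p.1 p.2.1 p.2.2)
    (h : Differentiable ℝ F) (x t y : ℝ) :
    HasDerivAt (fun y' => f x t y') (fderiv ℝ F (x, t, y) (0, 0, 1)) y := by
  have h1 : HasDerivAt (fun y' : ℝ => ((x, t, y') : ℝ × ℝ × ℝ)) (0, 0, 1) y :=
    (hasDerivAt_const y x).prodMk ((hasDerivAt_const y t).prodMk (hasDerivAt_id y))
  have h2 := (h (x, t, y)).hasFDerivAt.comp_hasDerivAt y h1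
  subst hF
  exact h2

lemma aux_xy (f : ℝ → ℝ → ℝ → ℝ)
    (hf : ContDiff ℝ (⊤ : ℕ∞) (fun p : ℝ × ℝ × ℝ => f p.1 p.2.1 p.2.2)) (x t y : ℝ) :
    HasDerivAt (fun x' => deriv (fun y' => f x' t y') y)
      (deriv (fun y' => deriv (fun x' => f x' t y') x) y) x := by
  obtain ⟨F, hF⟩ : ∃ F : ℝ × ℝ × ℝ → ℝ, F = fun p => f p.1 p.2.1 p.2.2 := ⟨_, rfl⟩
  rw [← hF] at hf
  have hd : Differentiable ℝ F := hf.differentiable (by simp)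
  have hd2 : Differentiable ℝ (fderiv ℝ F) :=
    (hf.fderiv_right (m := 1) (by norm_cast)).differentiable (by simp)
  have hsym : IsSymmSndFDerivAt ℝ F (x, t, y) :=
    hf.contDiffAt.isSymmSndFDerivAt (by simp; norm_cast)
  have key : ∀ v w : ℝ × ℝ × ℝ, ∀ p, HasFDerivAt (fun p => fderiv ℝ F p v)
      ((ContinuousLinearMap.apply ℝ ℝ v).comp (fderiv ℝ (fderiv ℝ F) p)) p := fun v w p =>
    (ContinuousLinearMap.apply ℝ ℝ v).hasFDerivAt.comp p (hd2 p).hasFDerivAt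
  have e1 : (fun x' => deriv (fun y' => f x' t y') y) =
      fun x' => fderiv ℝ F (x', t, y) (0, 0, 1) := by
    funext x'; exact (aux_y f F hF hd x' t y).deriv
  have e2 : (fun y' => deriv (fun x' => f x' t y') x) =
      fun y' => fderiv ℝ F (x, t, y') (1, 0, 0) := by
    funext y'; exact (aux_x f F hF hd x t y').deriv
  have d1 := aux_x (fun a b c => fderiv ℝ F (a, b, c) (0, 0, 1)) _ rfl
    (fun p => (key (0, 0, 1) 0 p).differentiableAt) x t y
  have d2 := aux_y (fun a b c => fderiv ℝ F (a, b, c) (1, 0, 0)) _ rfl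
    (fun p => (key (1, 0, 0) 0 p).differentiableAt) x t y
  rw [e1, e2, d2.deriv]
  convert d1 using 1
  have k1 := (key (0, 0, 1) 0 (x, t, y)).fderiv
  have k2 := (key (1, 0, 0) 0 (x, t, y)).fderiv
  simp only [Prod.mk.eta]
  rw [k1, k2]
  exact hsym _ _

lemma aux_log (f : ℝ → ℝ → ℝ → ℝ)
    (hf : ContDiff ℝ (⊤ : ℕ∞) (fun p : ℝ × ℝ × ℝ => f p.1 p.2.1 p.2.2))
    (hpos : ∀ x t y, 0 < f x t y) (x t y c : ℝ)
    (hb : (deriv (fun y' => deriv (fun x' => f x' t y') x) y) * f x t y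
        - (deriv (fun x' => f x' t y) x) * (deriv (fun y' => f x t y') y)
        - (deriv (fun y' => f x t y') y) * (deriv (fun x' => f x' t y) x)
        + f x t y * (deriv (fun y' => deriv (fun x' => f x' t y') x) y)
      = -2 * c ^ 2) :
    HasDerivAt (fun x' => deriv (fun y' => f x' t y') y / f x' t y)
      (-(c / f x t y) ^ 2) x := by
  have h1 := aux_xy f hf x t y
  have h2 := (aux_x f _ rfl (hf.differentiable (by simp)) x t y).differentiableAt.hasDerivAt
  have hne := (hpos x t y).ne'
  have h3 := h1.div h2 hne
  have hv : (deriv (fun y' => deriv (fun x' => f x' t y') x) y * f x t y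
      - deriv (fun y' => f x t y') y * deriv (fun x' => f x' t y) x) / f x t y ^ 2
      = -(c / f x t y) ^ 2 := by
    rw [div_pow, ← neg_div]
    congr 1
    linarith
  rw [← hv]
  exact h3

/-- For smooth positive `τ(x,t,y)`, `τ̄(x,t,y)` satisfying the bilinear
equations `D_x D_y τ·τ = -2 τ̄²` and `D_x D_y τ̄·τ̄ = -2 τ²`, with
`θ = 2 log(τ/τ̄)` and `γ = (1/2)(-∂_y log(τ τ̄), ∂_y log(τ/τ̄))`, one has
`γ_x = (cosh θ, sinh θ)` everywhere; in particular `γ(·,t,y)` is a unit-speed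
spacelike curve with positive pointing tangent and potential function `θ`. -/
theorem stmt_5 (τ τb : ℝ → ℝ → ℝ → ℝ) (θ : ℝ → ℝ → ℝ → ℝ) (γ : ℝ → ℝ → ℝ → ℝ × ℝ)
    (hτ : ContDiff ℝ (⊤ : ℕ∞) (fun p : ℝ × ℝ × ℝ => τ p.1 p.2.1 p.2.2))
    (hτb : ContDiff ℝ (⊤ : ℕ∞) (fun p : ℝ × ℝ × ℝ => τb p.1 p.2.1 p.2.2))
    (hτpos : ∀ x t y, 0 < τ x t y) (hτbpos : ∀ x t y, 0 < τb x t y)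
    (hbil1 : ∀ x t y,
      (deriv (fun y' => deriv (fun x' => τ x' t y') x) y) * τ x t y
        - (deriv (fun x' => τ x' t y) x) * (deriv (fun y' => τ x t y') y)
        - (deriv (fun y' => τ x t y') y) * (deriv (fun x' => τ x' t y) x)
        + τ x t y * (deriv (fun y' => deriv (fun x' => τ x' t y') x) y)
      = -2 * (τb x t y) ^ 2)
    (hbil2 : ∀ x t y,
      (deriv (fun y' => deriv (fun x' => τb x' t y') x) y) * τb x t y
        - (deriv (fun x' => τb x' t y) x) * (deriv (fun y' => τb x t y') y)
        - (deriv (fun y' => τb x t y') y) * (deriv (fun x' => τb x' t y) x)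
        + τb x t y * (deriv (fun y' => deriv (fun x' => τb x' t y') x) y)
      = -2 * (τ x t y) ^ 2)
    (hθ : ∀ x t y, θ x t y = 2 * Real.log (τ x t y / τb x t y))
    (hγ : ∀ x t y, γ x t y =
      (-(1 / 2) * deriv (fun y' => Real.log (τ x t y' * τb x t y')) y,
       (1 / 2) * deriv (fun y' => Real.log (τ x t y' / τb x t y')) y)) :
    ∀ x t y,
      deriv (fun x' => γ x' t y) x = (Real.cosh (θ x t y), Real.sinh (θ x t y)) ∧
      (deriv (fun x' => γ x' t y) x).1 * (deriv (fun x' => γ x' t y) x).1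
        - (deriv (fun x' => γ x' t y) x).2 * (deriv (fun x' => γ x' t y) x).2 = 1 ∧
      0 < (deriv (fun x' => γ x' t y) x).1 := by
  intro x t y
  have hm : deriv (fun x' => γ x' t y) x = (Real.cosh (θ x t y), Real.sinh (θ x t y)) := by
    have dτ : ∀ x, HasDerivAt (fun y' => τ x t y') (deriv (fun y' => τ x t y') y) y := fun x =>
      (aux_y τ _ rfl (hτ.differentiable (by simp)) x t y).differentiableAt.hasDerivAt
    have dτb : ∀ x, HasDerivAt (fun y' => τb x t y') (deriv (fun y' => τb x t y') y) y := fun x =>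
      (aux_y τb _ rfl (hτb.differentiable (by simp)) x t y).differentiableAt.hasDerivAt
    have e : (fun x' => γ x' t y) = fun x' =>
        (-(1 / 2) * (deriv (fun y' => τ x' t y') y / τ x' t y
            + deriv (fun y' => τb x' t y') y / τb x' t y),
         (1 / 2) * (deriv (fun y' => τ x' t y') y / τ x' t y
            - deriv (fun y' => τb x' t y') y / τb x' t y)) := by
      funext x'
      have l1 := (dτ x').log (hτpos x' t y).ne'
      have l2 := (dτb x').log (hτbpos x' t y).ne'
      rw [hγ, ← (l1.add l2).deriv, ← (l1.sub l2).deriv]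
      congr 4
      · funext y'
        exact Real.log_mul (hτpos x' t y').ne' (hτbpos x' t y').ne'
      · funext y'
        exact Real.log_div (hτpos x' t y').ne' (hτbpos x' t y').ne'
    have a1 := aux_log τ hτ hτpos x t y _ (hbil1 x t y)
    have a2 := aux_log τb hτb hτbpos x t y _ (hbil2 x t y)
    have p1 := hτpos x t y
    have p2 := hτbpos x t y
    have E : Real.exp (θ x t y) = (τ x t y / τb x t y) ^ 2 := by
      rw [hθ, two_mul, Real.exp_add, Real.exp_log (div_pos p1 p2), sq]
    have E' : Real.exp (-θ x t y) = (τb x t y / τ x t y) ^ 2 := by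
      rw [Real.exp_neg, E, ← inv_pow, inv_div]
    have D := (((a1.add a2).const_mul (-(1 / 2))).prodMk ((a1.sub a2).const_mul (1 / 2))).deriv
    simp only [Pi.add_apply, Pi.sub_apply] at D
    rw [e, D, Real.cosh_eq, Real.sinh_eq, E, E']
    ext <;> simp only <;> ring
  refine ⟨hm, ?_, ?_⟩
  · rw [hm]
    have := Real.cosh_sq_sub_sinh_sq (θ x t y)
    simp only
    linarith
  · rw [hm]
    exact Real.cosh_pos _
end

section
/- Let c ∈ ℝ and let τ = τ(x,t) and τ̄ = τ̄(x,t) be smooth positive real-valued functions satisfying the bilinear equations (D_x² − c) τ·τ̄ = 0 and (D_x³ − D_t − 3c D_x) τ·τ̄ = 0. Then θ = 2 log(τ/τ̄) satisfies the potential defocusing mKdV equation θ_t = θ_{xxx} − (1/2)θ_x³. -/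
theorem aux_log3 (f : ℝ → ℝ) (hf : ContDiff ℝ (⊤ : ℕ∞) f) (hp : ∀ x, 0 < f x) :
    ∃ f1 f2 f3 : ℝ → ℝ, f1 = deriv f ∧ f2 = deriv f1 ∧ f3 = deriv f2 ∧
      (∀ x, HasDerivAt (fun y => Real.log (f y)) (f1 x / f x) x) ∧
      (∀ x, HasDerivAt (fun y => f1 y / f y) (f2 x / f x - (f1 x / f x) ^ 2) x) ∧
      (∀ x, HasDerivAt (fun y => f2 y / f y - (f1 y / f y) ^ 2)
        (f3 x / f x - 3 * (f1 x / f x) * (f2 x / f x) + 2 * (f1 x / f x) ^ 3) x) := by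
  have h1 : ContDiff ℝ (⊤ : ℕ∞) (deriv f) := (contDiff_infty_iff_deriv.1 hf).2
  have h2 : ContDiff ℝ (⊤ : ℕ∞) (deriv (deriv f)) := (contDiff_infty_iff_deriv.1 h1).2
  have d0 : ∀ x, HasDerivAt f (deriv f x) x :=
    fun x => ((contDiff_infty_iff_deriv.1 hf).1 x).hasDerivAt
  have d1 : ∀ x, HasDerivAt (deriv f) (deriv (deriv f) x) x :=
    fun x => ((contDiff_infty_iff_deriv.1 h1).1 x).hasDerivAt
  have d2 : ∀ x, HasDerivAt (deriv (deriv f)) (deriv (deriv (deriv f)) x) x :=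
    fun x => ((contDiff_infty_iff_deriv.1 h2).1 x).hasDerivAt
  have key : ∀ x, HasDerivAt (fun y => deriv f y / f y)
      (deriv (deriv f) x / f x - (deriv f x / f x) ^ 2) x := by
    intro x
    have hx := (hp x).ne'
    refine ((d1 x).fun_div (d0 x) hx).congr_deriv ?_
    field_simp
  refine ⟨_, _, _, rfl, rfl, rfl, fun x => (d0 x).log (hp x).ne', key, ?_⟩
  intro x
  have hx := (hp x).ne'
  refine (((d2 x).fun_div (d0 x) hx).fun_sub ((key x).fun_pow 2)).congr_deriv ?_
  simp only [Nat.cast_ofNat, Nat.add_one_sub_one, Nat.reduceSub, pow_one]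
  field_simp
  ring


/-- For `c ∈ ℝ` and smooth positive `τ(x,t)`, `τ̄(x,t)` satisfying the
bilinear equations `(D_x² - c) τ·τ̄ = 0` and `(D_x³ - D_t - 3c D_x) τ·τ̄ = 0`,
the function `θ = 2 log(τ/τ̄)` satisfies the potential defocusing mKdV equation
`θ_t = θ_{xxx} - (1/2)θ_x³`. -/
theorem stmt_6 (c : ℝ) (τ τb : ℝ → ℝ → ℝ) (θ : ℝ → ℝ → ℝ)
    (hτ : ContDiff ℝ (⊤ : ℕ∞) (fun p : ℝ × ℝ => τ p.1 p.2))
    (hτb : ContDiff ℝ (⊤ : ℕ∞) (fun p : ℝ × ℝ => τb p.1 p.2))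
    (hτpos : ∀ x t, 0 < τ x t) (hτbpos : ∀ x t, 0 < τb x t)
    (hbil1 : ∀ x t,
      deriv (fun x' => deriv (fun x'' => τ x'' t) x') x * τb x t
        - 2 * deriv (fun x' => τ x' t) x * deriv (fun x' => τb x' t) x
        + τ x t * deriv (fun x' => deriv (fun x'' => τb x'' t) x') x
        - c * (τ x t * τb x t) = 0)
    (hbil2 : ∀ x t,
      deriv (fun x' => deriv (fun x'' => deriv (fun s => τ s t) x'') x') x * τb x t
        - 3 * deriv (fun x' => deriv (fun x'' => τ x'' t) x') x * deriv (fun x' => τb x' t) x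
        + 3 * deriv (fun x' => τ x' t) x * deriv (fun x' => deriv (fun x'' => τb x'' t) x') x
        - τ x t * deriv (fun x' => deriv (fun x'' => deriv (fun s => τb s t) x'') x') x
        - (deriv (fun t' => τ x t') t * τb x t - τ x t * deriv (fun t' => τb x t') t)
        - 3 * c * (deriv (fun x' => τ x' t) x * τb x t - τ x t * deriv (fun x' => τb x' t) x)
      = 0)
    (hθ : ∀ x t, θ x t = 2 * Real.log (τ x t / τb x t)) :
    ∀ x t, deriv (fun t' => θ x t') t =
      deriv (fun x' => deriv (fun x'' => deriv (fun s => θ s t) x'') x') x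
        - (1 / 2) * (deriv (fun x' => θ x' t) x) ^ 3 := by
  intro x t
  have sm : ∀ g : ℝ → ℝ → ℝ, ContDiff ℝ (⊤ : ℕ∞) (fun p : ℝ × ℝ => g p.1 p.2) →
      ContDiff ℝ (⊤ : ℕ∞) (fun y => g y t) ∧ ContDiff ℝ (⊤ : ℕ∞) (fun s => g x s) := by
    intro g hg
    exact ⟨hg.comp (contDiff_id.prodMk contDiff_const), hg.comp (contDiff_const.prodMk contDiff_id)⟩
  obtain ⟨a1, a2, a3, ha1, ha2, ha3, A1, A2, A3⟩ :=
    aux_log3 (fun y => τ y t) (sm τ hτ).1 (fun y => hτpos y t)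
  obtain ⟨b1, b2, b3, hb1, hb2, hb3, B1, B2, B3⟩ :=
    aux_log3 (fun y => τb y t) (sm τb hτb).1 (fun y => hτbpos y t)
  obtain ⟨a4, _, _, ha4, _, _, A4, _, _⟩ :=
    aux_log3 (fun s => τ x s) (sm τ hτ).2 (fun s => hτpos x s)
  obtain ⟨b4, _, _, hb4, _, _, B4, _, _⟩ :=
    aux_log3 (fun s => τb x s) (sm τb hτb).2 (fun s => hτbpos x s)
  have hl : ∀ y s, θ y s = 2 * (Real.log (τ y s) - Real.log (τb y s)) := by
    intro y s
    rw [hθ, Real.log_div (hτpos y s).ne' (hτbpos y s).ne']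
  have e0 : (fun y => θ y t) = fun y => 2 * (Real.log (τ y t) - Real.log (τb y t)) :=
    funext fun y => hl y t
  have e4 : (fun s => θ x s) = fun s => 2 * (Real.log (τ x s) - Real.log (τb x s)) :=
    funext fun s => hl x s
  have E1 : deriv (fun y => θ y t) = fun y => 2 * (a1 y / τ y t - b1 y / τb y t) := by
    rw [e0]
    exact funext fun y => (((A1 y).fun_sub (B1 y)).const_mul 2).deriv
  have E2 : deriv (deriv (fun y => θ y t)) = fun y => 2 * ((a2 y / τ y t - (a1 y / τ y t) ^ 2)
      - (b2 y / τb y t - (b1 y / τb y t) ^ 2)) := by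
    rw [E1]
    exact funext fun y => (((A2 y).fun_sub (B2 y)).const_mul 2).deriv
  have E3 := (((A3 x).fun_sub (B3 x)).const_mul 2).deriv
  have E4 : deriv (fun s => θ x s) t = 2 * (a4 t / τ x t - b4 t / τb x t) := by
    rw [e4]
    exact (((A4 t).fun_sub (B4 t)).const_mul 2).deriv
  have H1 := hbil1 x t
  have H2 := hbil2 x t
  change deriv (deriv (fun y => τ y t)) x * τb x t
        - 2 * deriv (fun y => τ y t) x * deriv (fun y => τb y t) x
        + τ x t * deriv (deriv (fun y => τb y t)) x - c * (τ x t * τb x t) = 0 at H1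
  change deriv (deriv (deriv (fun y => τ y t))) x * τb x t
        - 3 * deriv (deriv (fun y => τ y t)) x * deriv (fun y => τb y t) x
        + 3 * deriv (fun y => τ y t) x * deriv (deriv (fun y => τb y t)) x
        - τ x t * deriv (deriv (deriv (fun y => τb y t))) x
        - (deriv (fun s => τ x s) t * τb x t - τ x t * deriv (fun s => τb x s) t)
        - 3 * c * (deriv (fun y => τ y t) x * τb x t - τ x t * deriv (fun y => τb y t) x)
        = 0 at H2
  change deriv (fun s => θ x s) t = deriv (deriv (deriv (fun y => θ y t))) x
        - (1 / 2) * (deriv (fun y => θ y t) x) ^ 3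
  rw [← ha1, ← hb1, ← ha2, ← hb2] at H1
  rw [← ha1, ← hb1, ← ha2, ← hb2, ← ha3, ← hb3, ← ha4, ← hb4] at H2
  rw [E4, E2, E3, E1]
  clear * - H1 H2 hτpos hτbpos
  have hA := (hτpos x t).ne'
  have hB := (hτbpos x t).ne'
  simp only
  generalize τ x t = A at *
  generalize τb x t = B at *
  obtain ⟨p1, h1⟩ : ∃ p, p = a1 x / A := ⟨_, rfl⟩
  obtain ⟨p2, h2⟩ : ∃ p, p = a2 x / A := ⟨_, rfl⟩
  obtain ⟨p3, h3⟩ : ∃ p, p = a3 x / A := ⟨_, rfl⟩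
  obtain ⟨p4, h4⟩ : ∃ p, p = a4 t / A := ⟨_, rfl⟩
  obtain ⟨q1, k1⟩ : ∃ p, p = b1 x / B := ⟨_, rfl⟩
  obtain ⟨q2, k2⟩ : ∃ p, p = b2 x / B := ⟨_, rfl⟩
  obtain ⟨q3, k3⟩ : ∃ p, p = b3 x / B := ⟨_, rfl⟩
  obtain ⟨q4, k4⟩ : ∃ p, p = b4 t / B := ⟨_, rfl⟩
  rw [← h1, ← h2, ← h3, ← h4, ← k1, ← k2, ← k3, ← k4]
  rw [eq_div_iff hA] at h1 h2 h3 h4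
  rw [eq_div_iff hB] at k1 k2 k3 k4
  rw [← h1, ← h2, ← k1, ← k2] at H1
  rw [← h1, ← h2, ← h3, ← h4, ← k1, ← k2, ← k3, ← k4] at H2
  have hAB : A * B ≠ 0 := mul_ne_zero hA hB
  have G1 : p2 - 2 * p1 * q1 + q2 - c = 0 := by
    apply mul_left_cancel₀ hAB
    linear_combination H1
  have G2 : p3 - 3 * p2 * q1 + 3 * p1 * q2 - q3 - (p4 - q4) - 3 * c * (p1 - q1) = 0 := by
    apply mul_left_cancel₀ hAB
    linear_combination H2
  linear_combination (-2) * G2 + 6 * (p1 - q1) * G1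
end

section
/- Let f_n^{(i)} (i = 1,…,N, n ∈ ℤ) be smooth real-valued functions of (x,t,y,z) satisfying ∂_x f_n^{(i)} = f_{n+1}^{(i)}, ∂_z f_n^{(i)} = f_{n+2}^{(i)}, ∂_t f_n^{(i)} = −4 f_{n+3}^{(i)}, and ∂_y f_n^{(i)} = f_{n−1}^{(i)} for all i and n. For an integer k, set σ(k) = e^{−xy} ρ_N(k). Then D_x D_y σ(k)·σ(k) = −2 σ(k+1) σ(k−1). -/
open Matrix in
lemma plk {n : Type*} [Fintype n] [DecidableEq n] (P : Matrix n n ℝ) (a d : n → ℝ) (p q : n)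
    (hpq : p ≠ q) :
    P.det * ((P.updateCol p a).updateCol q d).det
      = (P.updateCol p a).det * (P.updateCol q d).det
        - (P.updateCol q a).det * (P.updateCol p d).det := by
  have h1 : P.det • d = ∑ j, (cramer P d j) • (fun i => P i j) := by
    rw [← mulVec_cramer]
    ext i
    simp [Matrix.mulVec, dotProduct, mul_comm]
  have h2 : P.det * ((P.updateCol p a).updateCol q d).det
      = ∑ j, cramer P d j * cramer (P.updateCol p a) (fun i => P i j) q := by
    have := congrArg (fun w => cramer (P.updateCol p a) w q) h1
    simp only [map_smul, map_sum, Finset.sum_apply, Pi.smul_apply, smul_eq_mul] at this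
    rw [← this, cramer_apply]
  rw [h2, ← Finset.add_sum_erase _ _ (Finset.mem_univ p),
    ← Finset.add_sum_erase _ _ (Finset.mem_erase.2 ⟨hpq.symm, Finset.mem_univ q⟩),
    Finset.sum_eq_zero]
  · have e1 : cramer (P.updateCol p a) (fun i => P i q) q = (P.updateCol p a).det := by
      rw [cramer_apply]
      congr 1
      ext i j
      by_cases h : j = q
      · subst h; simp [Matrix.updateCol_apply, hpq.symm]
      · simp [Matrix.updateCol_apply, h]
    have e2 : cramer (P.updateCol p a) (fun i => P i p) q = -(P.updateCol q a).det := by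
      rw [cramer_apply]
      have := det_permute' (Equiv.swap p q) (P.updateCol q a)
      rw [Equiv.Perm.sign_swap hpq] at this
      simp only [Units.val_neg, Units.val_one, Int.cast_neg, Int.cast_one, neg_mul, one_mul] at this
      rw [← this]
      congr 1
      ext i j
      by_cases h : j = q
      · subst h; simp [Matrix.updateCol_apply, hpq]
      · by_cases h' : j = p
        · subst h'; simp [Matrix.updateCol_apply, h]
        · simp [Matrix.updateCol_apply, h, h', Equiv.swap_apply_of_ne_of_ne h' h]
    rw [e1, e2, cramer_apply, cramer_apply]
    ring
  · intro j hj
    simp only [Finset.mem_erase, Finset.mem_univ, and_true] at hj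
    have hz : cramer (P.updateCol p a) (fun i => P i j) q = 0 := by
      rw [cramer_apply]
      refine det_zero_of_column_eq (i := j) (j := q) hj.1 ?_
      intro k
      simp [Matrix.updateCol_apply, hj.1, hj.2]
    rw [hz, mul_zero]

def KK {N : ℕ} (F : Fin N → ℤ → ℝ) (g : Fin N → ℤ) : ℝ :=
  Matrix.det (Matrix.of fun i j : Fin N => F i (g j))

lemma KK_upd {N : ℕ} (F : Fin N → ℤ → ℝ) (g : Fin N → ℤ) (p : Fin N) (a : ℤ) :
    KK F (Function.update g p a)
      = ((Matrix.of fun i j : Fin N => F i (g j)).updateCol p (fun i => F i a)).det := by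
  unfold KK
  congr 1
  ext i j
  by_cases h : j = p
  · subst h; simp
  · simp [h]

lemma KK_zero {N : ℕ} (F : Fin N → ℤ → ℝ) (g : Fin N → ℤ) {p q : Fin N} (h : p ≠ q)
    (h' : g p = g q) : KK F g = 0 :=
  Matrix.det_zero_of_column_eq h (by intro k; simp [h'])

lemma KK_plk {N : ℕ} (F : Fin N → ℤ → ℝ) (g : Fin N → ℤ) {p q : Fin N} (h : p ≠ q) (a d : ℤ) :
    KK F g * KK F (Function.update (Function.update g p a) q d)
      = KK F (Function.update g p a) * KK F (Function.update g q d)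
        - KK F (Function.update g q a) * KK F (Function.update g p d) := by
  have := plk (Matrix.of fun i j : Fin N => F i (g j)) (fun i => F i a) (fun i => F i d) p q h
  simp only [KK_upd] at *
  rw [← this]
  unfold KK
  congr 3
  ext i j
  by_cases h : j = p
  · subst h; simp
  · simp [h]

lemma det_hasDeriv {n : Type*} [Fintype n] [DecidableEq n] (M : ℝ → Matrix n n ℝ)
    (M' : Matrix n n ℝ) (x : ℝ) (h : ∀ i j, HasDerivAt (fun s => M s i j) (M' i j) x) :
    HasDerivAt (fun s => (M s).det)
      (∑ j, ((M x).updateCol j (fun i => M' i j)).det) x := by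
  simp only [Matrix.det_apply']
  rw [Finset.sum_comm]
  apply HasDerivAt.fun_sum
  intro s _
  rw [← Finset.mul_sum]
  apply HasDerivAt.const_mul
  have := HasDerivAt.fun_finsetProd (u := (Finset.univ : Finset n)) (x := x)
    (f := fun i y => M y (s i) i) (f' := fun i => M' (s i) i) (fun i _ => h _ _)
  convert this using 1
  apply Finset.sum_congr rfl
  intro j _
  rw [← Finset.mul_prod_erase _ _ (Finset.mem_univ j), smul_eq_mul, mul_comm]
  congr 1
  · apply Finset.prod_congr rfl
    intro i hi
    simp [Matrix.updateCol_apply, (Finset.mem_erase.1 hi).1]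
  · simp

lemma KK_deriv {N : ℕ} (F : ℝ → Fin N → ℤ → ℝ) (e : ℤ) (x : ℝ)
    (hF : ∀ i n, HasDerivAt (fun s => F s i n) (F x i (n + e)) x) (g : Fin N → ℤ) :
    HasDerivAt (fun s => KK (F s) g) (∑ j, KK (F x) (Function.update g j (g j + e))) x := by
  simp only [KK_upd]
  exact det_hasDeriv (fun s => Matrix.of fun i j : Fin N => F s i (g j))
    (Matrix.of fun i j : Fin N => F x i (g j + e)) x (fun i j => hF _ _)

def gg (m : ℕ) (k : ℤ) : Fin (m + 1) → ℤ := fun j => k + (j.val : ℤ)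

lemma sum_x {m : ℕ} (F : Fin (m + 1) → ℤ → ℝ) (k : ℤ) :
    ∑ j, KK F (Function.update (gg m k) j (gg m k j + 1))
      = KK F (Function.update (gg m k) (Fin.last m) (k + m + 1)) := by
  rw [Finset.sum_eq_single (Fin.last m)]
  · simp [gg]
  · intro j _ hj
    have hlt : j.val < m := by
      have := j.isLt
      have : j.val ≠ m := fun h => hj (Fin.ext h)
      omega
    have hne : (⟨j.val + 1, by omega⟩ : Fin (m + 1)) ≠ j := by
      intro h; have := congrArg Fin.val h; simp at this
    refine KK_zero F _ hne ?_
    rw [Function.update_self, Function.update_of_ne hne]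
    simp [gg]; ring
  · simp

lemma sum_y {m : ℕ} (F : Fin (m + 1) → ℤ → ℝ) (k : ℤ) :
    ∑ j, KK F (Function.update (gg m k) j (gg m k j + -1))
      = KK F (Function.update (gg m k) 0 (k - 1)) := by
  rw [Finset.sum_eq_single 0]
  · simp [gg, sub_eq_add_neg]
  · intro j _ hj
    have hlt : j.val ≠ 0 := fun h => hj (Fin.ext h)
    have hne : (⟨j.val - 1, by omega⟩ : Fin (m + 1)) ≠ j := by
      intro h; have := congrArg Fin.val h; simp at this; omega
    refine KK_zero F _ hne ?_
    rw [Function.update_self, Function.update_of_ne hne]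
    simp [gg]; omega
  · simp

lemma sum_xy {m : ℕ} (F : Fin (m + 1) → ℤ → ℝ) (k : ℤ) (hm : 0 < m) :
    ∑ j, KK F (Function.update (Function.update (gg m k) (Fin.last m) (k + m + 1)) j
        (Function.update (gg m k) (Fin.last m) (k + m + 1) j + -1))
      = KK F (Function.update (Function.update (gg m k) 0 (k - 1)) (Fin.last m) (k + m + 1))
        + KK F (gg m k) := by
  have h0 : (0 : Fin (m + 1)) ≠ Fin.last m := by
    intro h; have := congrArg Fin.val h; simp at this; omega
  rw [← Finset.add_sum_erase _ _ (Finset.mem_univ 0),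
    ← Finset.add_sum_erase _ _ (Finset.mem_erase.2 ⟨h0.symm, Finset.mem_univ (Fin.last m)⟩),
    Finset.sum_eq_zero]
  · rw [add_zero]
    congr 2
    · rw [Function.update_comm h0, Function.update_of_ne h0]
      simp [gg, sub_eq_add_neg]
    · have : k + m + 1 + -1 = gg m k (Fin.last m) := by simp [gg]
      simp only [Function.update_self, Function.update_idem]
      rw [this, Function.update_eq_self]
  · intro j hj
    simp only [Finset.mem_erase, Finset.mem_univ, and_true] at hj
    have hlt : j.val ≠ 0 := fun h => hj.2 (Fin.ext h)
    have hne : (⟨j.val - 1, by omega⟩ : Fin (m + 1)) ≠ j := by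
      intro h; have := congrArg Fin.val h; simp at this; omega
    have hne2 : (⟨j.val - 1, by omega⟩ : Fin (m + 1)) ≠ Fin.last m := by
      intro h; have := congrArg Fin.val h; simp at this; omega
    refine KK_zero F _ hne ?_
    rw [Function.update_self, Function.update_of_ne hne, Function.update_of_ne hne2,
      Function.update_of_ne hj.1]
    simp [gg]; omega

lemma rot {m : ℕ} (F : Fin (m + 1) → ℤ → ℝ) (g : Fin (m + 1) → ℤ) :
    KK F (g ∘ finRotate (m + 1)) = (-1) ^ m * KK F g := by
  have := Matrix.det_permute' (finRotate (m + 1)) (Matrix.of fun i j : Fin (m + 1) => F i (g j))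
  rw [sign_finRotate] at this
  simp only [Nat.add_sub_cancel] at this
  push_cast at this
  exact this

lemma rot1 {m : ℕ} (F : Fin (m + 1) → ℤ → ℝ) (k : ℤ) :
    KK F (gg m (k + 1)) = (-1) ^ m * KK F (Function.update (gg m k) 0 (k + m + 1)) := by
  rw [← rot]
  congr 1
  ext j
  rcases Fin.eq_castSucc_or_eq_last j with ⟨i, rfl⟩ | rfl
  · have : finRotate (m + 1) i.castSucc = i.succ := by simp
    simp only [Function.comp, this, Function.update_of_ne (Fin.succ_ne_zero i)]
    simp [gg]; ring
  · simp [gg]; ring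

lemma rot2 {m : ℕ} (F : Fin (m + 1) → ℤ → ℝ) (k : ℤ) :
    KK F (Function.update (gg m k) (Fin.last m) (k - 1)) = (-1) ^ m * KK F (gg m (k - 1)) := by
  rw [← rot]
  congr 1
  ext j
  rcases Fin.eq_castSucc_or_eq_last j with ⟨i, rfl⟩ | rfl
  · have : finRotate (m + 1) i.castSucc = i.succ := by simp
    simp only [Function.comp, this, Function.update_of_ne (Fin.castSucc_lt_last i).ne]
    simp [gg]
  · simp [gg]

lemma key {m : ℕ} (F : Fin (m + 1) → ℤ → ℝ) (k : ℤ) :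
    KK F (gg m k) * (∑ j, KK F (Function.update (Function.update (gg m k) (Fin.last m) (k + m + 1)) j
        (Function.update (gg m k) (Fin.last m) (k + m + 1) j + -1)))
      = KK F (Function.update (gg m k) 0 (k - 1))
          * KK F (Function.update (gg m k) (Fin.last m) (k + m + 1))
        + KK F (gg m k) ^ 2 - KK F (gg m (k + 1)) * KK F (gg m (k - 1)) := by
  have hs : ((-1 : ℝ) ^ m) * (-1) ^ m = 1 := by rw [← mul_pow]; simp
  have r1 := rot1 F k
  have r2 := rot2 F k
  rcases Nat.eq_zero_or_pos m with rfl | hm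
  · have e : (Fin.last 0) = 0 := rfl
    rw [e] at r2 ⊢
    have : KK F (Function.update (gg 0 k) 0 (k + (0 : ℕ) + 1 + -1)) = KK F (gg 0 k) := by
      have h : k + (0 : ℕ) + 1 + -1 = gg 0 k 0 := by simp [gg]
      rw [h, Function.update_eq_self]
    rw [Finset.sum_eq_single (0 : Fin (0 + 1)) (fun j _ hj => absurd (Fin.ext (by omega)) hj)
      (by simp), Function.update_self, Function.update_idem]
    rw [this, r1, r2]
    ring
  · have h0 : (0 : Fin (m + 1)) ≠ Fin.last m := by
      intro h; have := congrArg Fin.val h; simp at this; omega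
    rw [sum_xy F k hm, mul_add, KK_plk F _ h0, r1, r2]
    ring

/-- For smooth functions `f_n^{(i)}(x,t,y,z)` with
`∂_x f_n = f_{n+1}`, `∂_z f_n = f_{n+2}`, `∂_t f_n = -4 f_{n+3}`, `∂_y f_n = f_{n-1}`,
and `σ(k) = e^{-xy} ρ_N(k)` where `ρ_N(k) = det[f^{(i)}_{k+j-1}]`, the bilinear equation
`D_x D_y σ(k)·σ(k) = -2 σ(k+1) σ(k-1)` holds. -/
theorem stmt_9 (N : ℕ) (hN : 0 < N) (f : Fin N → ℤ → ℝ → ℝ → ℝ → ℝ → ℝ)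
    (hsm : ∀ i n, ContDiff ℝ (⊤ : ℕ∞)
      (fun p : ℝ × ℝ × ℝ × ℝ => f i n p.1 p.2.1 p.2.2.1 p.2.2.2))
    (hfx : ∀ i n x t y z, deriv (fun x' => f i n x' t y z) x = f i (n + 1) x t y z)
    (hfz : ∀ i n x t y z, deriv (fun z' => f i n x t y z') z = f i (n + 2) x t y z)
    (hft : ∀ i n x t y z, deriv (fun t' => f i n x t' y z) t = -4 * f i (n + 3) x t y z)
    (hfy : ∀ i n x t y z, deriv (fun y' => f i n x t y' z) y = f i (n - 1) x t y z)
    (σ : ℤ → ℝ → ℝ → ℝ → ℝ → ℝ)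
    (hσ : ∀ k x t y z, σ k x t y z =
      Real.exp (-(x * y)) *
        Matrix.det (Matrix.of fun i j : Fin N => f i (k + (j.val : ℤ)) x t y z)) :
    ∀ (k : ℤ) (x t y z : ℝ),
      (deriv (fun y' => deriv (fun x' => σ k x' t y' z) x) y) * σ k x t y z
        - (deriv (fun x' => σ k x' t y z) x) * (deriv (fun y' => σ k x t y' z) y)
        - (deriv (fun y' => σ k x t y' z) y) * (deriv (fun x' => σ k x' t y z) x)
        + σ k x t y z * (deriv (fun y' => deriv (fun x' => σ k x' t y' z) x) y)
      = -2 * (σ (k + 1) x t y z * σ (k - 1) x t y z) := by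
  obtain ⟨m, rfl⟩ : ∃ m, N = m + 1 := ⟨N - 1, by omega⟩
  intro k x t y z
  have dfx : ∀ i n x t y z, HasDerivAt (fun x' => f i n x' t y z) (f i (n + 1) x t y z) x := by
    intro i n x t y z
    rw [← hfx]
    apply DifferentiableAt.hasDerivAt
    have h1 : Differentiable ℝ (fun p : ℝ × ℝ × ℝ × ℝ => f i n p.1 p.2.1 p.2.2.1 p.2.2.2) :=
      (hsm i n).differentiable (by simp)
    have h2 : Differentiable ℝ (fun s : ℝ => ((s, t, y, z) : ℝ × ℝ × ℝ × ℝ)) := by fun_prop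
    exact (h1.comp h2) x
  have dfy : ∀ i n x t y z, HasDerivAt (fun y' => f i n x t y' z) (f i (n + -1) x t y z) y := by
    intro i n x t y z
    rw [← sub_eq_add_neg, ← hfy]
    apply DifferentiableAt.hasDerivAt
    have h1 : Differentiable ℝ (fun p : ℝ × ℝ × ℝ × ℝ => f i n p.1 p.2.1 p.2.2.1 p.2.2.2) :=
      (hsm i n).differentiable (by simp)
    have h2 : Differentiable ℝ (fun s : ℝ => ((x, t, s, z) : ℝ × ℝ × ℝ × ℝ)) := by fun_prop
    exact (h1.comp h2) y
  have hS : ∀ k x t y z, σ k x t y z =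
      Real.exp (-(x * y)) * KK (fun i n => f i n x t y z) (gg m k) := hσ
  have dex : ∀ x y : ℝ, HasDerivAt (fun x' => Real.exp (-(x' * y)))
      (Real.exp (-(x * y)) * (-y)) x := by
    intro x y
    have : HasDerivAt (fun x' : ℝ => -(x' * y)) (-y) x := by
      simpa using ((hasDerivAt_id' x).mul_const y).fun_neg
    exact this.exp
  have dey : ∀ x y : ℝ, HasDerivAt (fun y' => Real.exp (-(x * y')))
      (Real.exp (-(x * y)) * (-x)) y := by
    intro x y
    have : HasDerivAt (fun y' : ℝ => -(x * y')) (-x) y := by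
      simpa using ((hasDerivAt_id' y).const_mul x).fun_neg
    exact this.exp
  have kx : ∀ g x t y z, HasDerivAt (fun x' => KK (fun i n => f i n x' t y z) g) _ x :=
    fun g x t y z => KK_deriv (fun x' i n => f i n x' t y z) 1 x (fun i n => dfx i n x t y z) g
  have ky : ∀ g x t y z, HasDerivAt (fun y' => KK (fun i n => f i n x t y' z) g) _ y :=
    fun g x t y z => KK_deriv (fun y' i n => f i n x t y' z) (-1) y (fun i n => dfy i n x t y z) g
  have sx : ∀ x y, deriv (fun x' => σ k x' t y z) x = Real.exp (-(x * y)) * (-y) *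
      KK (fun i n => f i n x t y z) (gg m k) + Real.exp (-(x * y)) *
      KK (fun i n => f i n x t y z) (Function.update (gg m k) (Fin.last m) (k + m + 1)) := by
    intro x y
    have h := (dex x y).mul (kx (gg m k) x t y z)
    rw [sum_x] at h
    simp only [hS]
    exact h.deriv
  have sy : deriv (fun y' => σ k x t y' z) y = Real.exp (-(x * y)) * (-x) *
      KK (fun i n => f i n x t y z) (gg m k) + Real.exp (-(x * y)) *
      KK (fun i n => f i n x t y z) (Function.update (gg m k) 0 (k - 1)) := by
    have h := (dey x y).mul (ky (gg m k) x t y z)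
    rw [sum_y] at h
    simp only [hS]
    exact h.deriv
  have k1 := ky (gg m k) x t y z
  rw [sum_y] at k1
  have k2 := ky (Function.update (gg m k) (Fin.last m) (k + m + 1)) x t y z
  have sxy := ((((dey x y).mul (hasDerivAt_id y).neg).mul k1).add ((dey x y).mul k2)).deriv
  have sxy' := Eq.trans (a := deriv (fun y' => deriv (fun x' => σ k x' t y' z) x) y)
    (by simp only [sx]; rfl) sxy
  rw [sxy', sx, sy]
  simp only [hS]
  have K := key (fun i n => f i n x t y z) k
  simp only [Pi.mul_apply, Pi.neg_apply, id]
  linear_combination 2 * Real.exp (-(x * y)) ^ 2 * K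
end

section
/- Let f_n^{(i)} (i = 1,…,N, n ∈ ℤ) be smooth real-valued functions of (x,t,y,z) satisfying ∂_x f_n^{(i)} = f_{n+1}^{(i)}, ∂_z f_n^{(i)} = f_{n+2}^{(i)}, ∂_t f_n^{(i)} = −4 f_{n+3}^{(i)}, and ∂_y f_n^{(i)} = f_{n−1}^{(i)} for all i and n. For an integer k, set σ(k) = e^{−xy} ρ_N(k). Then (D_x² − D_z) σ(k+1)·σ(k) = 0. -/
lemma aux_det_deriv {N : ℕ} (M : ℝ → Matrix (Fin N) (Fin N) ℝ) (M' : Matrix (Fin N) (Fin N) ℝ)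
    (s : ℝ) (h : ∀ i j, HasDerivAt (fun s => M s i j) (M' i j) s) :
    HasDerivAt (fun s => (M s).det) (∑ j, ((M s).updateCol j (fun i => M' i j)).det) s := by
  simp only [Matrix.det_apply]
  rw [Finset.sum_comm]
  refine HasDerivAt.fun_sum fun τ _ => ?_
  rw [← Finset.smul_sum]
  refine HasDerivAt.const_smul _ ?_
  have := HasDerivAt.fun_finsetProd (u := Finset.univ) (f := fun j s => M s (τ j) j)
    (f' := fun j => M' (τ j) j) (x := s) (fun j _ => h _ _)
  refine this.congr_deriv (Finset.sum_congr rfl fun j _ => Eq.symm ?_)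
  rw [← Finset.mul_prod_erase _ _ (Finset.mem_univ j), smul_eq_mul, mul_comm]
  congr 1
  · refine Finset.prod_congr rfl fun l hl => ?_
    rw [Matrix.updateCol_ne (Finset.ne_of_mem_erase hl)]
  · simp

/-- determinant with column indices `a` -/
noncomputable def auxE {N : ℕ} (g : Fin N → ℤ → ℝ) (a : Fin N → ℤ) : ℝ :=
  Matrix.det (Matrix.of fun i j => g i (a j))

lemma auxE_zero {N : ℕ} (g : Fin N → ℤ → ℝ) (a : Fin N → ℤ) (i j : Fin N) (hij : i ≠ j)
    (h : a i = a j) : auxE g a = 0 :=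
  Matrix.det_zero_of_column_eq hij (fun l => by simp [h])

lemma auxE_deriv {N : ℕ} (g : ℝ → Fin N → ℤ → ℝ) (d : ℤ) (s : ℝ)
    (h : ∀ i n, HasDerivAt (fun s => g s i n) (g s i (n + d)) s) (a : Fin N → ℤ) :
    HasDerivAt (fun s => auxE (g s) a)
      (∑ j, auxE (g s) (Function.update a j (a j + d))) s := by
  have := aux_det_deriv (fun s => Matrix.of fun i j => g s i (a j))
    (Matrix.of fun i j => g s i (a j + d)) s (fun i j => h i (a j))
  refine this.congr_deriv (Finset.sum_congr rfl fun j _ => Eq.symm ?_)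
  unfold auxE
  congr 1
  ext i l
  by_cases hl : l = j
  · subst hl; simp
  · simp [hl]

/-- index sequence `k, …, k+n-1, p, q` -/
def auxA (n : ℕ) (k p q : ℤ) (j : Fin (n + 2)) : ℤ :=
  if j.val < n then k + j.val else if j.val = n then p else q

lemma auxA_eq (n : ℕ) (k : ℤ) :
    auxA n k (k + n) (k + n + 1) = fun j : Fin (n + 2) => k + (j.val : ℤ) := by
  funext j
  unfold auxA
  have := j.2
  split_ifs <;> grind

lemma auxA_upd_last (n : ℕ) (k p q d : ℤ) :
    Function.update (auxA n k p q) (Fin.last (n+1)) (auxA n k p q (Fin.last (n+1)) + d)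
      = auxA n k p (q + d) := by
  funext j
  by_cases hj : j = Fin.last (n+1)
  · subst hj; simp [auxA]
  · have : j.val < n + 1 := by
      have := j.2
      have h2 : j.val ≠ n + 1 := fun h => hj (Fin.ext h)
      omega
    rw [Function.update_of_ne hj]
    unfold auxA
    split_ifs <;> grind

lemma auxA_upd_mid (n : ℕ) (k p q d : ℤ) :
    Function.update (auxA n k p q) (Fin.last n).castSucc (auxA n k p q (Fin.last n).castSucc + d)
      = auxA n k (p + d) q := by
  funext j
  by_cases hj : j = (Fin.last n).castSucc
  · subst hj; simp [auxA]
  · have : j.val ≠ n := fun h => hj (Fin.ext h)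
    rw [Function.update_of_ne hj]
    unfold auxA
    split_ifs <;> grind

lemma auxE_upd_zero (n : ℕ) (g : Fin (n+2) → ℤ → ℝ) (k p q d : ℤ) (j : Fin n) (l : Fin (n + 2))
    (hl : j.val < l.val) (h : auxA n k p q l = k + j.val + d) :
    auxE g (Function.update (auxA n k p q) j.castSucc.castSucc
      (auxA n k p q j.castSucc.castSucc + d)) = 0 := by
  have hne : l ≠ j.castSucc.castSucc := by
    intro h; rw [h] at hl; simp at hl
  refine auxE_zero g _ l j.castSucc.castSucc hne ?_
  rw [Function.update_of_ne hne, Function.update_self, h]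
  simp [auxA]

lemma auxE_sum1 (n : ℕ) (g : Fin (n+2) → ℤ → ℝ) (k q : ℤ) :
    ∑ j, auxE g (Function.update (auxA n k (k+n) q) j (auxA n k (k+n) q j + 1))
      = auxE g (auxA n k (k+n+1) q) + auxE g (auxA n k (k+n) (q+1)) := by
  rw [Fin.sum_univ_castSucc, Fin.sum_univ_castSucc, auxA_upd_last, auxA_upd_mid,
    Finset.sum_eq_zero, zero_add]
  intro j _
  refine auxE_upd_zero n g k _ q 1 j ⟨j.val + 1, by omega⟩ (by simp) ?_
  have := j.2
  unfold auxA
  split_ifs <;> grind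

lemma auxE_same (n : ℕ) (g : Fin (n+2) → ℤ → ℝ) (k p : ℤ) : auxE g (auxA n k p p) = 0 :=
  auxE_zero g _ (Fin.last (n+1)) (Fin.last n).castSucc
    (by intro h; simpa using congrArg Fin.val h) (by simp [auxA])

lemma auxE_swap (n : ℕ) (g : Fin (n+2) → ℤ → ℝ) (k p q : ℤ) :
    auxE g (auxA n k p q) = - auxE g (auxA n k q p) := by
  have hne : Fin.last (n+1) ≠ (Fin.last n).castSucc := by
    intro h; simpa using congrArg Fin.val h
  have := Matrix.det_permute' (Equiv.swap (Fin.last (n+1)) (Fin.last n).castSucc)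
    (Matrix.of fun i j => g i (auxA n k q p j))
  rw [Equiv.Perm.sign_swap hne] at this
  unfold auxE
  simp only [Units.val_neg, Units.val_one, Int.cast_neg, Int.cast_one, neg_mul, one_mul] at this
  rw [← this]
  congr 1
  ext i j
  simp only [Matrix.of_apply, Matrix.submatrix_apply, id]
  congr 1
  by_cases h1 : j = Fin.last (n+1)
  · subst h1; rw [Equiv.swap_apply_left]; simp [auxA]
  by_cases h2 : j = (Fin.last n).castSucc
  · subst h2; rw [Equiv.swap_apply_right]; simp [auxA]
  rw [Equiv.swap_apply_of_ne_of_ne h1 h2]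
  have h3 : j.val ≠ n + 1 := fun h => h1 (Fin.ext h)
  have h4 : j.val ≠ n := fun h => h2 (Fin.ext h)
  have : j.val < n := by omega
  simp [auxA, this]

lemma auxE_sum2 (n : ℕ) (g : Fin (n+2) → ℤ → ℝ) (k : ℤ) :
    ∑ j, auxE g (Function.update (auxA n k (k+n) (k+n+1)) j (auxA n k (k+n) (k+n+1) j + 2))
      = - auxE g (auxA n k (k+n+1) (k+n+2)) + auxE g (auxA n k (k+n) (k+n+3)) := by
  rw [Fin.sum_univ_castSucc, Fin.sum_univ_castSucc, auxA_upd_last, auxA_upd_mid,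
    Finset.sum_eq_zero, zero_add, auxE_swap n g k (k+n+2)]
  · congr 3; ring
  intro j _
  refine auxE_upd_zero n g k _ _ 2 j ⟨j.val + 2, by omega⟩ (by simp) ?_
  rw [auxA_eq]; push_cast; ring

lemma aux_plucker {N : ℕ} (A B : Matrix (Fin N) (Fin N) ℝ) (w : Fin N → ℝ) (l : Fin N) :
    A.det * (B.updateCol l w).det
      = ∑ j, (A.updateCol j w).det * (B.updateCol l (fun i => A i j)).det := by
  simp only [← Matrix.cramer_apply]
  have h := Matrix.mulVec_cramer A w
  have h2 : A.mulVec (A.cramer w) = ∑ j, A.cramer w j • (fun i => A i j) := by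
    funext i
    simp [Matrix.mulVec, dotProduct, mul_comm]
  rw [h2] at h
  have h3 := congrFun (congrArg B.cramer h) l
  simp only [map_sum, map_smul, Finset.sum_apply, Pi.smul_apply, smul_eq_mul] at h3
  exact h3.symm

lemma auxE_updateCol {N : ℕ} (g : Fin N → ℤ → ℝ) (a : Fin N → ℤ) (j : Fin N) (m : ℤ) :
    ((Matrix.of fun i j => g i (a j)).updateCol j (fun i => g i m)).det
      = auxE g (Function.update a j m) := by
  unfold auxE
  congr 1
  ext i l
  by_cases hl : l = j
  · subst hl; simp
  · simp [hl]

lemma aux_upd_last' (n : ℕ) (k p q m : ℤ) :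
    Function.update (auxA n k p q) (Fin.last (n+1)) m = auxA n k p m := by
  have := auxA_upd_last n k p q (m - auxA n k p q (Fin.last (n+1)))
  rw [add_sub_cancel] at this
  rw [this]; simp [auxA]

lemma aux_upd_mid' (n : ℕ) (k p q m : ℤ) :
    Function.update (auxA n k p q) (Fin.last n).castSucc m = auxA n k m q := by
  have := auxA_upd_mid n k p q (m - auxA n k p q (Fin.last n).castSucc)
  rw [add_sub_cancel] at this
  rw [this]; simp [auxA]

lemma aux_rel (n : ℕ) (g : Fin (n+2) → ℤ → ℝ) (k u v w : ℤ) :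
    auxE g (auxA n (k+1) u v) * auxE g (auxA n k (k+n) w)
      = auxE g (auxA n (k+1) w v) * auxE g (auxA n k (k+n) u)
        + auxE g (auxA n (k+1) u w) * auxE g (auxA n k (k+n) v) := by
  have h := aux_plucker (Matrix.of fun i j => g i (auxA n (k+1) u v j))
    (Matrix.of fun i j => g i (auxA n k (k+n) 0 j)) (fun i => g i w) (Fin.last (n+1))
  simp only [Matrix.of_apply, auxE_updateCol, aux_upd_last'] at h
  rw [Fin.sum_univ_castSucc, Fin.sum_univ_castSucc, Finset.sum_eq_zero, zero_add,
    aux_upd_last', aux_upd_mid'] at h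
  · rw [show auxA n (k+1) u v (Fin.last n).castSucc = u by simp [auxA],
      show auxA n (k+1) u v (Fin.last (n+1)) = v by simp [auxA]] at h
    exact h
  · intro j _
    have hj := j.2
    rw [auxE_zero g (auxA n k (k+n) _) ⟨j.val + 1, by omega⟩ (Fin.last (n+1)), mul_zero]
    · intro h; have := congrArg Fin.val h; simp at this; omega
    · simp only [auxA, Fin.val_last, Fin.val_castSucc]
      split_ifs <;> grind

/-- gauge-free identity implies the identity with the exponential factor -/
lemma aux_gauge (y : ℝ) (R1 R0 R1x R0x : ℝ → ℝ) (S1 S0 : ℝ → ℝ) (x z R1xx R0xx R1z R0z : ℝ)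
    (h1 : ∀ s, HasDerivAt R1 (R1x s) s) (h0 : ∀ s, HasDerivAt R0 (R0x s) s)
    (h1x : HasDerivAt R1x R1xx x) (h0x : HasDerivAt R0x R0xx x)
    (h1z : HasDerivAt S1 R1z z) (h0z : HasDerivAt S0 R0z z)
    (e1 : S1 z = R1 x) (e0 : S0 z = R0 x)
    (key : R1xx * R0 x - 2 * R1x x * R0x x + R1 x * R0xx - (R1z * R0 x - R1 x * R0z) = 0) :
    deriv (fun x' => deriv (fun x'' => Real.exp (-(x'' * y)) * R1 x'') x') x
        * (Real.exp (-(x * y)) * R0 x)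
      - 2 * deriv (fun x' => Real.exp (-(x' * y)) * R1 x') x
        * deriv (fun x' => Real.exp (-(x' * y)) * R0 x') x
      + (Real.exp (-(x * y)) * R1 x)
        * deriv (fun x' => deriv (fun x'' => Real.exp (-(x'' * y)) * R0 x'') x') x
      - (deriv (fun z' => Real.exp (-(x * y)) * S1 z') z * (Real.exp (-(x * y)) * R0 x)
        - (Real.exp (-(x * y)) * R1 x) * deriv (fun z' => Real.exp (-(x * y)) * S0 z') z) = 0 := by
  have he : ∀ s, HasDerivAt (fun s => Real.exp (-(s * y))) (Real.exp (-(s * y)) * (-y)) s := by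
    intro s
    have := (((hasDerivAt_id s).mul_const y).neg).exp
    simpa using this
  have d1 : ∀ (R Rx : ℝ → ℝ), (∀ s, HasDerivAt R (Rx s) s) → 
      (deriv fun x'' => Real.exp (-(x'' * y)) * R x'')
        = fun s => Real.exp (-(s * y)) * (-y) * R s + Real.exp (-(s * y)) * Rx s :=
    fun R Rx h => funext fun s => ((he s).mul (h s)).deriv
  have d2 : ∀ (R Rx : ℝ → ℝ) (Rxx : ℝ), (∀ s, HasDerivAt R (Rx s) s) → HasDerivAt Rx Rxx x →
      deriv (fun s => Real.exp (-(s * y)) * (-y) * R s + Real.exp (-(s * y)) * Rx s) x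
        = (Real.exp (-(x * y)) * (-y) * (-y) * R x + Real.exp (-(x * y)) * (-y) * Rx x)
          + (Real.exp (-(x * y)) * (-y) * Rx x + Real.exp (-(x * y)) * Rxx) :=
    fun R Rx Rxx h hx => ((((he x).mul_const (-y)).mul (h x)).add ((he x).mul hx)).deriv
  rw [(h1z.const_mul _).deriv, (h0z.const_mul _).deriv]
  simp only [d1 R1 R1x h1, d1 R0 R0x h0]
  rw [d2 R1 R1x R1xx h1 h1x, d2 R0 R0x R0xx h0 h0x]
  linear_combination (Real.exp (-(x * y)))^2 * key

/-- For smooth functions `f_n^{(i)}(x,t,y,z)` with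
`∂_x f_n = f_{n+1}`, `∂_z f_n = f_{n+2}`, `∂_t f_n = -4 f_{n+3}`, `∂_y f_n = f_{n-1}`,
and `σ(k) = e^{-xy} ρ_N(k)` where `ρ_N(k) = det[f^{(i)}_{k+j-1}]`, the bilinear equation
`(D_x² - D_z) σ(k+1)·σ(k) = 0` holds. -/
theorem stmt_10 (N : ℕ) (hN : 0 < N) (f : Fin N → ℤ → ℝ → ℝ → ℝ → ℝ → ℝ)
    (hsm : ∀ i n, ContDiff ℝ (⊤ : ℕ∞)
      (fun p : ℝ × ℝ × ℝ × ℝ => f i n p.1 p.2.1 p.2.2.1 p.2.2.2))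
    (hfx : ∀ i n x t y z, deriv (fun x' => f i n x' t y z) x = f i (n + 1) x t y z)
    (hfz : ∀ i n x t y z, deriv (fun z' => f i n x t y z') z = f i (n + 2) x t y z)
    (hft : ∀ i n x t y z, deriv (fun t' => f i n x t' y z) t = -4 * f i (n + 3) x t y z)
    (hfy : ∀ i n x t y z, deriv (fun y' => f i n x t y' z) y = f i (n - 1) x t y z)
    (σ : ℤ → ℝ → ℝ → ℝ → ℝ → ℝ)
    (hσ : ∀ k x t y z, σ k x t y z =
      Real.exp (-(x * y)) *
        Matrix.det (Matrix.of fun i j : Fin N => f i (k + (j.val : ℤ)) x t y z)) :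
    ∀ (k : ℤ) (x t y z : ℝ),
      deriv (fun x' => deriv (fun x'' => σ (k + 1) x'' t y z) x') x * σ k x t y z
        - 2 * deriv (fun x' => σ (k + 1) x' t y z) x * deriv (fun x' => σ k x' t y z) x
        + σ (k + 1) x t y z * deriv (fun x' => deriv (fun x'' => σ k x'' t y z) x') x
        - (deriv (fun z' => σ (k + 1) x t y z') z * σ k x t y z
            - σ (k + 1) x t y z * deriv (fun z' => σ k x t y z') z)
      = 0 := by
  have hdx : ∀ i n x t y z, HasDerivAt (fun x' => f i n x' t y z) (f i (n+1) x t y z) x := by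
    intro i n x t y z
    rw [← hfx]
    refine DifferentiableAt.hasDerivAt ?_
    have h1 : Differentiable ℝ (fun p : ℝ × ℝ × ℝ × ℝ => f i n p.1 p.2.1 p.2.2.1 p.2.2.2) :=
      (hsm i n).differentiable (by simp)
    have h2 : Differentiable ℝ (fun x' : ℝ => ((x', t, y, z) : ℝ × ℝ × ℝ × ℝ)) := by fun_prop
    exact (h1.comp h2) x
  have hdz : ∀ i n x t y z, HasDerivAt (fun z' => f i n x t y z') (f i (n+2) x t y z) z := by
    intro i n x t y z
    rw [← hfz]
    refine DifferentiableAt.hasDerivAt ?_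
    have h1 : Differentiable ℝ (fun p : ℝ × ℝ × ℝ × ℝ => f i n p.1 p.2.1 p.2.2.1 p.2.2.2) :=
      (hsm i n).differentiable (by simp)
    have h2 : Differentiable ℝ (fun z' : ℝ => ((x, t, y, z') : ℝ × ℝ × ℝ × ℝ)) := by fun_prop
    exact (h1.comp h2) z
  intro k x t y z
  simp only [hσ]
  obtain _ | _ | n := N
  · omega
  · have h1 : ∀ k x z, Matrix.det (Matrix.of fun i j : Fin (0 + 1) =>
        f i (k + (j.val : ℤ)) x t y z) = f 0 k x t y z := by
      intro k x z
      refine (Matrix.det_fin_one _).trans ?_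
      simp
    simp only [h1]
    refine aux_gauge y (fun x => f 0 (k + 1) x t y z) (fun x => f 0 k x t y z) _ _
      (fun z => f 0 (k + 1) x t y z) (fun z => f 0 k x t y z) x z _ _ _ _
      (fun s => hdx _ _ _ _ _ _) (fun s => hdx _ _ _ _ _ _)
      (hdx _ _ _ _ _ _) (hdx _ _ _ _ _ _) (hdz _ _ _ _ _ _) (hdz _ _ _ _ _ _) rfl rfl ?_
    beta_reduce
    rw [show k + 1 + 1 = k + 2 by ring, show k + 2 + 1 = k + 3 by ring,
      show k + 1 + 2 = k + 3 by ring]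
    ring
  · have hE : ∀ k x z, Matrix.det (Matrix.of fun i j : Fin (n + 1 + 1) =>
        f i (k + (j.val : ℤ)) x t y z)
        = auxE (fun i m => f i m x t y z) (auxA n k (k+n) (k+n+1)) := by
      intro k x z
      rw [auxA_eq]; rfl
    simp only [hE]
    have hx1 : ∀ k q s, HasDerivAt (fun x => auxE (fun i m => f i m x t y z) (auxA n k (k+n) q))
        (auxE (fun i m => f i m s t y z) (auxA n k (k+n+1) q)
          + auxE (fun i m => f i m s t y z) (auxA n k (k+n) (q+1))) s := by
      intro k q s
      rw [← auxE_sum1]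
      exact auxE_deriv (fun x i m => f i m x t y z) 1 s (fun i m => hdx i m s t y z) _
    have hx0 : ∀ k s, HasDerivAt
        (fun x => auxE (fun i m => f i m x t y z) (auxA n k (k+n) (k+n+1)))
        (auxE (fun i m => f i m s t y z) (auxA n k (k+n) (k+n+1+1))) s := by
      intro k s
      have := hx1 k (k+n+1) s
      rwa [auxE_same, zero_add] at this
    have hz : ∀ k, HasDerivAt
        (fun z => auxE (fun i m => f i m x t y z) (auxA n k (k+n) (k+n+1)))
        (- auxE (fun i m => f i m x t y z) (auxA n k (k+n+1) (k+n+2))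
          + auxE (fun i m => f i m x t y z) (auxA n k (k+n) (k+n+3))) z := by
      intro k
      rw [← auxE_sum2]
      exact auxE_deriv (fun z i m => f i m x t y z) 2 z (fun i m => hdz i m x t y z) _
    refine aux_gauge y _ _ _ _
      (fun z => auxE (fun i m => f i m x t y z) (auxA n (k+1) (k+1+n) (k+1+n+1)))
      (fun z => auxE (fun i m => f i m x t y z) (auxA n k (k+n) (k+n+1))) x z _ _ _ _
      (hx0 (k+1)) (hx0 k) (hx1 _ _ _) (hx1 _ _ _) (hz (k+1)) (hz k) rfl rfl ?_
    have hr := aux_rel n (fun i m => f i m x t y z) k (k+n+1) (k+n+2) (k+n+3)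
    rw [auxE_swap n _ (k+1) (k+n+3)] at hr
    rw [show k + 1 + (n:ℤ) = k + n + 1 by ring, show k + (n:ℤ) + 1 + 1 = k + n + 2 by ring,
      show k + (n:ℤ) + 2 + 1 = k + n + 3 by ring, show k + (n:ℤ) + 1 + 2 = k + n + 3 by ring,
      show k + (n:ℤ) + 1 + 3 = k + n + 3 + 1 by ring]
    linear_combination 2 * hr
end

section
/- Let f_n^{(i)} (i = 1,…,N, n ∈ ℤ) be smooth real-valued functions of (x,t,y,z) satisfying ∂_x f_n^{(i)} = f_{n+1}^{(i)}, ∂_z f_n^{(i)} = f_{n+2}^{(i)}, ∂_t f_n^{(i)} = −4 f_{n+3}^{(i)}, and ∂_y f_n^{(i)} = f_{n−1}^{(i)} for all i and n. For an integer k, set σ(k) = e^{−xy} ρ_N(k). Then (D_x³ + D_t + 3 D_x D_z) σ(k+1)·σ(k) = 0. -/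
/-- determinant with columns indexed by `c` -/
noncomputable def WW {N : ℕ} (v : Fin N → ℤ → ℝ) (c : Fin N → ℤ) : ℝ :=
  Matrix.det (Matrix.of fun i j : Fin N => v i (c j))

/-- shift operator -/
noncomputable def DD {N : ℕ} (m : ℤ) (φ : (Fin N → ℤ) → ℝ) (c : Fin N → ℤ) : ℝ :=
  ∑ j, φ (Function.update c j (c j + m))

theorem WW_deriv {N : ℕ} (F : ℝ → Fin N → ℤ → ℝ) (m : ℤ) (s x : ℝ)
    (hF : ∀ i n, HasDerivAt (fun x => F x i n) (s * F x i (n + m)) x) (c : Fin N → ℤ) :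
    HasDerivAt (fun x => WW (F x) c) (s * DD m (WW (F x)) c) x := by
  unfold DD WW
  simp only [Matrix.det_apply', Matrix.of_apply]
  have h := HasDerivAt.fun_sum (u := (Finset.univ : Finset (Equiv.Perm (Fin N))))
    (A := fun σ x => ((Equiv.Perm.sign σ : ℤ) : ℝ) * ∏ i, F x (σ i) (c i))
    (A' := fun σ => ((Equiv.Perm.sign σ : ℤ) : ℝ) *
      ∑ i, (∏ j ∈ Finset.univ.erase i, F x (σ j) (c j)) • (s * F x (σ i) (c i + m))) (x := x)
    (by
      intro σ _
      exact (HasDerivAt.fun_finsetProd (fun i _ => hF (σ i) (c i))).const_mul _)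
  refine h.congr_deriv (Eq.symm ?_)
  rw [Finset.sum_comm, Finset.mul_sum]
  refine Finset.sum_congr rfl fun σ _ => ?_
  rw [← Finset.mul_sum, mul_left_comm, Finset.mul_sum]
  congr 1
  refine Finset.sum_congr rfl fun i _ => ?_
  rw [← Finset.mul_prod_erase _ _ (Finset.mem_univ i)]
  rw [Finset.prod_congr rfl (g := fun j => F x (σ j) (c j))]
  · simp only [Function.update_self, smul_eq_mul]; ring
  · intro j hj
    rw [Function.update_of_ne (Finset.ne_of_mem_erase hj)]

theorem DD_deriv {N : ℕ} (φ : ℝ → (Fin N → ℤ) → ℝ) (φ' : (Fin N → ℤ) → ℝ) (m : ℤ) (x : ℝ)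
    (h : ∀ c, HasDerivAt (fun x => φ x c) (φ' c) x) (c : Fin N → ℤ) :
    HasDerivAt (fun x => DD m (φ x) c) (DD m φ' c) x := by
  unfold DD
  exact HasDerivAt.fun_sum fun j _ => h _

theorem WW_exch {N : ℕ} (v : Fin N → ℤ → ℝ) (a b : Fin N → ℤ) (i : Fin N) :
    WW v a * WW v b = ∑ j, WW v (Function.update a i (b j)) * WW v (Function.update b j (a i)) := by
  have key : ∀ (c : Fin N → ℤ) (j : Fin N) (n : ℤ),
      WW v (Function.update c j n) =
        Matrix.cramer (Matrix.of fun i j : Fin N => v i (c j)) (fun i => v i n) j := by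
    intro c j n
    rw [Matrix.cramer_apply]
    unfold WW
    congr 1
    ext p q
    simp only [Matrix.of_apply, Matrix.updateCol_apply, Function.update_apply]
    split_ifs <;> rfl
  have h := Matrix.mulVec_cramer (Matrix.of fun i j : Fin N => v i (b j)) (fun p => v p (a i))
  have h2 := congrArg (fun w => Matrix.cramer (Matrix.of fun i j : Fin N => v i (a j)) w i) h
  simp only [map_smul, Pi.smul_apply, smul_eq_mul] at h2
  rw [← key a i (a i), Function.update_eq_self] at h2
  rw [mul_comm, show WW v b = (Matrix.of fun i j : Fin N => v i (b j)).det from rfl, ← h2]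
  have h3 : (Matrix.of fun i j : Fin N => v i (b j)).mulVec
      (Matrix.cramer (Matrix.of fun i j : Fin N => v i (b j)) (fun p => v p (a i)))
      = ∑ j, WW v (Function.update b j (a i)) • (fun p => v p (b j)) := by
    ext p
    simp only [Matrix.mulVec, dotProduct, Finset.sum_apply, Pi.smul_apply, smul_eq_mul, key,
      Matrix.of_apply]
    exact Finset.sum_congr rfl fun j _ => mul_comm _ _
  rw [h3, map_sum, Finset.sum_apply]
  refine Finset.sum_congr rfl fun j _ => ?_
  rw [map_smul, Pi.smul_apply, smul_eq_mul, ← key, mul_comm]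

/-- alternating functions of column labels -/
def Alt {N : ℕ} (φ : (Fin N → ℤ) → ℝ) : Prop :=
  ∀ (c : Fin N → ℤ) (i j : Fin N), i ≠ j → φ (c ∘ Equiv.swap i j) = - φ c

theorem Alt_WW {N : ℕ} (v : Fin N → ℤ → ℝ) : Alt (WW v) := by
  intro c i j hij
  have := Matrix.det_permute' (Equiv.swap i j) (Matrix.of fun p q : Fin N => v p (c q))
  rw [Equiv.Perm.sign_swap hij] at this
  unfold WW
  rw [show (Matrix.of fun p q : Fin N => v p ((c ∘ Equiv.swap i j) q)) =
    (Matrix.of fun p q : Fin N => v p (c q)).submatrix id (Equiv.swap i j) by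
      ext p q; simp, this]
  simp

theorem Alt.DD {N : ℕ} {φ : (Fin N → ℤ) → ℝ} (h : Alt φ) (m : ℤ) : Alt (DD m φ) := by
  intro c i j hij
  unfold _root_.DD
  rw [← Finset.sum_neg_distrib, ← Equiv.sum_comp (Equiv.swap i j)]
  refine Finset.sum_congr rfl fun l _ => ?_
  rw [← h _ i j hij, Function.update_comp_equiv]
  simp

theorem Alt.swap {N : ℕ} {φ : (Fin N → ℤ) → ℝ} (hφ : Alt φ) (c c' : Fin N → ℤ) (i j : Fin N)
    (hij : i ≠ j) (h : ∀ l, c' l = c (Equiv.swap i j l)) : φ c' = - φ c := by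
  rw [← hφ c i j hij]; congr 1; ext l; simp [h]

theorem Alt.zero {N : ℕ} {φ : (Fin N → ℤ) → ℝ} (hφ : Alt φ) (c : Fin N → ℤ) (i j : Fin N)
    (hij : i ≠ j) (h : c i = c j) : φ c = 0 := by
  have := hφ.swap c c i j hij (fun l => by
    rw [Equiv.swap_apply_def]; split_ifs <;> simp_all)
  linarith

/-- consecutive columns followed by three given ones -/
def GG (n : ℕ) (K a b d : ℤ) (j : Fin (n + 3)) : ℤ :=
  if j.val < n then K + j.val else if j.val = n then a else if j.val = n + 1 then b else d

theorem GG_swap1 (n : ℕ) {φ : (Fin (n+3) → ℤ) → ℝ} (hφ : Alt φ) (K a b d : ℤ) :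
    φ (GG n K a b d) = - φ (GG n K b a d) := by
  refine hφ.swap _ _ ⟨n, by omega⟩ ⟨n+1, by omega⟩ (by simp) fun l => ?_
  simp only [GG, Equiv.swap_apply_def, Fin.ext_iff]
  split_ifs <;> simp_all <;> omega

theorem GG_swap2 (n : ℕ) {φ : (Fin (n+3) → ℤ) → ℝ} (hφ : Alt φ) (K a b d : ℤ) :
    φ (GG n K a b d) = - φ (GG n K a d b) := by
  refine hφ.swap _ _ ⟨n+1, by omega⟩ ⟨n+2, by omega⟩ (by simp) fun l => ?_
  simp only [GG, Equiv.swap_apply_def, Fin.ext_iff]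
  split_ifs <;> simp_all <;> omega

theorem GG_z1 (n : ℕ) {φ : (Fin (n+3) → ℤ) → ℝ} (hφ : Alt φ) (K a d : ℤ) : φ (GG n K a a d) = 0 := by
  have := GG_swap1 n hφ K a a d; linarith

theorem GG_z2 (n : ℕ) {φ : (Fin (n+3) → ℤ) → ℝ} (hφ : Alt φ) (K a d : ℤ) : φ (GG n K a d d) = 0 := by
  have := GG_swap2 n hφ K a d d; linarith

theorem GG_z3 (n : ℕ) {φ : (Fin (n+3) → ℤ) → ℝ} (hφ : Alt φ) (K a d : ℤ) : φ (GG n K a d a) = 0 := by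
  rw [GG_swap1 n hφ, GG_z2 n hφ]; simp

theorem sum3 (n : ℕ) (g : Fin (n + 3) → ℝ) (h : ∀ j : Fin (n+3), j.val < n → g j = 0) :
    ∑ j, g j = g ⟨n, by omega⟩ + g ⟨n+1, by omega⟩ + g ⟨n+2, by omega⟩ := by
  rw [Fin.sum_univ_castSucc, Fin.sum_univ_castSucc, Fin.sum_univ_castSucc,
    Finset.sum_eq_zero (fun j _ => h _ (by simp)), zero_add]
  rfl

theorem GG_u0 (n : ℕ) (K a b d e : ℤ) :
    Function.update (GG n K a b d) ⟨n, by omega⟩ e = GG n K e b d := by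
  ext j
  simp only [Function.update_apply, GG, Fin.ext_iff]
  split_ifs <;> omega

theorem GG_u1 (n : ℕ) (K a b d e : ℤ) :
    Function.update (GG n K a b d) ⟨n+1, by omega⟩ e = GG n K a e d := by
  ext j
  simp only [Function.update_apply, GG, Fin.ext_iff]
  split_ifs <;> omega

theorem GG_u2 (n : ℕ) (K a b d e : ℤ) :
    Function.update (GG n K a b d) ⟨n+2, by omega⟩ e = GG n K a b e := by
  ext j
  simp only [Function.update_apply, GG, Fin.ext_iff]
  split_ifs <;> omega

theorem GG_e0 (n : ℕ) (K a b d : ℤ) : GG n K a b d ⟨n, by omega⟩ = a := by simp [GG]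
theorem GG_e1 (n : ℕ) (K a b d : ℤ) : GG n K a b d ⟨n+1, by omega⟩ = b := by simp [GG]
theorem GG_e2 (n : ℕ) (K a b d : ℤ) : GG n K a b d ⟨n+2, by omega⟩ = d := by simp [GG]

theorem GG_D' (n : ℕ) (φ : (Fin (n+3) → ℤ) → ℝ) (m : ℕ) (K a b d : ℤ)
    (h : ∀ j : Fin (n+3), j.val < n →
      φ (Function.update (GG n K a b d) j (GG n K a b d j + m)) = 0) :
    DD m φ (GG n K a b d) = φ (GG n K (a + m) b d) + φ (GG n K a (b + m) d)
      + φ (GG n K a b (d + m)) := by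
  unfold DD
  rw [sum3 n _ h, GG_e0, GG_e1, GG_e2, GG_u0, GG_u1, GG_u2]

theorem GG_col (n : ℕ) (m : ℕ) (hm : 0 < m) (K a b d : ℤ)
    (hr : ∀ r : ℤ, n ≤ r → r < n + m → K + r = a ∨ K + r = b ∨ K + r = d)
    (j : Fin (n+3)) (hj : j.val < n) :
    ∃ l, l ≠ j ∧ GG n K a b d l = GG n K a b d j + m := by
  by_cases h1 : j.val + m < n
  · refine ⟨⟨j.val + m, by omega⟩, by simp [Fin.ext_iff]; omega, ?_⟩
    simp [GG, h1, hj]; ring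
  · have e : GG n K a b d j = K + j.val := by simp [GG, hj]
    rcases hr (j.val + m) (by omega) (by omega) with h | h | h
    · exact ⟨⟨n, by omega⟩, by simp [Fin.ext_iff]; omega, by rw [GG_e0, e]; omega⟩
    · exact ⟨⟨n+1, by omega⟩, by simp [Fin.ext_iff]; omega, by rw [GG_e1, e]; omega⟩
    · exact ⟨⟨n+2, by omega⟩, by simp [Fin.ext_iff]; omega, by rw [GG_e2, e]; omega⟩

theorem GG_D (n : ℕ) {φ : (Fin (n+3) → ℤ) → ℝ} (hφ : Alt φ) (m : ℕ) (hm : 0 < m) (K a b d : ℤ)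
    (hr : ∀ r : ℤ, n ≤ r → r < n + m → K + r = a ∨ K + r = b ∨ K + r = d) :
    DD m φ (GG n K a b d) = φ (GG n K (a + m) b d) + φ (GG n K a (b + m) d)
      + φ (GG n K a b (d + m)) := by
  refine GG_D' n _ m K a b d fun j hj => ?_
  obtain ⟨l, hl, e⟩ := GG_col n m hm K a b d hr j hj
  refine hφ.zero _ l j hl ?_
  rw [Function.update_of_ne hl, Function.update_self, e]

theorem shape_D1 (n : ℕ) {φ : (Fin (n+3) → ℤ) → ℝ} (hφ : Alt φ) (K b d : ℤ) :
    DD 1 φ (GG n K (K+n) b d) = φ (GG n K (K+n+1) b d) + φ (GG n K (K+n) (b + 1) d)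
      + φ (GG n K (K+n) b (d + 1)) := by
  have := GG_D n hφ 1 one_pos K (K+n) b d (fun r h1 h2 => by left; push_cast at h2; omega)
  simpa using this

theorem shape_D2 (n : ℕ) {φ : (Fin (n+3) → ℤ) → ℝ} (hφ : Alt φ) (K d : ℤ) :
    DD 2 φ (GG n K (K+n) (K+n+1) d) = φ (GG n K (K+n+2) (K+n+1) d)
      + φ (GG n K (K+n) (K+n+3) d) + φ (GG n K (K+n) (K+n+1) (d + 2)) := by
  have := GG_D n hφ 2 two_pos K (K+n) (K+n+1) d (fun r h1 h2 => by push_cast at h2; omega)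
  simpa [add_assoc] using this

theorem shape_D3 (n : ℕ) {φ : (Fin (n+3) → ℤ) → ℝ} (hφ : Alt φ) (K : ℤ) :
    DD 3 φ (GG n K (K+n) (K+n+1) (K+n+2)) = φ (GG n K (K+n+3) (K+n+1) (K+n+2))
      + φ (GG n K (K+n) (K+n+4) (K+n+2)) + φ (GG n K (K+n) (K+n+1) (K+n+5)) := by
  have := GG_D n hφ 3 (by norm_num) K (K+n) (K+n+1) (K+n+2)
    (fun r h1 h2 => by push_cast at h2; omega)
  simpa [add_assoc] using this

theorem v_x (n : ℕ) {φ : (Fin (n+3) → ℤ) → ℝ} (h : Alt φ) (K : ℤ) :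
    DD 1 φ (GG n K (K+n) (K+n+1) (K+n+2)) = φ (GG n K (K+n) (K+n+1) (K+n+3)) := by
  rw [shape_D1 n h, GG_z1 n h]
  rw [show K+n+1+1 = K+n+(2:ℤ) by ring, show K+n+2+1 = K+n+(3:ℤ) by ring, GG_z2 n h]; ring

theorem v_xx (n : ℕ) {φ : (Fin (n+3) → ℤ) → ℝ} (h : Alt φ) (K : ℤ) :
    DD 1 (DD 1 φ) (GG n K (K+n) (K+n+1) (K+n+2)) =
      φ (GG n K (K+n) (K+n+2) (K+n+3)) + φ (GG n K (K+n) (K+n+1) (K+n+4)) := by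
  rw [v_x n (h.DD 1), shape_D1 n h, GG_z1 n h]
  rw [show K+n+1+1 = K+n+(2:ℤ) by ring, show K+n+3+1 = K+n+(4:ℤ) by ring]; ring

theorem v_xxx (n : ℕ) {φ : (Fin (n+3) → ℤ) → ℝ} (h : Alt φ) (K : ℤ) :
    DD 1 (DD 1 (DD 1 φ)) (GG n K (K+n) (K+n+1) (K+n+2)) =
      φ (GG n K (K+n+1) (K+n+2) (K+n+3)) + 2 * φ (GG n K (K+n) (K+n+2) (K+n+4))
        + φ (GG n K (K+n) (K+n+1) (K+n+5)) := by
  rw [v_xx n (h.DD 1), shape_D1 n h, shape_D1 n h, GG_z1 n h]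
  rw [show K+n+1+1 = K+n+(2:ℤ) by ring, show K+n+3+1 = K+n+(4:ℤ) by ring,
    show K+n+2+1 = K+n+(3:ℤ) by ring, show K+n+4+1 = K+n+(5:ℤ) by ring, GG_z2 n h]; ring

theorem v_z (n : ℕ) {φ : (Fin (n+3) → ℤ) → ℝ} (h : Alt φ) (K : ℤ) :
    DD 2 φ (GG n K (K+n) (K+n+1) (K+n+2)) =
      - φ (GG n K (K+n) (K+n+2) (K+n+3)) + φ (GG n K (K+n) (K+n+1) (K+n+4)) := by
  rw [shape_D2 n h, GG_z3 n h, GG_swap2 n h]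
  rw [show K+n+2+2 = K+n+(4:ℤ) by ring]; ring

theorem v_xz (n : ℕ) {φ : (Fin (n+3) → ℤ) → ℝ} (h : Alt φ) (K : ℤ) :
    DD 1 (DD 2 φ) (GG n K (K+n) (K+n+1) (K+n+2)) =
      - φ (GG n K (K+n+1) (K+n+2) (K+n+3)) + φ (GG n K (K+n) (K+n+1) (K+n+5)) := by
  rw [v_x n (h.DD 2), shape_D2 n h, GG_z2 n h, GG_swap1 n h]
  rw [show K+n+3+2 = K+n+(5:ℤ) by ring]; ring

theorem v_t (n : ℕ) {φ : (Fin (n+3) → ℤ) → ℝ} (h : Alt φ) (K : ℤ) :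
    DD 3 φ (GG n K (K+n) (K+n+1) (K+n+2)) =
      φ (GG n K (K+n+1) (K+n+2) (K+n+3)) - φ (GG n K (K+n) (K+n+2) (K+n+4))
        + φ (GG n K (K+n) (K+n+1) (K+n+5)) := by
  rw [shape_D3 n h, GG_swap1 n h, GG_swap2 n h K _ (K+n+3), GG_swap2 n h K _ (K+n+4)]
  ring

theorem GG_mem (n : ℕ) (K a b d : ℤ) (j : Fin (n+3)) (hj : j.val < n) (x y : ℤ)
    (i : Fin (n+3)) (hi : n < i.val) :
    ∃ l, l ≠ i ∧ GG n K (K+n) x y l = GG n (K+1) a b d j := by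
  refine ⟨⟨j.val+1, by omega⟩, by simp [Fin.ext_iff]; omega, ?_⟩
  simp only [GG]
  split_ifs <;> push_cast <;> omega

theorem pl1 (n : ℕ) (v : Fin (n+3) → ℤ → ℝ) (K p q x : ℤ) :
    WW v (GG n K (K+n) (K+n+1) x) * WW v (GG n (K+1) (K+n+1) p q) =
    WW v (GG n K (K+n) (K+n+1) p) * WW v (GG n (K+1) (K+n+1) x q) +
    WW v (GG n K (K+n) (K+n+1) q) * WW v (GG n (K+1) (K+n+1) p x) := by
  have h := Alt_WW v
  rw [WW_exch v _ _ ⟨n+2, by omega⟩, sum3]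
  · rw [GG_e0, GG_e1, GG_e2, GG_e2, GG_u2, GG_u2, GG_u2, GG_u1, GG_u2, GG_z2 n h]; ring
  · intro j hj
    obtain ⟨l, hl, e⟩ := GG_mem n K (K+n+1) p q j hj (K+n+1) x ⟨n+2, by omega⟩ (by simp)
    rw [h.zero _ l ⟨n+2, by omega⟩ hl (by
      rw [Function.update_of_ne hl, Function.update_self, e]), zero_mul]

theorem pl2 (n : ℕ) (v : Fin (n+3) → ℤ → ℝ) (K p q x y : ℤ) :
    WW v (GG n K (K+n) x y) * WW v (GG n (K+1) y p q) =
    WW v (GG n K (K+n) p y) * WW v (GG n (K+1) y x q) +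
    WW v (GG n K (K+n) q y) * WW v (GG n (K+1) y p x) := by
  have h := Alt_WW v
  rw [WW_exch v _ _ ⟨n+1, by omega⟩, sum3]
  · rw [GG_e0, GG_e1, GG_e1, GG_e2, GG_u1, GG_u1, GG_u1, GG_u1, GG_u2, GG_z2 n h]; ring
  · intro j hj
    obtain ⟨l, hl, e⟩ := GG_mem n K y p q j hj x y ⟨n+1, by omega⟩ (by simp)
    rw [h.zero _ l ⟨n+1, by omega⟩ hl (by
      rw [Function.update_of_ne hl, Function.update_self, e]), zero_mul]

/-- the algebraic identity -/
theorem alg (N : ℕ) (hN : 0 < N) (v : Fin N → ℤ → ℝ) (k : ℤ) (a b : Fin N → ℤ)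
    (ha : a = fun j => k + 1 + (j.val : ℤ)) (hb : b = fun j => k + (j.val : ℤ)) :
    (DD 1 (DD 1 (DD 1 (WW v))) a * WW v b - 3 * DD 1 (DD 1 (WW v)) a * DD 1 (WW v) b
      + 3 * DD 1 (WW v) a * DD 1 (DD 1 (WW v)) b - WW v a * DD 1 (DD 1 (DD 1 (WW v))) b)
    + (-4 * DD 3 (WW v) a * WW v b - WW v a * (-4 * DD 3 (WW v) b))
    + 3 * (DD 1 (DD 2 (WW v)) a * WW v b - DD 1 (WW v) a * DD 2 (WW v) b
      - DD 2 (WW v) a * DD 1 (WW v) b + WW v a * DD 1 (DD 2 (WW v)) b) = 0 := by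
  obtain _ | _ | _ | n := N
  · omega
  · subst ha hb
    simp [DD, WW]
    ring_nf
  · subst ha hb
    simp [DD, WW, Matrix.det_fin_two, Fin.sum_univ_two]
    ring_nf
  · have ha' : a = GG n (k+1) (k+1+n) (k+1+n+1) (k+1+n+2) := by
      subst ha; ext j; have := j.2; simp only [GG]; split_ifs <;> omega
    have hb' : b = GG n k (k+n) (k+n+1) (k+n+2) := by
      subst hb; ext j; have := j.2; simp only [GG]; split_ifs <;> omega
    have h := Alt_WW v
    rw [ha', hb', v_x n h, v_x n h, v_xx n h, v_xx n h, v_xxx n h, v_xxx n h, v_z n h, v_z n h,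
      v_xz n h, v_xz n h, v_t n h, v_t n h]
    have p1 := pl1 n v k (k+n+3) (k+n+5) (k+n+2)
    have p2 := pl2 n v k (k+n+3) (k+n+4) (k+n+1) (k+n+2)
    rw [GG_swap2 n h (k+1) (k+n+1) (k+n+3) (k+n+2)] at p1
    rw [GG_swap2 n h k (k+n) (k+n+3) (k+n+2), GG_swap2 n h k (k+n) (k+n+4) (k+n+2),
      GG_swap1 n h (k+1) (k+n+2) (k+n+1) (k+n+4), GG_swap2 n h (k+1) (k+n+2) (k+n+3) (k+n+1),
      GG_swap1 n h (k+1) (k+n+2) (k+n+1) (k+n+3)] at p2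
    rw [show k+1+n = k+n+(1:ℤ) by ring, show k+n+1+1 = k+n+(2:ℤ) by ring,
      show k+n+1+2 = k+n+(3:ℤ) by ring, show k+n+1+3 = k+n+(4:ℤ) by ring,
      show k+n+1+4 = k+n+(5:ℤ) by ring, show k+n+1+5 = k+n+(6:ℤ) by ring]
    linear_combination 6 * p1 - 6 * p2

theorem gauge_deriv (y x : ℝ) (F : ℝ → ℝ) (F' : ℝ) (h : HasDerivAt F F' x) :
    HasDerivAt (fun x => Real.exp (-(x * y)) * F x) (Real.exp (-(x * y)) * (F' - y * F x)) x := by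
  have h1 : HasDerivAt (fun x : ℝ => Real.exp (-(x * y))) (Real.exp (-(x * y)) * -(1 * y)) x :=
    ((hasDerivAt_id' x).mul_const y).neg.exp
  refine (h1.mul h).congr_deriv ?_
  ring

theorem gauge_all (y : ℝ) (s A Ax Axx Axxx At Az Axz : ℝ → ℝ → ℝ → ℝ)
    (hs : ∀ x t z, s x t z = Real.exp (-(x * y)) * A x t z)
    (h1 : ∀ x t z, HasDerivAt (fun x => A x t z) (Ax x t z) x)
    (h2 : ∀ x t z, HasDerivAt (fun x => Ax x t z) (Axx x t z) x)
    (h3 : ∀ x t z, HasDerivAt (fun x => Axx x t z) (Axxx x t z) x)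
    (h4 : ∀ x t z, HasDerivAt (fun t => A x t z) (At x t z) t)
    (h5 : ∀ x t z, HasDerivAt (fun z => A x t z) (Az x t z) z)
    (h6 : ∀ x t z, HasDerivAt (fun z => Ax x t z) (Axz x t z) z) :
    (∀ x t z, deriv (fun x => s x t z) x = Real.exp (-(x * y)) * (Ax x t z - y * A x t z)) ∧
    (∀ x t z, deriv (fun x' => deriv (fun x => s x t z) x') x =
      Real.exp (-(x * y)) * (Axx x t z - y * Ax x t z - y * (Ax x t z - y * A x t z))) ∧
    (∀ x t z, deriv (fun x'' => deriv (fun x' => deriv (fun x => s x t z) x') x'') x =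
      Real.exp (-(x * y)) * (Axxx x t z - y * Axx x t z - y * (Axx x t z - y * Ax x t z)
        - y * (Axx x t z - y * Ax x t z - y * (Ax x t z - y * A x t z)))) ∧
    (∀ x t z, deriv (fun t => s x t z) t = Real.exp (-(x * y)) * At x t z) ∧
    (∀ x t z, deriv (fun z => s x t z) z = Real.exp (-(x * y)) * Az x t z) ∧
    (∀ x t z, deriv (fun z' => deriv (fun x' => s x' t z') x) z =
      Real.exp (-(x * y)) * (Axz x t z - y * Az x t z)) := by
  have e1 : ∀ x t z, deriv (fun x => s x t z) x =
      Real.exp (-(x * y)) * (Ax x t z - y * A x t z) := by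
    intro x t z
    simp only [hs]
    exact (gauge_deriv y x _ _ (h1 x t z)).deriv
  have e2 : ∀ x t z, deriv (fun x' => deriv (fun x => s x t z) x') x =
      Real.exp (-(x * y)) * (Axx x t z - y * Ax x t z - y * (Ax x t z - y * A x t z)) := by
    intro x t z
    simp only [e1]
    exact (gauge_deriv y x (fun x => Ax x t z - y * A x t z) _
      ((h2 x t z).sub ((h1 x t z).const_mul y))).deriv
  refine ⟨e1, e2, ?_, ?_, ?_, ?_⟩
  · intro x t z
    simp only [e2]
    exact (gauge_deriv y x
      (fun x => Axx x t z - y * Ax x t z - y * (Ax x t z - y * A x t z)) _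
      (((h3 x t z).sub ((h2 x t z).const_mul y)).sub
        (((h2 x t z).sub ((h1 x t z).const_mul y)).const_mul y))).deriv
  · intro x t z
    simp only [hs]
    exact ((h4 x t z).const_mul _).deriv
  · intro x t z
    simp only [hs]
    exact ((h5 x t z).const_mul _).deriv
  · intro x t z
    simp only [e1]
    exact (((h6 x t z).sub ((h5 x t z).const_mul y)).const_mul _).deriv



/-- For smooth functions `f_n^{(i)}(x,t,y,z)` with
`∂_x f_n = f_{n+1}`, `∂_z f_n = f_{n+2}`, `∂_t f_n = -4 f_{n+3}`, `∂_y f_n = f_{n-1}`,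
and `σ(k) = e^{-xy} ρ_N(k)` where `ρ_N(k) = det[f^{(i)}_{k+j-1}]`, the bilinear equation
`(D_x³ + D_t + 3 D_x D_z) σ(k+1)·σ(k) = 0` holds. -/
theorem stmt_11 (N : ℕ) (hN : 0 < N) (f : Fin N → ℤ → ℝ → ℝ → ℝ → ℝ → ℝ)
    (hsm : ∀ i n, ContDiff ℝ (⊤ : ℕ∞)
      (fun p : ℝ × ℝ × ℝ × ℝ => f i n p.1 p.2.1 p.2.2.1 p.2.2.2))
    (hfx : ∀ i n x t y z, deriv (fun x' => f i n x' t y z) x = f i (n + 1) x t y z)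
    (hfz : ∀ i n x t y z, deriv (fun z' => f i n x t y z') z = f i (n + 2) x t y z)
    (hft : ∀ i n x t y z, deriv (fun t' => f i n x t' y z) t = -4 * f i (n + 3) x t y z)
    (hfy : ∀ i n x t y z, deriv (fun y' => f i n x t y' z) y = f i (n - 1) x t y z)
    (σ : ℤ → ℝ → ℝ → ℝ → ℝ → ℝ)
    (hσ : ∀ k x t y z, σ k x t y z =
      Real.exp (-(x * y)) *
        Matrix.det (Matrix.of fun i j : Fin N => f i (k + (j.val : ℤ)) x t y z)) :
    ∀ (k : ℤ) (x t y z : ℝ),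
      (deriv (fun x' => deriv (fun x'' => deriv (fun s => σ (k + 1) s t y z) x'') x') x
          * σ k x t y z
        - 3 * deriv (fun x' => deriv (fun x'' => σ (k + 1) x'' t y z) x') x
            * deriv (fun x' => σ k x' t y z) x
        + 3 * deriv (fun x' => σ (k + 1) x' t y z) x
            * deriv (fun x' => deriv (fun x'' => σ k x'' t y z) x') x
        - σ (k + 1) x t y z
            * deriv (fun x' => deriv (fun x'' => deriv (fun s => σ k s t y z) x'') x') x)
      + (deriv (fun t' => σ (k + 1) x t' y z) t * σ k x t y z
          - σ (k + 1) x t y z * deriv (fun t' => σ k x t' y z) t)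
      + 3 * (deriv (fun z' => deriv (fun x' => σ (k + 1) x' t y z') x) z * σ k x t y z
          - deriv (fun x' => σ (k + 1) x' t y z) x * deriv (fun z' => σ k x t y z') z
          - deriv (fun z' => σ (k + 1) x t y z') z * deriv (fun x' => σ k x' t y z) x
          + σ (k + 1) x t y z * deriv (fun z' => deriv (fun x' => σ k x' t y z') x) z)
      = 0 := by
  intro k x t y z
  have dx : ∀ i n x t z, HasDerivAt (fun x => f i n x t y z) (1 * f i (n + 1) x t y z) x := by
    intro i n x t z
    rw [one_mul, ← hfx]
    have h1 := (hsm i n).differentiable (by simp)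
    exact DifferentiableAt.hasDerivAt
      (h1.comp (f := fun x : ℝ => (x, t, y, z)) (by fun_prop) x)
  have dz : ∀ i n x t z, HasDerivAt (fun z => f i n x t y z) (1 * f i (n + 2) x t y z) z := by
    intro i n x t z
    rw [one_mul, ← hfz]
    have h1 := (hsm i n).differentiable (by simp)
    exact DifferentiableAt.hasDerivAt
      (h1.comp (f := fun z : ℝ => (x, t, y, z)) (by fun_prop) z)
  have dt : ∀ i n x t z, HasDerivAt (fun t => f i n x t y z) (-4 * f i (n + 3) x t y z) t := by
    intro i n x t z
    rw [← hft]
    have h1 := (hsm i n).differentiable (by simp)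
    exact DifferentiableAt.hasDerivAt
      (h1.comp (f := fun t : ℝ => (x, t, y, z)) (by fun_prop) t)
  let V : ℝ → ℝ → ℝ → Fin N → ℤ → ℝ := fun x t z i n => f i n x t y z
  have wx : ∀ c x t z, HasDerivAt (fun x => WW (V x t z) c) (DD 1 (WW (V x t z)) c) x := by
    intro c x t z
    simpa using WW_deriv (fun x => V x t z) 1 1 x (fun i n => dx i n x t z) c
  have wz : ∀ c x t z, HasDerivAt (fun z => WW (V x t z) c) (DD 2 (WW (V x t z)) c) z := by
    intro c x t z
    simpa using WW_deriv (fun z => V x t z) 2 1 z (fun i n => dz i n x t z) c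
  have wt : ∀ c x t z, HasDerivAt (fun t => WW (V x t z) c) (-4 * DD 3 (WW (V x t z)) c) t := by
    intro c x t z
    exact WW_deriv (fun t => V x t z) 3 (-4) t (fun i n => dt i n x t z) c
  have G : ∀ k : ℤ, _ := fun k => gauge_all y (fun x t z => σ k x t y z)
    (fun x t z => WW (V x t z) (fun j => k + (j.val : ℤ)))
    (fun x t z => DD 1 (WW (V x t z)) (fun j => k + (j.val : ℤ)))
    (fun x t z => DD 1 (DD 1 (WW (V x t z))) (fun j => k + (j.val : ℤ)))
    (fun x t z => DD 1 (DD 1 (DD 1 (WW (V x t z)))) (fun j => k + (j.val : ℤ)))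
    (fun x t z => -4 * DD 3 (WW (V x t z)) (fun j => k + (j.val : ℤ)))
    (fun x t z => DD 2 (WW (V x t z)) (fun j => k + (j.val : ℤ)))
    (fun x t z => DD 1 (DD 2 (WW (V x t z))) (fun j => k + (j.val : ℤ)))
    (fun x t z => hσ k x t y z)
    (fun x t z => wx _ x t z)
    (fun x t z => DD_deriv (fun x => WW (V x t z)) _ 1 x (fun c => wx c x t z) _)
    (fun x t z => DD_deriv (fun x => DD 1 (WW (V x t z))) _ 1 x
      (fun c => DD_deriv (fun x => WW (V x t z)) _ 1 x (fun c => wx c x t z) c) _)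
    (fun x t z => wt _ x t z)
    (fun x t z => wz _ x t z)
    (fun x t z => DD_deriv (fun z => WW (V x t z)) _ 1 z (fun c => wz c x t z) _)
  obtain ⟨a1, a2, a3, a4, a5, a6⟩ := G (k + 1)
  obtain ⟨b1, b2, b3, b4, b5, b6⟩ := G k
  have ea : σ (k+1) x t y z = Real.exp (-(x * y)) * WW (V x t z) (fun j => k + 1 + (j.val : ℤ)) :=
    hσ _ _ _ _ _
  have eb : σ k x t y z = Real.exp (-(x * y)) * WW (V x t z) (fun j => k + (j.val : ℤ)) :=
    hσ _ _ _ _ _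
  rw [a3 x t z, a2 x t z, a1 x t z, a4 x t z, a5 x t z, a6 x t z,
    b3 x t z, b2 x t z, b1 x t z, b4 x t z, b5 x t z, b6 x t z, ea, eb]
  have key := alg N hN (V x t z) k _ _ rfl rfl
  linear_combination (Real.exp (-(x * y)))^2 * key
end

section
/- Let N be a positive integer, k an integer, and for i = 1,…,N let α_i, β_i ∈ ℝ and p_i ∈ ℝ, p_i ≠ 0. Define f_n^{(i)}(x,t,y) = α_i p_i^n e^{η_i} + β_i (−p_i)^n e^{−η_i} with η_i = p_i x + 4 p_i³ t + y/p_i, and set τ_N(k) = e^{−xy} ρ_N(k) / ∏_{i=1}^N p_i^k. Then the pair τ = τ_N(k), τ̄ = τ_N(k+1) satisfies the bilinear equations D_x D_y τ·τ = −2 τ̄², D_x D_y τ̄·τ̄ = −2 τ², D_x² τ·τ̄ = 0, and (D_x³ − D_t) τ·τ̄ = 0. In particular, θ = 2 log( ρ_N(k)/ρ_N(k+1) ) satisfies the potential defocusing mKdV equation θ_t = θ_{xxx} − (1/2)θ_x³ on any open set where ρ_N(k) and ρ_N(k+1) are both positive. -/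
open Matrix Filter Topology

/-- entrywise derivative of a matrix valued curve -/
def MD {n : Type*} (R : ℝ → Matrix n n ℝ) (R' : Matrix n n ℝ) (x : ℝ) : Prop :=
  ∀ i j, HasDerivAt (fun x => R x i j) (R' i j) x

theorem MD.mul {n : Type*} [Fintype n] {R S : ℝ → Matrix n n ℝ} {R' S' : Matrix n n ℝ} {x : ℝ}
    (hR : MD R R' x) (hS : MD S S' x) :
    MD (fun x => R x * S x) (R' * S x + R x * S') x := by
  intro i j
  simp only [Matrix.mul_apply, Matrix.add_apply, ← Finset.sum_add_distrib]
  exact HasDerivAt.fun_sum fun l _ => (hR i l).mul (hS l j)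

theorem MD.trace {n : Type*} [Fintype n] {R : ℝ → Matrix n n ℝ} {R' : Matrix n n ℝ} {x : ℝ}
    (hR : MD R R' x) : HasDerivAt (fun x => (R x).trace) R'.trace x := by
  simp only [Matrix.trace, Matrix.diag]
  exact HasDerivAt.fun_sum fun l _ => hR l l

theorem MD.det_adj {n : Type*} [Fintype n] [DecidableEq n] {R : ℝ → Matrix n n ℝ}
    {R' : Matrix n n ℝ} {x : ℝ}
    (hR : MD R R' x) : HasDerivAt (fun x => (R x).det) ((R x).adjugate * R').trace x := by
  have h1 : ((R x).adjugate * R').trace = ∑ j, ((R x).updateCol j (fun i => R' i j)).det := by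
    simp only [Matrix.trace, Matrix.diag]
    refine Finset.sum_congr rfl fun j _ => ?_
    rw [← Matrix.cramer_apply, Matrix.cramer_eq_adjugate_mulVec]
    rfl
  rw [h1]
  simp only [Matrix.det_apply']
  rw [Finset.sum_comm]
  refine HasDerivAt.fun_sum fun σ _ => ?_
  rw [← Finset.mul_sum]
  refine HasDerivAt.const_mul _ ?_
  have := HasDerivAt.fun_finsetProd (u := Finset.univ) (f := fun i x => R x (σ i) i)
    (f' := fun i => R' (σ i) i) (x := x) fun i _ => hR (σ i) i
  convert this using 1
  refine Finset.sum_congr rfl fun j _ => ?_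
  rw [← Finset.mul_prod_erase Finset.univ _ (Finset.mem_univ j), mul_comm, smul_eq_mul]
  simp only [Matrix.updateCol_self]
  congr 1
  refine Finset.prod_congr rfl fun i hi => ?_
  rw [Matrix.updateCol_ne (Finset.ne_of_mem_erase hi)]

theorem MD.det {n : Type*} [Fintype n] [DecidableEq n] {R : ℝ → Matrix n n ℝ}
    {R' : Matrix n n ℝ} {x : ℝ}
    (hR : MD R R' x) (h : (R x).det ≠ 0) :
    HasDerivAt (fun x => (R x).det) ((R x).det * ((R x)⁻¹ * R').trace) x := by
  convert hR.det_adj using 1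
  rw [Matrix.inv_def, Ring.inverse_eq_inv', Matrix.smul_mul, Matrix.trace_smul, smul_eq_mul]
  field_simp

theorem MD.inv {n : Type*} [Fintype n] [DecidableEq n] {R : ℝ → Matrix n n ℝ}
    {R' : Matrix n n ℝ} {x : ℝ}
    (hR : MD R R' x) (h : (R x).det ≠ 0) :
    MD (fun x => (R x)⁻¹) (-((R x)⁻¹ * R' * (R x)⁻¹)) x := by
  have hadj : ∀ i j, DifferentiableAt ℝ (fun x => (R x).adjugate i j) x := by
    intro i j
    simp only [Matrix.adjugate_apply]
    have : MD (fun x => (R x).updateRow j (Pi.single i 1)) (R'.updateRow j 0) x := by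
      intro a b
      by_cases hab : a = j
      · subst hab
        simp only [Matrix.updateRow_self]
        exact hasDerivAt_const _ _
      · simp only [Matrix.updateRow_ne hab]
        exact hR a b
    exact this.det_adj.differentiableAt
  have hd : ∀ i j, DifferentiableAt ℝ (fun x => (R x)⁻¹ i j) x := by
    intro i j
    simp only [Matrix.inv_def, Ring.inverse_eq_inv', Matrix.smul_apply, smul_eq_mul]
    exact (hR.det_adj.differentiableAt.inv h).mul (hadj i j)
  let G : Matrix n n ℝ := Matrix.of fun i j => deriv (fun x => (R x)⁻¹ i j) x
  have hG : MD (fun x => (R x)⁻¹) G x := fun i j => (hd i j).hasDerivAt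
  have hmul := hR.mul hG
  have hu : IsUnit (R x).det := isUnit_iff_ne_zero.mpr h
  have hev : ∀ᶠ z in 𝓝 x, (R z).det ≠ 0 :=
    hR.det_adj.continuousAt.eventually_ne h
  have h0 : R' * (R x)⁻¹ + R x * G = 0 := by
    ext i j
    refine (hmul i j).unique ?_
    refine (hasDerivAt_const x ((1 : Matrix n n ℝ) i j)).congr_of_eventuallyEq ?_
    filter_upwards [hev] with z hz
    rw [Matrix.mul_nonsing_inv _ (isUnit_iff_ne_zero.mpr hz)]
  have : G = -((R x)⁻¹ * R' * (R x)⁻¹) := by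
    have h2 : (R x)⁻¹ * (R' * (R x)⁻¹ + R x * G) = 0 := by rw [h0, mul_zero]
    rw [mul_add, ← mul_assoc, ← mul_assoc, Matrix.nonsing_inv_mul _ hu, one_mul] at h2
    exact eq_neg_of_add_eq_zero_right h2
  rw [← this]
  exact hG

/-- all columns but the last of `D` vanish -/
theorem rank_one_sq {N : ℕ} (D : Matrix (Fin N) (Fin N) ℝ)
    (hD : ∀ i j : Fin N, j.val + 1 < N → D i j = 0) (X : Matrix (Fin N) (Fin N) ℝ) :
    D * X * D = (D * X).trace • D := by
  rcases N with _ | N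
  · ext i; exact i.elim0
  have hD' : ∀ i j, j ≠ Fin.last N → D i j = 0 := by
    intro i j hj
    apply hD
    have := Fin.val_lt_last hj
    omega
  have hl : ∀ Y : Matrix (Fin (N+1)) (Fin (N+1)) ℝ, ∀ i j, (D * Y) i j = D i (Fin.last N) * Y (Fin.last N) j := by
    intro Y i j
    rw [Matrix.mul_apply]
    refine Finset.sum_eq_single _ (fun b _ hb => ?_) (by simp)
    rw [hD' i b hb, zero_mul]
  ext i j
  rw [mul_assoc, hl, Matrix.mul_apply, Matrix.smul_apply, smul_eq_mul, Matrix.trace]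
  simp only [Matrix.diag, hl]
  by_cases hj : j = Fin.last N
  · subst hj
    rw [mul_comm]
    congr 1
    exact Finset.sum_congr rfl fun _ _ => mul_comm _ _
  · simp [hD' _ j hj]

theorem rank_one_det {N : ℕ} (D X : Matrix (Fin N) (Fin N) ℝ)
    (hD : ∀ i j : Fin N, j.val + 1 < N → D i j = 0) :
    (1 - X * D).det = 1 - (X * D).trace := by
  rcases N with _ | N
  · simp [Matrix.trace]
  have hD' : ∀ i j, j ≠ Fin.last N → D i j = 0 := by
    intro i j hj
    apply hD
    have := Fin.val_lt_last hj
    omega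
  set u : Fin (N+1) → ℝ := fun i => - (X * D) i (Fin.last N) with hu
  have h1 : - (X * D) = Matrix.replicateCol Unit u * Matrix.replicateRow Unit (Pi.single (Fin.last N) (1:ℝ)) := by
    ext i j
    simp only [Matrix.mul_apply, Matrix.neg_apply, Matrix.replicateCol_apply, Matrix.replicateRow_apply,
      Finset.univ_unique, Finset.sum_singleton]
    by_cases hj : j = Fin.last N
    · subst hj
      simp [hu, Matrix.mul_apply]
    · simp [hD' _ j hj, hj]
  have h2 : (X * D).trace = - u (Fin.last N) := by
    have : (-(X*D)).trace = u (Fin.last N) := by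
      rw [h1, Matrix.trace_mul_comm]
      simp [Matrix.trace, Matrix.mul_apply, Pi.single_apply]
    rw [Matrix.trace_neg] at this
    linarith
  rw [sub_eq_add_neg, h1, Matrix.det_one_add_replicateCol_mul_replicateRow, h2]
  simp

theorem tr_e1 {N : ℕ} (A B : Matrix (Fin N) (Fin N) ℝ) :
    (A * B * A).trace = (A * A * B).trace := by
  rw [Matrix.trace_mul_comm (A * B), ← mul_assoc]

theorem tr_e2 {N : ℕ} (A B : Matrix (Fin N) (Fin N) ℝ) :
    (A * A * B).trace = (B * A * A).trace := by
  rw [Matrix.trace_mul_comm (A * A), ← mul_assoc]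

theorem xders {N : ℕ} (R S : ℝ → Matrix (Fin N) (Fin N) ℝ) (Q : Matrix (Fin N) (Fin N) ℝ)
    (hR : ∀ x, MD R (S x) x) (hS : ∀ x, MD S (Q * R x) x) (x : ℝ) (h : (R x).det ≠ 0)
    (C C1 : Matrix (Fin N) (Fin N) ℝ) (hC : C = (R x)⁻¹ * S x)
    (hC1 : C1 = (R x)⁻¹ * Q * R x - C * C) :
    deriv (fun x => (R x).det) x = (R x).det * C.trace ∧
    deriv (deriv (fun x => (R x).det)) x = (R x).det * (C1.trace + C.trace ^ 2) ∧
    deriv (deriv (deriv (fun x => (R x).det))) x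
      = (R x).det * (-2 * (C * C1).trace + 3 * C.trace * C1.trace + C.trace ^ 3) := by
  set r : ℝ → ℝ := fun x => (R x).det with hr
  set u : ℝ → ℝ := fun x => ((R x)⁻¹ * S x).trace with hu
  set v : ℝ → ℝ := fun x => Q.trace - (((R x)⁻¹ * S x) * ((R x)⁻¹ * S x)).trace with hv
  have dr : ∀ z, r z ≠ 0 → HasDerivAt r (r z * u z) z := fun z hz => (hR z).det hz
  have dC : ∀ z, r z ≠ 0 → MD (fun x => (R x)⁻¹ * S x)
      ((R z)⁻¹ * Q * R z - ((R z)⁻¹ * S z) * ((R z)⁻¹ * S z)) z := by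
    intro z hz
    have := ((hR z).inv hz).mul (hS z)
    convert this using 1
    noncomm_ring
  have trQ : ∀ z, r z ≠ 0 → ((R z)⁻¹ * Q * R z).trace = Q.trace := by
    intro z hz
    rw [Matrix.trace_mul_comm, ← mul_assoc, Matrix.mul_nonsing_inv _ (isUnit_iff_ne_zero.mpr hz),
      one_mul]
  have du : ∀ z, r z ≠ 0 → HasDerivAt u (v z) z := by
    intro z hz
    convert (dC z hz).trace using 1
    rw [Matrix.trace_sub, trQ z hz]
  have dv : ∀ z, r z ≠ 0 → HasDerivAt v (-2 * (((R z)⁻¹ * S z) *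
      ((R z)⁻¹ * Q * R z - ((R z)⁻¹ * S z) * ((R z)⁻¹ * S z))).trace) z := by
    intro z hz
    refine (((dC z hz).mul (dC z hz)).trace.const_sub Q.trace).congr_deriv ?_
    rw [Matrix.trace_add, Matrix.trace_mul_comm (_ - _)]
    ring
  have hc : Continuous r := continuous_iff_continuousAt.mpr fun z => (hR z).det_adj.continuousAt
  have hopen : IsOpen {z | r z ≠ 0} := isOpen_ne_fun hc continuous_const
  have d1 : ∀ z, r z ≠ 0 → deriv r z = r z * u z := fun z hz => (dr z hz).deriv
  have d2' : ∀ z, r z ≠ 0 → HasDerivAt (deriv r) (r z * (v z + u z ^ 2)) z := by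
    intro z hz
    have := (dr z hz).mul (du z hz)
    refine HasDerivAt.congr_of_eventuallyEq ?_ (eventually_of_mem (hopen.mem_nhds hz) d1)
    refine this.congr_deriv ?_
    ring
  have d2 : ∀ z, r z ≠ 0 → deriv (deriv r) z = r z * (v z + u z ^ 2) := fun z hz => (d2' z hz).deriv
  have hvx : v x = C1.trace := by rw [hC1, Matrix.trace_sub, trQ x h, hC]
  have hux : u x = C.trace := by rw [hC]
  refine ⟨by rw [d1 x h, hux], by rw [d2 x h, hux, hvx], ?_⟩
  have := (dr x h).mul ((dv x h).add ((du x h).pow 2))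
  rw [← hC, ← hC1] at this
  have h3 : HasDerivAt (deriv (deriv r)) _ x :=
    this.congr_of_eventuallyEq (eventually_of_mem (hopen.mem_nhds h) d2)
  rw [h3.deriv]
  simp only [Pi.add_apply, Pi.pow_apply, hvx, hux]
  push_cast
  ring

theorem trace_core {N : ℕ} (C C' : Matrix (Fin N) (Fin N) ℝ)
    (hD : ∀ i j : Fin N, j.val + 1 < N → (C' - C) i j = 0) :
    (C * C').trace * 2 - (C * C).trace - (C' * C').trace + (C'.trace - C.trace) ^ 2 = 0 ∧
    -(C * C * C).trace + 3 * (C * C * C').trace - 3 * (C * C' * C').trace + (C' * C' * C').trace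
      = (C'.trace - C.trace) ^ 3 := by
  have h1 := rank_one_sq (C' - C) hD 1
  have h2 : ((C' - C) * (C' - C)).trace = (C'.trace - C.trace) ^ 2 := by
    rw [mul_one] at h1
    rw [h1, Matrix.trace_smul, Matrix.trace_sub, smul_eq_mul]; ring
  have h3 : ((C' - C) * (C' - C) * (C' - C)).trace = (C'.trace - C.trace) ^ 3 := by
    rw [mul_one] at h1
    rw [h1, Matrix.smul_mul, h1, Matrix.trace_smul, Matrix.trace_smul, Matrix.trace_sub, smul_eq_mul,
      smul_eq_mul]; ring
  have c1 := Matrix.trace_mul_comm C' C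
  have e1 : (C * C' * C).trace = (C * C * C').trace := tr_e1 _ _
  have e2 : (C' * C * C).trace = (C * C * C').trace := (tr_e2 _ _).symm
  have e3 : (C' * C * C').trace = (C * C' * C').trace := (tr_e1 _ _).trans (tr_e2 _ _)
  have e4 : (C' * C' * C).trace = (C * C' * C').trace := tr_e2 _ _
  simp only [sub_mul, mul_sub, Matrix.trace_sub] at h2 h3
  constructor
  · linarith
  · linarith

theorem bilin_x {N : ℕ} (R S : ℝ → Matrix (Fin N) (Fin N) ℝ) (Q : Matrix (Fin N) (Fin N) ℝ)
    (hR : ∀ x, MD R (S x) x) (hS : ∀ x, MD S (Q * R x) x) (x : ℝ)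
    (hr : (R x).det ≠ 0) (hq : (S x).det ≠ 0)
    (hsh : ∀ i j : Fin N, j.val + 1 < N → ((S x)⁻¹ * (Q * R x) - (R x)⁻¹ * S x) i j = 0)
    (r q : ℝ → ℝ) (hr' : r = fun x => (R x).det) (hq' : q = fun x => (S x).det)
    (rt qt : ℝ) (hrt : rt = r x * ((R x)⁻¹ * ((4:ℝ) • (Q * S x))).trace)
    (hqt : qt = q x * ((S x)⁻¹ * ((4:ℝ) • (Q * Q * R x))).trace) :
    deriv (deriv r) x * q x - 2 * deriv r x * deriv q x + r x * deriv (deriv q) x = 0 ∧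
    (deriv (deriv (deriv r)) x * q x - 3 * deriv (deriv r) x * deriv q x
      + 3 * deriv r x * deriv (deriv q) x - r x * deriv (deriv (deriv q)) x)
      - (rt * q x - r x * qt) = 0 := by
  have hQR : ∀ x, MD (fun x => Q * R x) (Q * S x) x := by
    intro x
    have := MD.mul (R := fun _ => Q) (R' := 0) (fun i j => hasDerivAt_const x _) (hR x)
    simpa using this
  obtain ⟨a1, a2, a3⟩ := xders R S Q hR hS x hr _ _ rfl rfl
  obtain ⟨b1, b2, b3⟩ := xders S (fun x => Q * R x) Q hS hQR x hq _ _ rfl rfl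
  have hRu := isUnit_iff_ne_zero.mpr hr
  have hSu := isUnit_iff_ne_zero.mpr hq
  set C := (R x)⁻¹ * S x with hC
  set C' := (S x)⁻¹ * (Q * R x) with hC'
  have k1 : (R x)⁻¹ * Q * R x = C * C' := by
    rw [hC, hC', mul_assoc (R x)⁻¹ (S x), ← mul_assoc (S x), Matrix.mul_nonsing_inv _ hSu, one_mul, mul_assoc]
  have k2 : (S x)⁻¹ * Q * S x = C' * C := by
    rw [hC, hC', mul_assoc _ (Q * R x), mul_assoc Q, ← mul_assoc (R x), Matrix.mul_nonsing_inv _ hRu, one_mul, mul_assoc]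
  have k3 : (R x)⁻¹ * (Q * S x) = C * C' * C := by
    rw [← k1, hC, mul_assoc _ (R x), ← mul_assoc (R x), Matrix.mul_nonsing_inv _ hRu, one_mul, mul_assoc]
  have k4 : (S x)⁻¹ * (Q * Q * R x) = C' * C * C' := by
    rw [← k2, hC', mul_assoc _ (S x), ← mul_assoc (S x), Matrix.mul_nonsing_inv _ hSu, one_mul]
    simp only [mul_assoc]
  obtain ⟨t1, t2⟩ := trace_core C C' hsh
  rw [Matrix.mul_smul, k3, Matrix.trace_smul, smul_eq_mul] at hrt
  rw [Matrix.mul_smul, k4, Matrix.trace_smul, smul_eq_mul] at hqt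
  have c1 := Matrix.trace_mul_comm C' C
  have e1 : (C * C' * C).trace = (C * C * C').trace := tr_e1 _ _
  have e3 : (C' * C * C').trace = (C * C' * C').trace := (tr_e1 _ _).trans (tr_e2 _ _)
  have e5 : (C' * C' * C).trace = (C * C' * C').trace := tr_e2 _ _
  rw [k1] at a2 a3
  rw [k2] at b2 b3
  simp only [mul_sub, Matrix.trace_sub, ← mul_assoc] at a2 a3 b2 b3
  rw [← hr'] at a1 a2 a3
  rw [← hq'] at b1 b2 b3
  have hrx : r x = (R x).det := by rw [hr']
  have hqx : q x = (S x).det := by rw [hq']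
  rw [hrx] at hrt ⊢
  rw [hqx] at hqt ⊢
  rw [a3, b3, a2, b2, a1, b1, hrt, hqt, e1, e3, e5, c1]
  constructor
  · linear_combination (R x).det * (S x).det * t1
  · linear_combination (R x).det * (S x).det * (-3 * (C'.trace - C.trace) * t1 -2 * t2)

theorem bilin_xy {N : ℕ} (R S : Matrix (Fin N) (Fin N) ℝ) (Q : Matrix (Fin N) (Fin N) ℝ)
    (hr : R.det ≠ 0) (hq : S.det ≠ 0) (hQ : Q.det ≠ 0)
    (hsh : ∀ i j : Fin N, j.val + 1 < N → (S⁻¹ * (Q * R) - R⁻¹ * S) i j = 0) :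
    (-(R⁻¹ * (Q⁻¹ * S) * R⁻¹) * S + R⁻¹ * R).trace = 1 - S.det ^ 2 / (Q.det * R.det ^ 2) := by
  have hRu := isUnit_iff_ne_zero.mpr hr
  have hSu := isUnit_iff_ne_zero.mpr hq
  have hQu := isUnit_iff_ne_zero.mpr hQ
  set X := R⁻¹ * Q⁻¹ * S with hX
  have hX1 : X * (S⁻¹ * (Q * R)) = 1 := by
    rw [hX, mul_assoc _ S, ← mul_assoc S, Matrix.mul_nonsing_inv _ hSu, one_mul, mul_assoc, ← mul_assoc Q⁻¹,
      Matrix.nonsing_inv_mul _ hQu, one_mul, Matrix.nonsing_inv_mul _ hRu]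
  have h := rank_one_det _ X hsh
  have h2 : 1 - X * (S⁻¹ * (Q * R) - R⁻¹ * S) = X * (R⁻¹ * S) := by
    rw [mul_sub, hX1]; abel
  rw [h2] at h
  have h3 : -(R⁻¹ * (Q⁻¹ * S) * R⁻¹) * S + R⁻¹ * R = X * (S⁻¹ * (Q * R) - R⁻¹ * S) := by
    rw [mul_sub, hX1, Matrix.nonsing_inv_mul _ hRu, hX]; noncomm_ring
  rw [h3]
  have h4 : (X * (R⁻¹ * S)).det = S.det ^ 2 / (Q.det * R.det ^ 2) := by
    rw [hX]
    simp only [Matrix.det_mul, Matrix.det_nonsing_inv, Ring.inverse_eq_inv']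
    field_simp
  linarith

noncomputable def ff (a b p : ℝ) (n : ℤ) (x t y : ℝ) : ℝ :=
  a * p ^ n * Real.exp (p * x + 4 * p ^ 3 * t + y / p)
        + b * (-p) ^ n * Real.exp (-(p * x + 4 * p ^ 3 * t + y / p))

theorem ff_add (a b p : ℝ) (hp : p ≠ 0) (n : ℤ) (x t y : ℝ) :
    ff a b p (n + 2) x t y = p ^ 2 * ff a b p n x t y := by
  unfold ff
  rw [zpow_add₀ hp, zpow_add₀ (neg_ne_zero.mpr hp)]
  norm_cast
  ring

theorem ff_x (a b p : ℝ) (hp : p ≠ 0) (n : ℤ) (x t y : ℝ) :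
    HasDerivAt (fun x => ff a b p n x t y) (ff a b p (n + 1) x t y) x := by
  unfold ff
  have h : HasDerivAt (fun x => p * x + 4 * p ^ 3 * t + y / p) p x := by
    simpa using (((hasDerivAt_id x).const_mul p).add_const (4 * p ^ 3 * t)).add_const (y / p)
  refine ((h.exp.const_mul (a * p ^ n)).add (h.neg.exp.const_mul (b * (-p) ^ n))).congr_deriv ?_
  rw [zpow_add₀ hp, zpow_add₀ (neg_ne_zero.mpr hp), zpow_one, zpow_one]
  simp only [Pi.neg_apply]
  ring

theorem ff_t (a b p : ℝ) (hp : p ≠ 0) (n : ℤ) (x t y : ℝ) :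
    HasDerivAt (fun t => ff a b p n x t y) (4 * (p ^ 2 * ff a b p (n + 1) x t y)) t := by
  unfold ff
  have h : HasDerivAt (fun t => p * x + 4 * p ^ 3 * t + y / p) (4 * p ^ 3) t := by
    simpa using (((hasDerivAt_id t).const_mul (4 * p ^ 3)).const_add (p * x)).add_const (y / p)
  refine ((h.exp.const_mul (a * p ^ n)).add (h.neg.exp.const_mul (b * (-p) ^ n))).congr_deriv ?_
  rw [zpow_add₀ hp, zpow_add₀ (neg_ne_zero.mpr hp), zpow_one, zpow_one]
  simp only [Pi.neg_apply]
  ring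

theorem ff_y (a b p : ℝ) (hp : p ≠ 0) (n : ℤ) (x t y : ℝ) :
    HasDerivAt (fun y => ff a b p n x t y) ((p ^ 2)⁻¹ * ff a b p (n + 1) x t y) y := by
  unfold ff
  have h : HasDerivAt (fun y => p * x + 4 * p ^ 3 * t + y / p) (1 / p) y := by
    simpa using ((hasDerivAt_id y).div_const p).const_add (p * x + 4 * p ^ 3 * t)
  refine ((h.exp.const_mul (a * p ^ n)).add (h.neg.exp.const_mul (b * (-p) ^ n))).congr_deriv ?_
  rw [zpow_add₀ hp, zpow_add₀ (neg_ne_zero.mpr hp), zpow_one, zpow_one]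
  simp only [Pi.neg_apply]
  field_simp

noncomputable def MM {N : ℕ} (α β p : Fin N → ℝ) (m : ℤ) (x t y : ℝ) :
    Matrix (Fin N) (Fin N) ℝ :=
  Matrix.of fun i j : Fin N => ff (α i) (β i) (p i) (m + (j.val : ℤ)) x t y

noncomputable def rh {N : ℕ} (α β p : Fin N → ℝ) (m : ℤ) (x t y : ℝ) : ℝ :=
  (MM α β p m x t y).det

theorem MM_add {N : ℕ} (α β p : Fin N → ℝ) (hp : ∀ i, p i ≠ 0) (m : ℤ) (x t y : ℝ) :
    MM α β p (m + 2) x t y = Matrix.diagonal (fun i => p i ^ 2) * MM α β p m x t y := by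
  ext i j
  rw [Matrix.diagonal_mul]
  simp only [MM, Matrix.of_apply]
  rw [← ff_add _ _ _ (hp i)]
  congr 1
  ring

theorem rh_add {N : ℕ} (α β p : Fin N → ℝ) (hp : ∀ i, p i ≠ 0) (m : ℤ) (x t y : ℝ) :
    rh α β p (m + 2) x t y = (∏ i, p i ^ 2) * rh α β p m x t y := by
  rw [rh, MM_add _ _ _ hp, Matrix.det_mul, Matrix.det_diagonal, rh]

theorem MM_x {N : ℕ} (α β p : Fin N → ℝ) (hp : ∀ i, p i ≠ 0) (m : ℤ) (x t y : ℝ) :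
    MD (fun x => MM α β p m x t y) (MM α β p (m + 1) x t y) x := by
  intro i j
  simp only [MM, Matrix.of_apply]
  convert ff_x _ _ _ (hp i) _ _ _ _ using 2
  ring

theorem MM_t {N : ℕ} (α β p : Fin N → ℝ) (hp : ∀ i, p i ≠ 0) (m : ℤ) (x t y : ℝ) :
    MD (fun t => MM α β p m x t y)
      ((4 : ℝ) • (Matrix.diagonal (fun i => p i ^ 2) * MM α β p (m + 1) x t y)) t := by
  intro i j
  rw [Matrix.smul_apply, Matrix.diagonal_mul, smul_eq_mul]
  simp only [MM, Matrix.of_apply]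
  rw [add_right_comm]
  exact ff_t _ _ _ (hp i) _ _ _ _

theorem MM_y {N : ℕ} (α β p : Fin N → ℝ) (hp : ∀ i, p i ≠ 0) (m : ℤ) (x t y : ℝ) :
    MD (fun y => MM α β p m x t y)
      ((Matrix.diagonal (fun i => p i ^ 2))⁻¹ * MM α β p (m + 1) x t y) y := by
  intro i j
  have : (Matrix.diagonal (fun i => p i ^ 2))⁻¹ = Matrix.diagonal (fun i => (p i ^ 2)⁻¹) := by
    refine Matrix.inv_eq_right_inv ?_
    rw [Matrix.diagonal_mul_diagonal, ← Matrix.diagonal_one]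
    congr 1
    ext i
    exact mul_inv_cancel₀ (pow_ne_zero 2 (hp i))
  rw [this, Matrix.diagonal_mul]
  simp only [MM, Matrix.of_apply]
  rw [add_right_comm]
  exact ff_y _ _ _ (hp i) _ _ _ _

theorem MM_shift {N : ℕ} (α β p : Fin N → ℝ) (m : ℤ) (x t y : ℝ)
    (h : (MM α β p m x t y).det ≠ 0) (i j : Fin N) (hj : j.val + 1 < N) :
    ((MM α β p m x t y)⁻¹ * MM α β p (m + 1) x t y) i j
      = (1 : Matrix (Fin N) (Fin N) ℝ) i ⟨j.val + 1, hj⟩ := by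
  rw [← Matrix.nonsing_inv_mul _ (isUnit_iff_ne_zero.mpr h), Matrix.mul_apply, Matrix.mul_apply]
  refine Finset.sum_congr rfl fun l _ => ?_
  congr 1
  simp only [MM, Matrix.of_apply]
  congr 1
  push_cast
  ring

theorem generic {N : ℕ} (α β p : Fin N → ℝ) (hp : ∀ i, p i ≠ 0) (m : ℤ) (x t y : ℝ)
    (hr : rh α β p m x t y ≠ 0) (hq : rh α β p (m + 1) x t y ≠ 0)
    (r q : ℝ → ℝ → ℝ → ℝ) (hr' : r = rh α β p m) (hq' : q = rh α β p (m + 1)) :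
    ((∏ i, p i ^ 2) * (r x t y * deriv (fun y' => deriv (fun x' => r x' t y') x) y
      - deriv (fun x' => r x' t y) x * deriv (fun y' => r x t y') y)
      - ((∏ i, p i ^ 2) * r x t y ^ 2 - q x t y ^ 2) = 0) ∧
    (deriv (fun x' => deriv (fun x'' => r x'' t y) x') x * q x t y
        - 2 * deriv (fun x' => r x' t y) x * deriv (fun x' => q x' t y) x
        + r x t y * deriv (fun x' => deriv (fun x'' => q x'' t y) x') x
      = 0) ∧
    ((deriv (fun x' => deriv (fun x'' => deriv (fun s => r s t y) x'') x') x * q x t y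
        - 3 * deriv (fun x' => deriv (fun x'' => r x'' t y) x') x
            * deriv (fun x' => q x' t y) x
        + 3 * deriv (fun x' => r x' t y) x
            * deriv (fun x' => deriv (fun x'' => q x'' t y) x') x
        - r x t y * deriv (fun x' => deriv (fun x'' => deriv (fun s => q s t y) x'') x') x)
        - (deriv (fun t' => r x t' y) t * q x t y - r x t y * deriv (fun t' => q x t' y) t)
      = 0) := by
  subst hr' hq'
  have hS : ∀ m x t y, MM α β p (m + 1 + 1) x t y
      = Matrix.diagonal (fun i => p i ^ 2) * MM α β p m x t y := by
    intro m x t y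
    rw [← MM_add _ _ _ hp]
    congr 1
    ring
  have hsh : ∀ i j : Fin N, j.val + 1 < N → ((MM α β p (m + 1) x t y)⁻¹ *
      (Matrix.diagonal (fun i => p i ^ 2) * MM α β p m x t y)
      - (MM α β p m x t y)⁻¹ * MM α β p (m + 1) x t y) i j = 0 := by
    intro i j hj
    rw [← hS, Matrix.sub_apply, MM_shift _ _ _ _ _ _ _ hr _ _ hj, MM_shift _ _ _ _ _ _ _ hq _ _ hj,
      sub_self]
  have hQ : (Matrix.diagonal (fun i => p i ^ 2)).det ≠ 0 := by
    rw [Matrix.det_diagonal]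
    exact Finset.prod_ne_zero_iff.mpr fun i _ => pow_ne_zero 2 (hp i)
  refine ⟨?_, bilin_x (fun x => MM α β p m x t y) (fun x => MM α β p (m + 1) x t y)
    (Matrix.diagonal (fun i => p i ^ 2)) (fun x => MM_x _ _ _ hp _ _ _ _) ?_ x hr hq hsh _ _ rfl rfl
    _ _ ?_ ?_⟩
  · have hry : HasDerivAt (fun y' => rh α β p m x t y') _ y := (MM_y α β p hp m x t y).det hr
    have hrx : ∀ y', rh α β p m x t y' ≠ 0 → deriv (fun x' => rh α β p m x' t y') x
        = rh α β p m x t y' * ((MM α β p m x t y')⁻¹ * MM α β p (m + 1) x t y').trace :=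
      fun y' hy => ((MM_x α β p hp m x t y').det hy).deriv
    have hSy : MD (fun y => MM α β p (m + 1) x t y) (MM α β p m x t y) y := by
      have := MM_y α β p hp (m + 1) x t y
      rwa [hS, ← mul_assoc, Matrix.nonsing_inv_mul _ (isUnit_iff_ne_zero.mpr hQ), one_mul] at this
    have hu := (((MM_y α β p hp m x t y).inv hr).mul hSy).trace
    rw [bilin_xy _ _ _ hr hq hQ hsh] at hu
    have h2 : deriv (fun y' => deriv (fun x' => rh α β p m x' t y') x) y = _ :=
      ((hry.mul hu).congr_of_eventuallyEq
        ((hry.continuousAt.eventually_ne hr).mono hrx)).deriv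
    rw [h2, hrx y hr, hry.deriv]
    rw [Matrix.det_diagonal] at *
    simp only [rh] at *
    field_simp
    ring
  · intro x
    rw [← hS]
    exact MM_x _ _ _ hp _ _ _ _
  · exact ((MM_t α β p hp m x t y).det hr).deriv
  · have := ((MM_t α β p hp (m + 1) x t y).det hq).deriv
    rw [hS, ← mul_assoc] at this
    exact this

open scoped ContDiff

/-- joint analyticity of a function of four real variables -/
def CD (G : ℝ → ℝ → ℝ → ℝ → ℝ) : Prop :=
  ContDiff ℝ ω (fun z : ℝ × ℝ × ℝ × ℝ => G z.1 z.2.1 z.2.2.1 z.2.2.2)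

theorem CD.dx {G : ℝ → ℝ → ℝ → ℝ → ℝ} (h : CD G) :
    CD (fun s x t y => deriv (fun x' => G s x' t y) x) := by
  have h1 : ContDiff ℝ ω (fun z => fderiv ℝ (fun z : ℝ × ℝ × ℝ × ℝ => G z.1 z.2.1 z.2.2.1 z.2.2.2) z
    (0, 1, 0, 0)) := (ContDiff.fderiv_right h (by simp)).clm_apply contDiff_const
  unfold CD
  convert h1 using 2 with z
  obtain ⟨s, x, t, y⟩ := z
  have hd := ((ContDiff.differentiable h (by simp)) (s, x, t, y)).hasFDerivAt
  have hc : HasDerivAt (fun x' : ℝ => ((s, x', t, y) : ℝ × ℝ × ℝ × ℝ)) (0, 1, 0, 0) x :=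
    (hasDerivAt_const x s).prodMk ((hasDerivAt_id x).prodMk
      ((hasDerivAt_const x t).prodMk (hasDerivAt_const x y)))
  exact (hd.comp_hasDerivAt x hc).deriv

theorem CD.dt {G : ℝ → ℝ → ℝ → ℝ → ℝ} (h : CD G) :
    CD (fun s x t y => deriv (fun t' => G s x t' y) t) := by
  have h1 : ContDiff ℝ ω (fun z => fderiv ℝ (fun z : ℝ × ℝ × ℝ × ℝ => G z.1 z.2.1 z.2.2.1 z.2.2.2) z
    (0, 0, 1, 0)) := (ContDiff.fderiv_right h (by simp)).clm_apply contDiff_const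
  unfold CD
  convert h1 using 2 with z
  obtain ⟨s, x, t, y⟩ := z
  have hd := ((ContDiff.differentiable h (by simp)) (s, x, t, y)).hasFDerivAt
  have hc : HasDerivAt (fun t' : ℝ => ((s, x, t', y) : ℝ × ℝ × ℝ × ℝ)) (0, 0, 1, 0) t :=
    (hasDerivAt_const t s).prodMk ((hasDerivAt_const t x).prodMk
      ((hasDerivAt_id t).prodMk (hasDerivAt_const t y)))
  exact (hd.comp_hasDerivAt t hc).deriv

theorem CD.dy {G : ℝ → ℝ → ℝ → ℝ → ℝ} (h : CD G) :
    CD (fun s x t y => deriv (fun y' => G s x t y') y) := by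
  have h1 : ContDiff ℝ ω (fun z => fderiv ℝ (fun z : ℝ × ℝ × ℝ × ℝ => G z.1 z.2.1 z.2.2.1 z.2.2.2) z
    (0, 0, 0, 1)) := (ContDiff.fderiv_right h (by simp)).clm_apply contDiff_const
  unfold CD
  convert h1 using 2 with z
  obtain ⟨s, x, t, y⟩ := z
  have hd := ((ContDiff.differentiable h (by simp)) (s, x, t, y)).hasFDerivAt
  have hc : HasDerivAt (fun y' : ℝ => ((s, x, t, y') : ℝ × ℝ × ℝ × ℝ)) (0, 0, 0, 1) y :=
    (hasDerivAt_const y s).prodMk ((hasDerivAt_const y x).prodMk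
      ((hasDerivAt_const y t).prodMk (hasDerivAt_id y)))
  exact (hd.comp_hasDerivAt y hc).deriv

theorem CD.slice {G : ℝ → ℝ → ℝ → ℝ → ℝ} (h : CD G) (x t y : ℝ) :
    ContDiff ℝ ω (fun s => G s x t y) :=
  ContDiff.comp (g := fun z : ℝ × ℝ × ℝ × ℝ => G z.1 z.2.1 z.2.2.1 z.2.2.2)
    (f := fun s => (s, x, t, y)) h (by fun_prop)

theorem CD.cont {G : ℝ → ℝ → ℝ → ℝ → ℝ} (h : CD G) (x t y : ℝ) :
    Continuous (fun s => G s x t y) := (h.slice x t y).continuous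

noncomputable def aS {N : ℕ} (α : Fin N → ℝ) (s : ℝ) (i : Fin N) : ℝ := α i + s * (1 - α i)
noncomputable def bS {N : ℕ} (β : Fin N → ℝ) (s : ℝ) (i : Fin N) : ℝ := (1 - s) * β i
noncomputable def pS {N : ℕ} (p : Fin N → ℝ) (s : ℝ) (i : Fin N) : ℝ :=
  p i * Real.exp (s * Real.log (((i.val : ℝ) + 1) / |p i|))

theorem pS_ne {N : ℕ} (p : Fin N → ℝ) (hp : ∀ i, p i ≠ 0) (s : ℝ) (i : Fin N) : pS p s i ≠ 0 :=
  mul_ne_zero (hp i) (Real.exp_ne_zero _)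

theorem pS_inj {N : ℕ} (p : Fin N → ℝ) (hp : ∀ i, p i ≠ 0) : Function.Injective (pS p 1) := by
  have h : ∀ i, |pS p 1 i| = (i.val : ℝ) + 1 := by
    intro i
    have h0 : 0 < |p i| := abs_pos.mpr (hp i)
    have h1 : (0:ℝ) < (i.val : ℝ) + 1 := by positivity
    rw [pS, one_mul, Real.exp_log (by positivity), abs_mul, abs_of_pos (by positivity :
      0 < ((i.val : ℝ) + 1) / |p i|)]
    field_simp
  intro i j hij
  have := h i
  rw [hij, h j] at this
  ext
  have h2 : (j.val : ℝ) = i.val := by linarith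
  exact_mod_cast h2.symm

theorem rh_one_ne {N : ℕ} (α β p : Fin N → ℝ) (hp : ∀ i, p i ≠ 0) (m : ℤ) (x t y : ℝ) :
    rh (aS α 1) (bS β 1) (pS p 1) m x t y ≠ 0 := by
  have h : MM (aS α 1) (bS β 1) (pS p 1) m x t y = Matrix.of fun i j => (pS p 1 i ^ m *
      Real.exp (pS p 1 i * x + 4 * pS p 1 i ^ 3 * t + y / pS p 1 i))
      * Matrix.vandermonde (pS p 1) i j := by
    ext i j
    simp only [MM, Matrix.of_apply, ff, aS, bS, Matrix.vandermonde_apply]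
    rw [zpow_add₀ (pS_ne p hp 1 i), zpow_natCast]
    ring
  rw [rh, h, Matrix.det_mul_column]
  refine mul_ne_zero (Finset.prod_ne_zero_iff.mpr fun i _ => ?_)
    (Matrix.det_vandermonde_ne_zero_iff.mpr (pS_inj p hp))
  exact mul_ne_zero (zpow_ne_zero _ (pS_ne p hp 1 i)) (Real.exp_ne_zero _)

theorem exp_zp (x : ℝ) (n : ℤ) : Real.exp ((n : ℝ) * x) = Real.exp x ^ n := by
  rw [mul_comm, Real.exp_mul, Real.rpow_intCast]

theorem rh_CD {N : ℕ} (α β p : Fin N → ℝ) (hp : ∀ i, p i ≠ 0) (m : ℤ) :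
    CD (fun s x t y => rh (aS α s) (bS β s) (pS p s) m x t y) := by
  unfold CD rh
  simp only [Matrix.det_apply']
  refine ContDiff.sum fun σ _ => contDiff_const.mul (contDiff_prod fun i _ => ?_)
  simp only [MM, Matrix.of_apply, ff, aS, bS, pS, ← neg_mul]
  simp only [mul_zpow, ← exp_zp, div_eq_mul_inv, mul_inv, ← Real.exp_neg]
  fun_prop

theorem all_bilin {N : ℕ} (α β p : Fin N → ℝ) (hp : ∀ i, p i ≠ 0) (m : ℤ) (x t y : ℝ)
    (r q : ℝ → ℝ → ℝ → ℝ) (hr' : r = rh α β p m) (hq' : q = rh α β p (m + 1)) :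
    ((∏ i, p i ^ 2) * (r x t y * deriv (fun y' => deriv (fun x' => r x' t y') x) y
      - deriv (fun x' => r x' t y) x * deriv (fun y' => r x t y') y)
      - ((∏ i, p i ^ 2) * r x t y ^ 2 - q x t y ^ 2) = 0) ∧
    (deriv (fun x' => deriv (fun x'' => r x'' t y) x') x * q x t y
        - 2 * deriv (fun x' => r x' t y) x * deriv (fun x' => q x' t y) x
        + r x t y * deriv (fun x' => deriv (fun x'' => q x'' t y) x') x
      = 0) ∧
    ((deriv (fun x' => deriv (fun x'' => deriv (fun s => r s t y) x'') x') x * q x t y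
        - 3 * deriv (fun x' => deriv (fun x'' => r x'' t y) x') x
            * deriv (fun x' => q x' t y) x
        + 3 * deriv (fun x' => r x' t y) x
            * deriv (fun x' => deriv (fun x'' => q x'' t y) x') x
        - r x t y * deriv (fun x' => deriv (fun x'' => deriv (fun s => q s t y) x'') x') x)
        - (deriv (fun t' => r x t' y) t * q x t y - r x t y * deriv (fun t' => q x t' y) t)
      = 0) := by
  have hev : ∀ m, ∀ᶠ s in 𝓝[≠] (0:ℝ), rh (aS α s) (bS β s) (pS p s) m x t y ≠ 0 := by
    intro m
    have han : AnalyticOnNhd ℝ (fun s => rh (aS α s) (bS β s) (pS p s) m x t y) Set.univ :=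
      contDiff_omega_iff_analyticOnNhd.mp ((rh_CD α β p hp m).slice x t y)
    by_contra hcon
    have hfr : ∃ᶠ s in 𝓝[≠] (0:ℝ), rh (aS α s) (bS β s) (pS p s) m x t y = 0 := by
      exact (Filter.not_eventually.mp hcon).mono fun s hs => not_not.mp hs
    exact rh_one_ne α β p hp m x t y
      (han.eqOn_zero_of_preconnected_of_frequently_eq_zero isPreconnected_univ (Set.mem_univ 0) hfr
        (Set.mem_univ 1))
  have key : ∀ E : ℝ → ℝ, Continuous E →
      (∀ s, rh (aS α s) (bS β s) (pS p s) m x t y ≠ 0 →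
        rh (aS α s) (bS β s) (pS p s) (m + 1) x t y ≠ 0 → E s = 0) → E 0 = 0 := by
    intro E hE h
    have h1 : Tendsto E (𝓝[≠] 0) (𝓝 (E 0)) := hE.continuousAt.tendsto.mono_left nhdsWithin_le_nhds
    have h2 : Tendsto E (𝓝[≠] 0) (𝓝 0) := by
      refine tendsto_const_nhds.congr' ?_
      filter_upwards [hev m, hev (m + 1)] with s a b
      exact (h s a b).symm
    exact tendsto_nhds_unique h1 h2
  have ea : aS α 0 = α := by ext i; simp [aS]
  have eb : bS β 0 = β := by ext i; simp [bS]
  have ep : pS p 0 = p := by ext i; simp [pS]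
  have cp : ∀ i, Continuous fun s => pS p s i := by
    intro i
    unfold pS
    fun_prop
  have cK : Continuous fun s => ∏ i, pS p s i ^ 2 :=
    continuous_finsetProd _ fun i _ => (cp i).pow 2
  have R := rh_CD α β p hp m
  have Q := rh_CD α β p hp (m + 1)
  have R0 := R.cont x t y
  have Q0 := Q.cont x t y
  have R1 := R.dx.cont x t y
  have Q1 := Q.dx.cont x t y
  have R2 := R.dx.dx.cont x t y
  have Q2 := Q.dx.dx.cont x t y
  have R3 := R.dx.dx.dx.cont x t y
  have Q3 := Q.dx.dx.dx.cont x t y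
  have Rt := R.dt.cont x t y
  have Qt := Q.dt.cont x t y
  have Ry := R.dy.cont x t y
  have Rxy := R.dx.dy.cont x t y
  subst hr' hq'
  refine ⟨?_, ?_, ?_⟩
  · have := key _ ((cK.mul ((R0.mul Rxy).sub (R1.mul Ry))).sub ((cK.mul (R0.pow 2)).sub (Q0.pow 2)))
      fun s a b => (generic _ _ _ (pS_ne p hp s) m x t y a b _ _ rfl rfl).1
    simpa only [Pi.sub_apply, Pi.mul_apply, Pi.add_apply, Pi.pow_apply, ea, eb, ep] using this
  · have := key _ (((R2.mul Q0).sub ((R1.const_mul 2).mul Q1)).add (R0.mul Q2))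
      fun s a b => (generic _ _ _ (pS_ne p hp s) m x t y a b _ _ rfl rfl).2.1
    simpa only [Pi.sub_apply, Pi.mul_apply, Pi.add_apply, Pi.pow_apply, ea, eb, ep] using this
  · have := key _ (((((R3.mul Q0).sub ((R2.const_mul 3).mul Q1)).add ((R1.const_mul 3).mul Q2)).sub
      (R0.mul Q3)).sub ((Rt.mul Q0).sub (R0.mul Qt)))
      fun s a b => (generic _ _ _ (pS_ne p hp s) m x t y a b _ _ rfl rfl).2.2
    simpa only [Pi.sub_apply, Pi.mul_apply, Pi.add_apply, Pi.pow_apply, ea, eb, ep] using this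

theorem rh_CD0 {N : ℕ} (α β p : Fin N → ℝ) (hp : ∀ i, p i ≠ 0) (m : ℤ) :
    CD (fun _ x t y => rh α β p m x t y) := by
  have h := rh_CD α β p hp m
  have ea : aS α 0 = α := by ext i; simp [aS]
  have eb : bS β 0 = β := by ext i; simp [bS]
  have ep : pS p 0 = p := by ext i; simp [pS]
  have := ContDiff.comp (f := fun z : ℝ × ℝ × ℝ × ℝ => ((0 : ℝ), z.2)) h (by fun_prop)
  unfold CD
  convert this using 2 with z
  simp only [Function.comp, ea, eb, ep]

theorem CD.hx {G : ℝ → ℝ → ℝ → ℝ → ℝ} (h : CD G) (s x t y : ℝ) :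
    HasDerivAt (fun x' => G s x' t y) (deriv (fun x' => G s x' t y) x) x := by
  have : ContDiff ℝ ω (fun x' => G s x' t y) :=
    ContDiff.comp (g := fun z : ℝ × ℝ × ℝ × ℝ => G z.1 z.2.1 z.2.2.1 z.2.2.2)
      (f := fun x' => (s, x', t, y)) h (by fun_prop)
  exact (this.differentiable (by simp) x).hasDerivAt

theorem CD.ht {G : ℝ → ℝ → ℝ → ℝ → ℝ} (h : CD G) (s x t y : ℝ) :
    HasDerivAt (fun t' => G s x t' y) (deriv (fun t' => G s x t' y) t) t := by
  have : ContDiff ℝ ω (fun t' => G s x t' y) :=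
    ContDiff.comp (g := fun z : ℝ × ℝ × ℝ × ℝ => G z.1 z.2.1 z.2.2.1 z.2.2.2)
      (f := fun t' => (s, x, t', y)) h (by fun_prop)
  exact (this.differentiable (by simp) t).hasDerivAt

theorem CD.hy {G : ℝ → ℝ → ℝ → ℝ → ℝ} (h : CD G) (s x t y : ℝ) :
    HasDerivAt (fun y' => G s x t y') (deriv (fun y' => G s x t y') y) y := by
  have : ContDiff ℝ ω (fun y' => G s x t y') :=
    ContDiff.comp (g := fun z : ℝ × ℝ × ℝ × ℝ => G z.1 z.2.1 z.2.2.1 z.2.2.2)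
      (f := fun y' => (s, x, t, y')) h (by fun_prop)
  exact (this.differentiable (by simp) y).hasDerivAt

theorem gx (c y : ℝ) {h : ℝ → ℝ} {h' x : ℝ} (hh : HasDerivAt h h' x) :
    HasDerivAt (fun x => c * Real.exp (-(x * y)) * h x) (c * Real.exp (-(x * y)) * (h' - y * h x)) x := by
  have h1 : HasDerivAt (fun x => -(x * y)) (-y) x := by
    exact ((hasDerivAt_id x).mul_const y).neg.congr_deriv (by ring)
  refine ((h1.exp.const_mul c).mul hh).congr_deriv ?_
  ring

theorem gy (c x : ℝ) {h : ℝ → ℝ} {h' y : ℝ} (hh : HasDerivAt h h' y) :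
    HasDerivAt (fun y => c * Real.exp (-(x * y)) * h y) (c * Real.exp (-(x * y)) * (h' - x * h y)) y := by
  have h1 : HasDerivAt (fun y => -(x * y)) (-x) y := by
    exact ((hasDerivAt_id y).const_mul x).neg.congr_deriv (by ring)
  refine ((h1.exp.const_mul c).mul hh).congr_deriv ?_
  ring

theorem tauGauge (c : ℝ) (r T : ℝ → ℝ → ℝ → ℝ) (hr : CD (fun _ => r))
    (hT : T = fun x t y => c * Real.exp (-(x * y)) * r x t y) (x t y e : ℝ)
    (he : e = c * Real.exp (-(x * y))) :
    T x t y = e * r x t y ∧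
    deriv (fun x' => T x' t y) x = e * (deriv (fun x' => r x' t y) x - y * r x t y) ∧
    deriv (fun x' => deriv (fun x'' => T x'' t y) x') x
      = e * (deriv (fun x' => deriv (fun x'' => r x'' t y) x') x - 2 * y * deriv (fun x' => r x' t y) x
        + y ^ 2 * r x t y) ∧
    deriv (fun x' => deriv (fun x'' => deriv (fun s => T s t y) x'') x') x
      = e * (deriv (fun x' => deriv (fun x'' => deriv (fun s => r s t y) x'') x') x
        - 3 * y * deriv (fun x' => deriv (fun x'' => r x'' t y) x') x
        + 3 * y ^ 2 * deriv (fun x' => r x' t y) x - y ^ 3 * r x t y) ∧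
    deriv (fun t' => T x t' y) t = e * deriv (fun t' => r x t' y) t ∧
    deriv (fun y' => T x t y') y = e * (deriv (fun y' => r x t y') y - x * r x t y) ∧
    deriv (fun y' => deriv (fun x' => T x' t y') x) y
      = e * (deriv (fun y' => deriv (fun x' => r x' t y') x) y - x * deriv (fun x' => r x' t y) x
        - r x t y - y * deriv (fun y' => r x t y') y + x * y * r x t y) := by
  subst hT he
  have r0 := fun x y => hr.hx 0 x t y
  have r1 := fun x y => hr.dx.hx 0 x t y
  have r2 := fun x y => hr.dx.dx.hx 0 x t y
  have ry := hr.hy 0 x t y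
  have rxy := hr.dx.hy 0 x t y
  have d1 := fun x y => (gx c y (r0 x y)).deriv
  have d2 := fun x => (gx c y ((r1 x y).sub ((r0 x y).const_mul y))).deriv
  have d3 := (gx c y (((r2 x y).sub ((r1 x y).const_mul y)).sub
    (((r1 x y).sub ((r0 x y).const_mul y)).const_mul y))).deriv
  have dxy := (gy c x (rxy.sub ((hasDerivAt_id y).mul ry))).deriv
  simp only [Pi.sub_apply, Pi.mul_apply, id] at d2 d3 dxy
  refine ⟨rfl, d1 x y, ?_, ?_, ?_, (gy c x ry).deriv, ?_⟩
  · simp only [d1, d2]; ring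
  · simp only [d1, d2, d3]; ring
  · exact ((hr.ht 0 x t y).const_mul _).deriv
  · simp only [d1, dxy]; ring

theorem log_ders (r r1 r2 r3 q q1 q2 q3 θ : ℝ → ℝ)
    (hr : ∀ x, HasDerivAt r (r1 x) x) (hr1 : ∀ x, HasDerivAt r1 (r2 x) x)
    (hr2 : ∀ x, HasDerivAt r2 (r3 x) x)
    (hq : ∀ x, HasDerivAt q (q1 x) x) (hq1 : ∀ x, HasDerivAt q1 (q2 x) x)
    (hq2 : ∀ x, HasDerivAt q2 (q3 x) x)
    (hθ : ∀ x, θ x = 2 * Real.log (r x / q x)) (x : ℝ) (h1 : 0 < r x) (h2 : 0 < q x) :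
    deriv θ x = 2 * (r1 x / r x - q1 x / q x) ∧
    deriv (fun x => deriv (fun x => deriv θ x) x) x =
      2 * ((r3 x / r x - 3 * r2 x * r1 x / r x ^ 2 + 2 * r1 x ^ 3 / r x ^ 3)
      - (q3 x / q x - 3 * q2 x * q1 x / q x ^ 2 + 2 * q1 x ^ 3 / q x ^ 3)) := by
  have cr : Continuous r := continuous_iff_continuousAt.mpr fun z => (hr z).continuousAt
  have cq : Continuous q := continuous_iff_continuousAt.mpr fun z => (hq z).continuousAt
  have hopen : IsOpen {z | 0 < r z ∧ 0 < q z} :=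
    (isOpen_lt continuous_const cr).inter (isOpen_lt continuous_const cq)
  have d1 : ∀ z ∈ {z | 0 < r z ∧ 0 < q z}, deriv θ z = 2 * (r1 z / r z - q1 z / q z) := by
    rintro z ⟨a, b⟩
    have : HasDerivAt (fun x => 2 * Real.log (r x / q x)) _ z :=
      (((hr z).div (hq z) b.ne').log (div_pos a b).ne').const_mul 2
    rw [funext hθ, this.deriv]
    simp only [Pi.div_apply]
    field_simp
  have d2 : ∀ z ∈ {z | 0 < r z ∧ 0 < q z}, deriv (fun x => deriv θ x) z
      = 2 * ((r2 z * r z - r1 z * r1 z) / r z ^ 2 - (q2 z * q z - q1 z * q1 z) / q z ^ 2) := by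
    intro z hz
    have := ((((hr1 z).div (hr z) hz.1.ne').sub ((hq1 z).div (hq z) hz.2.ne')).const_mul 2)
    exact (this.congr_of_eventuallyEq (eventually_of_mem (hopen.mem_nhds hz) d1)).deriv
  refine ⟨d1 x ⟨h1, h2⟩, ?_⟩
  have ha := (((hr2 x).mul (hr x)).sub ((hr1 x).mul (hr1 x))).div ((hr x).pow 2) (pow_ne_zero 2 h1.ne')
  have hb := (((hq2 x).mul (hq x)).sub ((hq1 x).mul (hq1 x))).div ((hq x).pow 2) (pow_ne_zero 2 h2.ne')
  have := (ha.sub hb).const_mul 2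
  have h3 := (this.congr_of_eventuallyEq (eventually_of_mem (hopen.mem_nhds ⟨h1, h2⟩) d2)).deriv
  rw [h3]
  simp only [Pi.sub_apply, Pi.mul_apply, Pi.pow_apply]
  have := h1.ne'
  have := h2.ne'
  field_simp
  push_cast
  ring

theorem mkdv_alg (r r1 r2 r3 rt q q1 q2 q3 qt : ℝ) (hr : r ≠ 0) (hq : q ≠ 0)
    (e2 : r2 * q - 2 * r1 * q1 + r * q2 = 0)
    (e3 : (r3 * q - 3 * r2 * q1 + 3 * r1 * q2 - r * q3) - (rt * q - r * qt) = 0) :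
    2 * (rt / r - qt / q) =
      2 * ((r3 / r - 3 * r2 * r1 / r ^ 2 + 2 * r1 ^ 3 / r ^ 3)
      - (q3 / q - 3 * q2 * q1 / q ^ 2 + 2 * q1 ^ 3 / q ^ 3))
      - (1 / 2) * (2 * (r1 / r - q1 / q)) ^ 3 := by
  have h2 : r2 = (2 * r1 * q1 - r * q2) / q := by
    field_simp; linarith
  have h3 : rt = ((r3 * q - 3 * r2 * q1 + 3 * r1 * q2 - r * q3) + r * qt) / q := by
    field_simp; linarith
  rw [h3, h2]
  field_simp
  ring

/-- For `f_n^{(i)} = α_i p_i^n e^{η_i} + β_i (-p_i)^n e^{-η_i}` with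
`η_i = p_i x + 4p_i³ t + y/p_i`, and `τ_N(k) = e^{-xy} ρ_N(k) / ∏ p_i^k`, the pair
`τ = τ_N(k)`, `τ̄ = τ_N(k+1)` satisfies `D_x D_y τ·τ = -2τ̄²`, `D_x D_y τ̄·τ̄ = -2τ²`,
`D_x² τ·τ̄ = 0`, `(D_x³ - D_t) τ·τ̄ = 0`; in particular
`θ = 2 log(ρ_N(k)/ρ_N(k+1))` satisfies the potential defocusing mKdV equation
on any open set where `ρ_N(k)` and `ρ_N(k+1)` are both positive. -/
theorem stmt_12 (N : ℕ) (hN : 0 < N) (k : ℤ) (α β p : Fin N → ℝ) (hp : ∀ i, p i ≠ 0)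
    (f : Fin N → ℤ → ℝ → ℝ → ℝ → ℝ)
    (hf : ∀ i n x t y, f i n x t y =
      α i * p i ^ n * Real.exp (p i * x + 4 * p i ^ 3 * t + y / p i)
        + β i * (-p i) ^ n * Real.exp (-(p i * x + 4 * p i ^ 3 * t + y / p i)))
    (ρ : ℤ → ℝ → ℝ → ℝ → ℝ)
    (hρ : ∀ m x t y, ρ m x t y =
      Matrix.det (Matrix.of fun i j : Fin N => f i (m + (j.val : ℤ)) x t y))
    (τ τb : ℝ → ℝ → ℝ → ℝ)
    (hτ : ∀ x t y, τ x t y = Real.exp (-(x * y)) / (∏ i, p i ^ k) * ρ k x t y)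
    (hτb : ∀ x t y, τb x t y =
      Real.exp (-(x * y)) / (∏ i, p i ^ (k + 1)) * ρ (k + 1) x t y)
    (θ : ℝ → ℝ → ℝ → ℝ)
    (hθ : ∀ x t y, θ x t y = 2 * Real.log (ρ k x t y / ρ (k + 1) x t y)) :
    (∀ x t y,
      (deriv (fun y' => deriv (fun x' => τ x' t y') x) y) * τ x t y
        - (deriv (fun x' => τ x' t y) x) * (deriv (fun y' => τ x t y') y)
        - (deriv (fun y' => τ x t y') y) * (deriv (fun x' => τ x' t y) x)
        + τ x t y * (deriv (fun y' => deriv (fun x' => τ x' t y') x) y)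
      = -2 * (τb x t y) ^ 2) ∧
    (∀ x t y,
      (deriv (fun y' => deriv (fun x' => τb x' t y') x) y) * τb x t y
        - (deriv (fun x' => τb x' t y) x) * (deriv (fun y' => τb x t y') y)
        - (deriv (fun y' => τb x t y') y) * (deriv (fun x' => τb x' t y) x)
        + τb x t y * (deriv (fun y' => deriv (fun x' => τb x' t y') x) y)
      = -2 * (τ x t y) ^ 2) ∧
    (∀ x t y,
      deriv (fun x' => deriv (fun x'' => τ x'' t y) x') x * τb x t y
        - 2 * deriv (fun x' => τ x' t y) x * deriv (fun x' => τb x' t y) x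
        + τ x t y * deriv (fun x' => deriv (fun x'' => τb x'' t y) x') x
      = 0) ∧
    (∀ x t y,
      (deriv (fun x' => deriv (fun x'' => deriv (fun s => τ s t y) x'') x') x * τb x t y
        - 3 * deriv (fun x' => deriv (fun x'' => τ x'' t y) x') x
            * deriv (fun x' => τb x' t y) x
        + 3 * deriv (fun x' => τ x' t y) x
            * deriv (fun x' => deriv (fun x'' => τb x'' t y) x') x
        - τ x t y * deriv (fun x' => deriv (fun x'' => deriv (fun s => τb s t y) x'') x') x)
        - (deriv (fun t' => τ x t' y) t * τb x t y - τ x t y * deriv (fun t' => τb x t' y) t)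
      = 0) ∧
    (∀ U : Set (ℝ × ℝ × ℝ), IsOpen U →
      (∀ q ∈ U, 0 < ρ k q.1 q.2.1 q.2.2 ∧ 0 < ρ (k + 1) q.1 q.2.1 q.2.2) →
      ∀ x t y, (x, t, y) ∈ U →
        deriv (fun t' => θ x t' y) t =
          deriv (fun x' => deriv (fun x'' => deriv (fun s => θ s t y) x'') x') x
            - (1 / 2) * (deriv (fun x' => θ x' t y) x) ^ 3) := by
  have hfe : f = fun i => ff (α i) (β i) (p i) := by
    funext i n x t y
    rw [hf]; rfl
  have hρe : ρ = rh α β p := by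
    funext m x t y
    rw [hρ, hfe]; rfl
  subst hρe
  have R := rh_CD0 α β p hp k
  have Q := rh_CD0 α β p hp (k + 1)
  set P : ℝ := ∏ i, p i ^ k with hP
  set P1 : ℝ := ∏ i, p i ^ (k + 1) with hP1
  set K : ℝ := ∏ i, p i ^ 2 with hK
  have hP0 : P ≠ 0 := Finset.prod_ne_zero_iff.mpr fun i _ => zpow_ne_zero _ (hp i)
  have hK0 : K ≠ 0 := Finset.prod_ne_zero_iff.mpr fun i _ => pow_ne_zero _ (hp i)
  have hPK : P1 ^ 2 = P ^ 2 * K := by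
    rw [hP1, hP, hK, ← Finset.prod_pow, ← Finset.prod_pow, ← Finset.prod_mul_distrib]
    refine Finset.prod_congr rfl fun i _ => ?_
    rw [zpow_add₀ (hp i), zpow_one]; ring
  have hP10 : P1 ≠ 0 := Finset.prod_ne_zero_iff.mpr fun i _ => zpow_ne_zero _ (hp i)
  have hτ' : τ = fun x t y => P⁻¹ * Real.exp (-(x * y)) * rh α β p k x t y := by
    funext x t y; rw [hτ]; ring
  have hτb' : τb = fun x t y => P1⁻¹ * Real.exp (-(x * y)) * rh α β p (k + 1) x t y := by
    funext x t y; rw [hτb]; ring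
  have hcc : ∀ E : ℝ, (P⁻¹ * E) ^ 2 = K * (P1⁻¹ * E) ^ 2 := by
    intro E
    rw [mul_pow, mul_pow, inv_pow, inv_pow, hPK]
    field_simp
  refine ⟨?_, ?_, ?_, ?_, ?_⟩
  · intro x t y
    obtain ⟨a0, a1, a2, a3, at', ay, axy⟩ := tauGauge _ _ τ R hτ' x t y _ rfl
    obtain ⟨b0, -⟩ := tauGauge _ _ τb Q hτb' x t y _ rfl
    obtain ⟨i1, i2, i3⟩ := all_bilin α β p hp k x t y _ _ rfl rfl
    rw [axy, ay, a1, a0, b0]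
    have hc := hcc (Real.exp (-(x * y)))
    generalize P⁻¹ * Real.exp (-(x * y)) = e at *
    generalize P1⁻¹ * Real.exp (-(x * y)) = e1 at *
    rw [← hK] at i1
    linear_combination 2 * e1 ^ 2 * i1 + 2 * (rh α β p k x t y * deriv (fun y' => deriv (fun x' => rh α β p k x' t y') x) y
      - deriv (fun x' => rh α β p k x' t y) x * deriv (fun y' => rh α β p k x t y') y - rh α β p k x t y ^ 2) * hc
  · intro x t y
    obtain ⟨b0, b1, b2, b3, bt', by', bxy⟩ := tauGauge _ _ τb Q hτb' x t y _ rfl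
    obtain ⟨a0, -⟩ := tauGauge _ _ τ R hτ' x t y _ rfl
    obtain ⟨i1, i2, i3⟩ := all_bilin α β p hp (k + 1) x t y _ _ rfl rfl
    rw [add_assoc k 1 1, one_add_one_eq_two, rh_add _ _ _ hp] at i1
    rw [bxy, by', b1, a0, b0]
    have hc := hcc (Real.exp (-(x * y)))
    generalize P⁻¹ * Real.exp (-(x * y)) = e at *
    generalize P1⁻¹ * Real.exp (-(x * y)) = e1 at *
    rw [← hK] at i1
    refine mul_left_cancel₀ hK0 ?_
    linear_combination 2 * e1 ^ 2 * i1 + 2 * K * rh α β p k x t y ^ 2 * hc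
  · intro x t y
    obtain ⟨a0, a1, a2, a3, at', ay, axy⟩ := tauGauge _ _ τ R hτ' x t y _ rfl
    obtain ⟨b0, b1, b2, b3, bt', by', bxy⟩ := tauGauge _ _ τb Q hτb' x t y _ rfl
    obtain ⟨i1, i2, i3⟩ := all_bilin α β p hp k x t y _ _ rfl rfl
    rw [a2, a1, a0, b2, b1, b0]
    linear_combination (P⁻¹ * Real.exp (-(x * y))) * (P1⁻¹ * Real.exp (-(x * y))) * i2
  · intro x t y
    obtain ⟨a0, a1, a2, a3, at', ay, axy⟩ := tauGauge _ _ τ R hτ' x t y _ rfl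
    obtain ⟨b0, b1, b2, b3, bt', by', bxy⟩ := tauGauge _ _ τb Q hτb' x t y _ rfl
    obtain ⟨i1, i2, i3⟩ := all_bilin α β p hp k x t y _ _ rfl rfl
    rw [a3, a2, a1, a0, b3, b2, b1, b0, at', bt']
    linear_combination (P⁻¹ * Real.exp (-(x * y))) * (P1⁻¹ * Real.exp (-(x * y))) * i3
  · intro U _ hU x t y hxU
    obtain ⟨h1, h2⟩ := hU _ hxU
    simp only at h1 h2
    obtain ⟨i1, i2, i3⟩ := all_bilin α β p hp k x t y _ _ rfl rfl
    obtain ⟨l1, l3⟩ := log_ders _ _ _ _ _ _ _ _ (fun x => θ x t y)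
      (fun x => R.hx 0 x t y) (fun x => R.dx.hx 0 x t y) (fun x => R.dx.dx.hx 0 x t y)
      (fun x => Q.hx 0 x t y) (fun x => Q.dx.hx 0 x t y) (fun x => Q.dx.dx.hx 0 x t y)
      (fun x => hθ x t y) x h1 h2
    have lt : deriv (fun t' => θ x t' y) t = 2 * (deriv (fun t' => rh α β p k x t' y) t / rh α β p k x t y
        - deriv (fun t' => rh α β p (k + 1) x t' y) t / rh α β p (k + 1) x t y) := by
      have : HasDerivAt (fun t' => 2 * Real.log (rh α β p k x t' y / rh α β p (k + 1) x t' y)) _ t :=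
        (((R.ht 0 x t y).div (Q.ht 0 x t y) h2.ne').log (div_pos h1 h2).ne').const_mul 2
      rw [funext fun t' => hθ x t' y, this.deriv]
      simp only [Pi.div_apply]
      have := h1.ne'
      have := h2.ne'
      field_simp
    rw [lt, l1, l3]
    exact mkdv_alg _ _ _ _ _ _ _ _ _ _ h1.ne' h2.ne' i2 i3
end

section
/- Let g_n^{(i)} (i, n ∈ ℤ) be smooth real-valued functions of (u,v,w) satisfying ∂_u g_n^{(i)} = g_{n+1}^{(i)}, ∂_v g_n^{(i)} = g_{n+2}^{(i)}, and ∂_w g_n^{(i)} = g_{n+3}^{(i)} for all i and n. For a positive integer N and an integer k, let h_N(k) = det[ g^{(i)}_{k+j−1} ]_{1≤i,j≤N} and h_0 = 1. Then the bilinear equations of the mKP hierarchy hold: (D_u² − D_v) h_{N+1}(k)·h_N(k) = 0 and (D_u³ − 4 D_w + 3 D_u D_v) h_{N+1}(k)·h_N(k) = 0. -/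
set_option linter.unusedSimpArgs false

theorem dW {M : ℕ} (G : ℤ → ℤ → ℝ → ℝ) (p : ℤ)
    (hG : ∀ i n t, HasDerivAt (G i n) (G i (n + p) t) t) (c : Fin M → ℤ) (t : ℝ) :
    HasDerivAt (fun t => Matrix.det (Matrix.of fun i j : Fin M => G ((i.val : ℤ) + 1) (c j) t))
      (∑ l, Matrix.det (Matrix.of fun i j : Fin M =>
        G ((i.val : ℤ) + 1) (Function.update c l (c l + p) j) t)) t := by
  simp only [Matrix.det_apply]
  rw [Finset.sum_comm]
  apply HasDerivAt.fun_sum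
  intro σ _
  rw [← Finset.smul_sum]
  apply HasDerivAt.const_smul
  simp only [Matrix.of_apply]
  have := HasDerivAt.fun_finsetProd (u := Finset.univ) (x := t)
    (f := fun (j : Fin M) t => G (((σ j).val : ℤ) + 1) (c j) t)
    (f' := fun j => G (((σ j).val : ℤ) + 1) (c j + p) t) (fun j _ => hG _ _ _)
  refine this.congr_deriv ?_
  symm
  apply Finset.sum_congr rfl
  intro l _
  rw [← Finset.mul_prod_erase Finset.univ _ (Finset.mem_univ l), mul_comm, smul_eq_mul]
  congr 1
  · apply Finset.prod_congr rfl
    intro x hx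
    rw [Function.update_of_ne (Finset.ne_of_mem_erase hx)]
  · simp

def colT (k : ℤ) (m : ℕ) (a b c : ℤ) (j : Fin (m + 3)) : ℤ :=
  if j.val < m then k + j.val else if j.val = m then k + m + a
  else if j.val = m + 1 then k + m + b else k + m + c

noncomputable def DT (F : ℤ → ℤ → ℝ) (k : ℤ) (m : ℕ) (a b c : ℤ) : ℝ :=
  Matrix.det (Matrix.of fun i j : Fin (m + 3) => F ((i.val : ℤ) + 1) (colT k m a b c j))

theorem det_rep {M : ℕ} (F : ℤ → ℤ → ℝ) (c : Fin M → ℤ) (i j : Fin M) (hij : i ≠ j)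
    (h : c i = c j) :
    Matrix.det (Matrix.of fun i j : Fin M => F ((i.val : ℤ) + 1) (c j)) = 0 := by
  apply Matrix.det_zero_of_column_eq hij
  intro l
  simp [h]

theorem DT_zero (F : ℤ → ℤ → ℝ) (k a b c : ℤ) : DT F k 0 a b c =
    F 1 (k + a) * F 2 (k + b) * F 3 (k + c) - F 1 (k + a) * F 2 (k + c) * F 3 (k + b)
    - F 1 (k + b) * F 2 (k + a) * F 3 (k + c) + F 1 (k + b) * F 2 (k + c) * F 3 (k + a)
    + F 1 (k + c) * F 2 (k + a) * F 3 (k + b) - F 1 (k + c) * F 2 (k + b) * F 3 (k + a) := by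
  refine (Matrix.det_fin_three (Matrix.of fun i j : Fin 3 =>
    F ((i.val : ℤ) + 1) (colT k 0 a b c j))).trans ?_
  simp [colT]

theorem DT_aac (F k m a c) : DT F k m a a c = 0 := by
  apply det_rep F _ ⟨m, by omega⟩ ⟨m + 1, by omega⟩ (by simp)
  simp [colT]

theorem DT_abb (F k m a b) : DT F k m a b b = 0 := by
  apply det_rep F _ ⟨m + 1, by omega⟩ ⟨m + 2, by omega⟩ (by simp)
  simp [colT]

theorem DT_aba (F k m a b) : DT F k m a b a = 0 := by
  apply det_rep F _ ⟨m, by omega⟩ ⟨m + 2, by omega⟩ (by simp)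
  simp [colT]

theorem det_sw {M : ℕ} (F : ℤ → ℤ → ℝ) (c d : Fin M → ℤ) (i j : Fin M) (hij : i ≠ j)
    (h : ∀ l, d l = c (Equiv.swap i j l)) :
    Matrix.det (Matrix.of fun i j : Fin M => F ((i.val : ℤ) + 1) (d j)) =
    - Matrix.det (Matrix.of fun i j : Fin M => F ((i.val : ℤ) + 1) (c j)) := by
  have := Matrix.det_permute' (Equiv.swap i j)
    (Matrix.of fun i j : Fin M => F ((i.val : ℤ) + 1) (c j))
  rw [Equiv.Perm.sign_swap hij] at this
  simp only [Units.val_neg, Units.val_one, Int.cast_neg, Int.cast_one, neg_mul, one_mul] at this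
  rw [← this]
  congr 1
  ext x y
  simp [h]

theorem DT_sw1 (F k m a b c) : DT F k m b a c = - DT F k m a b c := by
  apply det_sw F _ _ ⟨m, by omega⟩ ⟨m + 1, by omega⟩ (by simp)
  intro l
  rw [Equiv.swap_apply_def]
  simp only [colT, Fin.ext_iff]
  grind

theorem DT_sw2 (F k m a b c) : DT F k m a c b = - DT F k m a b c := by
  apply det_sw F _ _ ⟨m + 1, by omega⟩ ⟨m + 2, by omega⟩ (by simp)
  intro l
  rw [Equiv.swap_apply_def]
  simp only [colT, Fin.ext_iff]
  grind

theorem dT (G : ℤ → ℤ → ℝ → ℝ) (p : ℕ)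
    (hG : ∀ i n t, HasDerivAt (G i n) (G i (n + p) t) t) (k : ℤ) (m : ℕ) (a b c : ℤ)
    (hp : 0 < p) (hc : ∀ x : ℤ, 0 ≤ x → x < p → x = a ∨ x = b ∨ x = c) (t : ℝ) :
    HasDerivAt (fun t => DT (fun i n => G i n t) k m a b c)
     (DT (fun i n => G i n t) k m (a + p) b c + DT (fun i n => G i n t) k m a (b + p) c
      + DT (fun i n => G i n t) k m a b (c + p)) t := by
  unfold DT
  convert dW G p hG (colT k m a b c) t using 1
  rw [Fin.sum_univ_castSucc, Fin.sum_univ_castSucc, Fin.sum_univ_castSucc]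
  rw [Finset.sum_eq_zero]
  · rw [zero_add]
    congr 1
    · congr 1
      · congr 3
        ext i j
        congr 1
        simp only [colT, Function.update_apply, Fin.ext_iff, Fin.val_castSucc, Fin.val_last]
        grind
      · congr 3
        ext i j
        congr 1
        simp only [colT, Function.update_apply, Fin.ext_iff, Fin.val_castSucc, Fin.val_last]
        grind
    · congr 3
      ext i j
      congr 1
      simp only [colT, Function.update_apply, Fin.ext_iff, Fin.val_castSucc, Fin.val_last]
      grind
  · intro l _
    obtain ⟨l, hl⟩ := l
    have key : ∃ j : Fin (m + 3), j.val ≠ l ∧ colT k m a b c j = k + l + p := by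
      by_cases h1 : l + p < m
      · refine ⟨⟨l + p, by omega⟩, by simp; omega, ?_⟩
        simp [colT, h1]; ring
      · rcases hc ((l : ℤ) + p - m) (by omega) (by omega) with h | h | h
        · refine ⟨⟨m, by omega⟩, by simp; omega, ?_⟩
          simp [colT]; omega
        · refine ⟨⟨m + 1, by omega⟩, by simp; omega, ?_⟩
          simp [colT]; omega
        · refine ⟨⟨m + 2, by omega⟩, by simp; omega, ?_⟩
          simp [colT]; omega
    obtain ⟨j, hj, hj2⟩ := key
    refine det_rep (fun i n => G i n t) _ ⟨l, by omega⟩ j (by simp [Fin.ext_iff]; omega) ?_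
    have hj' : j ≠ (⟨l, hl⟩ : Fin m).castSucc.castSucc.castSucc := by simpa [Fin.ext_iff] using hj
    rw [Function.update_apply, Function.update_apply, if_neg hj', hj2]
    simp [colT, hl]

theorem plu {N : ℕ} (X : Matrix (Fin (N + 1)) (Fin (N + 1)) ℝ) (Y : Matrix (Fin N) (Fin N) ℝ)
    (q : Fin N) (a b : Fin (N + 1)) (hab : a ≠ b)
    (hX : ∀ j, j ≠ a → j ≠ b → ∃ l, l ≠ q ∧ ∀ i : Fin N, X i.castSucc j = Y i l)
    (z : Fin (N + 1) → ℝ) :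
    X.det * (Y.updateCol q (fun i => z i.castSucc)).det =
      (X.updateCol a z).det * (Y.updateCol q (fun i => X i.castSucc a)).det
      + (X.updateCol b z).det * (Y.updateCol q (fun i => X i.castSucc b)).det := by
  have h := Matrix.mulVec_cramer X z
  have e : ∀ y : Fin N → ℝ, (Y.updateCol q y).det = Matrix.cramer Y y q := fun y =>
    (Matrix.cramer_apply Y y q).symm
  have h2 : X.det • (fun i : Fin N => z i.castSucc) =
      ∑ j, Matrix.cramer X z j • (fun i : Fin N => X i.castSucc j) := by
    ext i
    have := congrFun h i.castSucc
    simp only [Matrix.mulVec, dotProduct, Pi.smul_apply, smul_eq_mul] at this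
    simp only [Pi.smul_apply, smul_eq_mul, Finset.sum_apply]
    rw [← this]
    exact Finset.sum_congr rfl fun _ _ => mul_comm _ _
  have h3 := congrFun (congrArg (Matrix.cramer Y) h2) q
  rw [map_smul, map_sum] at h3
  simp only [map_smul, Pi.smul_apply, smul_eq_mul, Finset.sum_apply] at h3
  rw [e, e, e, h3, ← Matrix.cramer_apply, ← Matrix.cramer_apply]
  rw [← Finset.sum_subset (Finset.subset_univ {a, b}), Finset.sum_pair hab]
  intro j _ hj
  simp only [Finset.mem_insert, Finset.mem_singleton, not_or] at hj
  obtain ⟨l, hl, hl2⟩ := hX j hj.1 hj.2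
  rw [Matrix.cramer_apply (A := Y), Matrix.det_zero_of_column_eq hl, mul_zero]
  intro i
  simp [Matrix.updateCol_ne hl, hl2]

theorem plu1 (F : ℤ → ℤ → ℝ) (k : ℤ) (m : ℕ) (x y z : ℤ) :
    DT F k (m + 1) 0 x y * DT F k m 0 1 (z + 1)
      = DT F k (m + 1) 0 z y * DT F k m 0 1 (x + 1)
       + DT F k (m + 1) 0 x z * DT F k m 0 1 (y + 1) := by
  have h := plu (N := m + 3)
    (Matrix.of fun i j : Fin (m + 4) => F ((i.val : ℤ) + 1) (colT k (m + 1) 0 x y j))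
    (Matrix.of fun i j : Fin (m + 3) => F ((i.val : ℤ) + 1) (colT k m 0 1 0 j))
    ⟨m + 2, by omega⟩ ⟨m + 2, by omega⟩ ⟨m + 3, by omega⟩ (by simp) ?_
    (fun i => F ((i.val : ℤ) + 1) (k + (m + 1) + z))
  · unfold DT
    convert h using 2
    · congr 1
      ext i j
      simp only [colT, Matrix.updateCol_apply, Matrix.of_apply, Fin.ext_iff, Fin.val_castSucc]
      grind
    · congr 2
      · ext i j
        simp only [colT, Matrix.updateCol_apply, Matrix.of_apply, Fin.ext_iff, Fin.val_castSucc]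
        grind
      · ext i j
        simp only [colT, Matrix.updateCol_apply, Matrix.of_apply, Fin.ext_iff, Fin.val_castSucc]
        grind
    · congr 2
      · ext i j
        simp only [colT, Matrix.updateCol_apply, Matrix.of_apply, Fin.ext_iff, Fin.val_castSucc]
        grind
      · ext i j
        simp only [colT, Matrix.updateCol_apply, Matrix.of_apply, Fin.ext_iff, Fin.val_castSucc]
        grind
  · intro j h1 h2
    simp only [ne_eq, Fin.ext_iff] at h1 h2
    refine ⟨⟨j.val, by omega⟩, by simpa [Fin.ext_iff] using h1, fun i => ?_⟩
    simp only [colT, Matrix.of_apply, Fin.val_castSucc]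
    grind

theorem plu2 (F : ℤ → ℤ → ℝ) (k : ℤ) (m : ℕ) (x y z : ℤ) :
    DT F k (m + 1) x 1 y * DT F k m 0 (z + 1) 2
      = DT F k (m + 1) z 1 y * DT F k m 0 (x + 1) 2
       + DT F k (m + 1) x 1 z * DT F k m 0 (y + 1) 2 := by
  have h := plu (N := m + 3)
    (Matrix.of fun i j : Fin (m + 4) => F ((i.val : ℤ) + 1) (colT k (m + 1) x 1 y j))
    (Matrix.of fun i j : Fin (m + 3) => F ((i.val : ℤ) + 1) (colT k m 0 0 2 j))
    ⟨m + 1, by omega⟩ ⟨m + 1, by omega⟩ ⟨m + 3, by omega⟩ (by simp) ?_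
    (fun i => F ((i.val : ℤ) + 1) (k + (m + 1) + z))
  · unfold DT
    convert h using 2
    · congr 1
      ext i j
      simp only [colT, Matrix.updateCol_apply, Matrix.of_apply, Fin.ext_iff, Fin.val_castSucc]
      grind
    · congr 2
      · ext i j
        simp only [colT, Matrix.updateCol_apply, Matrix.of_apply, Fin.ext_iff, Fin.val_castSucc]
        grind
      · ext i j
        simp only [colT, Matrix.updateCol_apply, Matrix.of_apply, Fin.ext_iff, Fin.val_castSucc]
        grind
    · congr 2
      · ext i j
        simp only [colT, Matrix.updateCol_apply, Matrix.of_apply, Fin.ext_iff, Fin.val_castSucc]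
        grind
      · ext i j
        simp only [colT, Matrix.updateCol_apply, Matrix.of_apply, Fin.ext_iff, Fin.val_castSucc]
        grind
  · intro j h1 h2
    simp only [ne_eq, Fin.ext_iff] at h1 h2
    refine ⟨⟨j.val, by omega⟩, by simpa [Fin.ext_iff] using h1, fun i => ?_⟩
    simp only [colT, Matrix.of_apply, Fin.val_castSucc]
    grind

structure PD (H s1 s2 s11 s3 s21 s111 : ℝ → ℝ → ℝ → ℝ) : Prop where
  u1 : ∀ u v w, HasDerivAt (fun t => H t v w) (s1 u v w) u
  u2 : ∀ u v w, HasDerivAt (fun t => s1 t v w) (s2 u v w + s11 u v w) u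
  u3 : ∀ u v w, HasDerivAt (fun t => s2 t v w + s11 t v w)
    (s3 u v w + 2 * s21 u v w + s111 u v w) u
  v1 : ∀ u v w, HasDerivAt (fun t => H u t w) (s2 u v w - s11 u v w) v
  w1 : ∀ u v w, HasDerivAt (fun t => H u v t) (s3 u v w - s21 u v w + s111 u v w) w
  uv : ∀ u v w, HasDerivAt (fun t => s1 u t w) (s3 u v w - s111 u v w) v

theorem fin_PD (A a1 a2 a11 a3 a21 a111 B b1 b2 b11 b3 b21 b111 : ℝ → ℝ → ℝ → ℝ)
    (hA : PD A a1 a2 a11 a3 a21 a111) (hB : PD B b1 b2 b11 b3 b21 b111)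
    (e1 : ∀ u v w, a11 u v w * B u v w - a1 u v w * b1 u v w + A u v w * b2 u v w = 0)
    (e2 : ∀ u v w, a21 u v w * B u v w - a111 u v w * B u v w - a2 u v w * b1 u v w
      + a1 u v w * b11 u v w + A u v w * b3 u v w - A u v w * b21 u v w = 0) :
    (∀ u v w,
      deriv (fun u' => deriv (fun u'' => A u'' v w) u') u * B u v w
        - 2 * deriv (fun u' => A u' v w) u * deriv (fun u' => B u' v w) u
        + A u v w * deriv (fun u' => deriv (fun u'' => B u'' v w) u') u
        - (deriv (fun v' => A u v' w) v * B u v w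
            - A u v w * deriv (fun v' => B u v' w) v)
      = 0) ∧
    (∀ u v w,
      (deriv (fun u' => deriv (fun u'' => deriv (fun s => A s v w) u'') u') u
          * B u v w
        - 3 * deriv (fun u' => deriv (fun u'' => A u'' v w) u') u
            * deriv (fun u' => B u' v w) u
        + 3 * deriv (fun u' => A u' v w) u
            * deriv (fun u' => deriv (fun u'' => B u'' v w) u') u
        - A u v w
            * deriv (fun u' => deriv (fun u'' => deriv (fun s => B s v w) u'') u') u)
      - 4 * (deriv (fun w' => A u v w') w * B u v w
          - A u v w * deriv (fun w' => B u v w') w)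
      + 3 * (deriv (fun v' => deriv (fun u' => A u' v' w) u) v * B u v w
          - deriv (fun u' => A u' v w) u * deriv (fun v' => B u v' w) v
          - deriv (fun v' => A u v' w) v * deriv (fun u' => B u' v w) u
          + A u v w * deriv (fun v' => deriv (fun u' => B u' v' w) u) v)
      = 0) := by
  simp only [fun u v w => (hA.u1 u v w).deriv, fun u v w => (hA.u2 u v w).deriv,
    fun u v w => (hA.u3 u v w).deriv, fun u v w => (hA.v1 u v w).deriv,
    fun u v w => (hA.w1 u v w).deriv, fun u v w => (hA.uv u v w).deriv,
    fun u v w => (hB.u1 u v w).deriv, fun u v w => (hB.u2 u v w).deriv,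
    fun u v w => (hB.u3 u v w).deriv, fun u v w => (hB.v1 u v w).deriv,
    fun u v w => (hB.w1 u v w).deriv, fun u v w => (hB.uv u v w).deriv]
  constructor
  · intro u v w
    linear_combination 2 * e1 u v w
  · intro u v w
    linear_combination 6 * e2 u v w

section main
variable (g : ℤ → ℤ → ℝ → ℝ → ℝ → ℝ)
    (hu : ∀ i n u v w, HasDerivAt (fun t => g i n t v w) (g i (n + 1) u v w) u)
    (hv : ∀ i n u v w, HasDerivAt (fun t => g i n u t w) (g i (n + 2) u v w) v)
    (hw : ∀ i n u v w, HasDerivAt (fun t => g i n u v t) (g i (n + 3) u v w) w)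

noncomputable def TT (g : ℤ → ℤ → ℝ → ℝ → ℝ → ℝ) (k : ℤ) (m : ℕ) (a b c : ℤ) (u v w : ℝ) : ℝ :=
  DT (fun i n => g i n u v w) k m a b c

include hu hv hw

theorem PD3 (k : ℤ) (m : ℕ) : PD (TT g k m 0 1 2) (TT g k m 0 1 3) (TT g k m 0 1 4)
    (TT g k m 0 2 3) (TT g k m 0 1 5) (TT g k m 0 2 4) (TT g k m 1 2 3) := by
  have U : ∀ a b c, (∀ x : ℤ, 0 ≤ x → x < (1 : ℕ) → x = a ∨ x = b ∨ x = c) → ∀ u v w,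
      HasDerivAt (fun t => TT g k m a b c t v w) (TT g k m (a + 1) b c u v w
        + TT g k m a (b + 1) c u v w + TT g k m a b (c + 1) u v w) u := fun a b c hc u v w =>
    dT (fun i n t => g i n t v w) 1 (fun i n t => hu i n t v w) k m a b c (by norm_num) hc u
  have V : ∀ a b c, (∀ x : ℤ, 0 ≤ x → x < (2 : ℕ) → x = a ∨ x = b ∨ x = c) → ∀ u v w,
      HasDerivAt (fun t => TT g k m a b c u t w) (TT g k m (a + 2) b c u v w
        + TT g k m a (b + 2) c u v w + TT g k m a b (c + 2) u v w) v := fun a b c hc u v w =>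
    dT (fun i n t => g i n u t w) 2 (fun i n t => hv i n u t w) k m a b c (by norm_num) hc v
  have W : ∀ a b c, (∀ x : ℤ, 0 ≤ x → x < (3 : ℕ) → x = a ∨ x = b ∨ x = c) → ∀ u v w,
      HasDerivAt (fun t => TT g k m a b c u v t) (TT g k m (a + 3) b c u v w
        + TT g k m a (b + 3) c u v w + TT g k m a b (c + 3) u v w) w := fun a b c hc u v w =>
    dT (fun i n t => g i n u v t) 3 (fun i n t => hw i n u v t) k m a b c (by norm_num) hc w
  have z1 : ∀ a c u v w, TT g k m a a c u v w = 0 := fun a c u v w => DT_aac _ k m a c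
  have z2 : ∀ a c u v w, TT g k m a c c u v w = 0 := fun a c u v w => DT_abb _ k m a c
  have z3 : ∀ a c u v w, TT g k m a c a u v w = 0 := fun a c u v w => DT_aba _ k m a c
  have q1 : ∀ a b c u v w, TT g k m b a c u v w = - TT g k m a b c u v w :=
    fun a b c u v w => DT_sw1 _ k m a b c
  have q2 : ∀ a b c u v w, TT g k m a c b u v w = - TT g k m a b c u v w :=
    fun a b c u v w => DT_sw2 _ k m a b c
  refine ⟨fun u v w => ?_, fun u v w => ?_, fun u v w => ?_, fun u v w => ?_,
    fun u v w => ?_, fun u v w => ?_⟩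
  · refine (U 0 1 2 (by intro x; omega) u v w).congr_deriv ?_
    norm_num [z1, z2, z3]
  · refine (U 0 1 3 (by intro x; omega) u v w).congr_deriv ?_
    norm_num [z1, z2, z3]
    ring
  · refine ((U 0 1 4 (by intro x; omega) u v w).add
      (U 0 2 3 (by intro x; omega) u v w)).congr_deriv ?_
    norm_num [z1, z2, z3]
    ring
  · refine (V 0 1 2 (by intro x; omega) u v w).congr_deriv ?_
    norm_num [z1, z2, z3]
    rw [q2 0 2 3]
    ring
  · refine (W 0 1 2 (by intro x; omega) u v w).congr_deriv ?_
    norm_num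
    rw [q2 0 2 4, q1 1 3 2, q2 1 2 3]
    ring
  · refine (V 0 1 3 (by intro x; omega) u v w).congr_deriv ?_
    norm_num [z1, z2, z3]
    rw [q1 1 2 3]
    ring

theorem PD1 (k : ℤ) : PD (g 1 k) (g 1 (k + 1)) (g 1 (k + 2)) (fun _ _ _ => 0)
    (g 1 (k + 3)) (fun _ _ _ => 0) (fun _ _ _ => 0) := by
  refine ⟨fun u v w => ?_, fun u v w => ?_, fun u v w => ?_, fun u v w => ?_,
    fun u v w => ?_, fun u v w => ?_⟩
  · exact hu _ _ _ _ _
  · refine (hu _ _ _ _ _).congr_deriv ?_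
    rw [show k + 1 + 1 = k + 2 by ring, add_zero]
  · simp only [add_zero]
    refine (hu _ _ _ _ _).congr_deriv ?_
    rw [show k + 2 + 1 = k + 3 by ring]; simp
  · refine (hv _ _ _ _ _).congr_deriv ?_
    simp
  · refine (hw _ _ _ _ _).congr_deriv ?_
    simp
  · refine (hv _ _ _ _ _).congr_deriv ?_
    rw [show k + 1 + 2 = k + 3 by ring, sub_zero]

omit hu hv hw
noncomputable def EE (g : ℤ → ℤ → ℝ → ℝ → ℝ → ℝ) (k : ℤ) (a b : ℤ) (u v w : ℝ) : ℝ :=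
  g 1 (k + a) u v w * g 2 (k + b) u v w - g 1 (k + b) u v w * g 2 (k + a) u v w
include hu hv hw

theorem PD2 (k : ℤ) : PD (EE g k 0 1) (EE g k 0 2) (EE g k 0 3) (EE g k 1 2)
    (EE g k 0 4) (EE g k 1 3) (fun _ _ _ => 0) := by
  have U : ∀ a b u v w, HasDerivAt (fun t => EE g k a b t v w)
      (EE g k (a + 1) b u v w + EE g k a (b + 1) u v w) u := fun a b u v w => by
    refine (((hu 1 (k + a) u v w).mul (hu 2 (k + b) u v w)).sub
      ((hu 1 (k + b) u v w).mul (hu 2 (k + a) u v w))).congr_deriv ?_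
    simp only [EE, add_assoc]; ring
  have V : ∀ a b u v w, HasDerivAt (fun t => EE g k a b u t w)
      (EE g k (a + 2) b u v w + EE g k a (b + 2) u v w) v := fun a b u v w => by
    refine (((hv 1 (k + a) u v w).mul (hv 2 (k + b) u v w)).sub
      ((hv 1 (k + b) u v w).mul (hv 2 (k + a) u v w))).congr_deriv ?_
    simp only [EE, add_assoc]; ring
  have W : ∀ a b u v w, HasDerivAt (fun t => EE g k a b u v t)
      (EE g k (a + 3) b u v w + EE g k a (b + 3) u v w) w := fun a b u v w => by
    refine (((hw 1 (k + a) u v w).mul (hw 2 (k + b) u v w)).sub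
      ((hw 1 (k + b) u v w).mul (hw 2 (k + a) u v w))).congr_deriv ?_
    simp only [EE, add_assoc]; ring
  refine ⟨fun u v w => ?_, fun u v w => ?_, fun u v w => ?_, fun u v w => ?_,
    fun u v w => ?_, fun u v w => ?_⟩
  · refine (U _ _ u v w).congr_deriv ?_
    norm_num [EE]; try ring
  · refine (U _ _ u v w).congr_deriv ?_
    norm_num [EE]; try ring
  · refine ((U _ _ u v w).add (U _ _ u v w)).congr_deriv ?_
    norm_num [EE]; try ring
  · refine (V _ _ u v w).congr_deriv ?_
    norm_num [EE]; try ring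
  · refine (W _ _ u v w).congr_deriv ?_
    norm_num [EE]; try ring
  · refine (V _ _ u v w).congr_deriv ?_
    norm_num [EE]; try ring

end main

/-- For smooth functions `g_n^{(i)}(u,v,w)` with `∂_u g_n = g_{n+1}`,
`∂_v g_n = g_{n+2}`, `∂_w g_n = g_{n+3}`, the determinants
`h_N(k) = det[g^{(i)}_{k+j-1}]` satisfy the mKP hierarchy bilinear equations
`(D_u² - D_v) h_{N+1}(k)·h_N(k) = 0` and
`(D_u³ - 4D_w + 3D_u D_v) h_{N+1}(k)·h_N(k) = 0`. -/
theorem stmt_13 (g : ℤ → ℤ → ℝ → ℝ → ℝ → ℝ)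
    (hsm : ∀ i n, ContDiff ℝ (⊤ : ℕ∞) (fun q : ℝ × ℝ × ℝ => g i n q.1 q.2.1 q.2.2))
    (hgu : ∀ i n u v w, deriv (fun u' => g i n u' v w) u = g i (n + 1) u v w)
    (hgv : ∀ i n u v w, deriv (fun v' => g i n u v' w) v = g i (n + 2) u v w)
    (hgw : ∀ i n u v w, deriv (fun w' => g i n u v w') w = g i (n + 3) u v w)
    (h : ℕ → ℤ → ℝ → ℝ → ℝ → ℝ)
    (hh : ∀ M m u v w, h M m u v w =
      Matrix.det (Matrix.of fun i j : Fin M => g ((i.val : ℤ) + 1) (m + (j.val : ℤ)) u v w))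
    (N : ℕ) (hN : 0 < N) (k : ℤ) :
    (∀ u v w,
      deriv (fun u' => deriv (fun u'' => h (N + 1) k u'' v w) u') u * h N k u v w
        - 2 * deriv (fun u' => h (N + 1) k u' v w) u * deriv (fun u' => h N k u' v w) u
        + h (N + 1) k u v w * deriv (fun u' => deriv (fun u'' => h N k u'' v w) u') u
        - (deriv (fun v' => h (N + 1) k u v' w) v * h N k u v w
            - h (N + 1) k u v w * deriv (fun v' => h N k u v' w) v)
      = 0) ∧
    (∀ u v w,
      (deriv (fun u' => deriv (fun u'' => deriv (fun s => h (N + 1) k s v w) u'') u') u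
          * h N k u v w
        - 3 * deriv (fun u' => deriv (fun u'' => h (N + 1) k u'' v w) u') u
            * deriv (fun u' => h N k u' v w) u
        + 3 * deriv (fun u' => h (N + 1) k u' v w) u
            * deriv (fun u' => deriv (fun u'' => h N k u'' v w) u') u
        - h (N + 1) k u v w
            * deriv (fun u' => deriv (fun u'' => deriv (fun s => h N k s v w) u'') u') u)
      - 4 * (deriv (fun w' => h (N + 1) k u v w') w * h N k u v w
          - h (N + 1) k u v w * deriv (fun w' => h N k u v w') w)
      + 3 * (deriv (fun v' => deriv (fun u' => h (N + 1) k u' v' w) u) v * h N k u v w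
          - deriv (fun u' => h (N + 1) k u' v w) u * deriv (fun v' => h N k u v' w) v
          - deriv (fun v' => h (N + 1) k u v' w) v * deriv (fun u' => h N k u' v w) u
          + h (N + 1) k u v w * deriv (fun v' => deriv (fun u' => h N k u' v' w) u) v)
      = 0) := by
  have hu : ∀ i n u v w, HasDerivAt (fun t => g i n t v w) (g i (n + 1) u v w) u := by
    intro i n u v w
    rw [← hgu]
    apply DifferentiableAt.hasDerivAt
    have h1 := (hsm i n).differentiable (by simp)
    exact (h1.comp (by fun_prop : Differentiable ℝ fun t : ℝ => (t, v, w))).differentiableAt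
  have hv : ∀ i n u v w, HasDerivAt (fun t => g i n u t w) (g i (n + 2) u v w) v := by
    intro i n u v w
    rw [← hgv]
    apply DifferentiableAt.hasDerivAt
    have h1 := (hsm i n).differentiable (by simp)
    exact (h1.comp (by fun_prop : Differentiable ℝ fun t : ℝ => (u, t, w))).differentiableAt
  have hw : ∀ i n u v w, HasDerivAt (fun t => g i n u v t) (g i (n + 3) u v w) w := by
    intro i n u v w
    rw [← hgw]
    apply DifferentiableAt.hasDerivAt
    have h1 := (hsm i n).differentiable (by simp)
    exact (h1.comp (by fun_prop : Differentiable ℝ fun t : ℝ => (u, v, t))).differentiableAt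
  have hT : ∀ m, h (m + 3) k = TT g k m 0 1 2 := by
    intro m
    ext u v w
    rw [hh, TT, DT]
    congr 2
    ext i j
    congr 1
    simp only [colT]
    grind
  have h1 : h 1 k = g 1 k := by
    ext u v w
    rw [hh]
    simp
  have h2 : h 2 k = EE g k 0 1 := by
    ext u v w
    rw [hh]
    simp [Matrix.det_fin_two, EE]
  match N, hN with
  | 1, _ =>
    rw [h1, h2]
    refine fin_PD _ _ _ _ _ _ _ _ _ _ _ _ _ _ (PD2 g hu hv hw k) (PD1 g hu hv hw k) ?_ ?_
    · intro u v w
      norm_num [EE]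
      ring
    · intro u v w
      norm_num [EE]
      ring
  | 2, _ =>
    rw [h2, hT 0]
    refine fin_PD _ _ _ _ _ _ _ _ _ _ _ _ _ _ (PD3 g hu hv hw k 0) (PD2 g hu hv hw k) ?_ ?_
    · intro u v w
      norm_num [EE, TT, DT_zero]
      ring
    · intro u v w
      norm_num [EE, TT, DT_zero]
      ring
  | m + 3, _ =>
    rw [hT m, show m + 3 + 1 = (m + 1) + 3 by ring, hT (m + 1)]
    refine fin_PD _ _ _ _ _ _ _ _ _ _ _ _ _ _ (PD3 g hu hv hw k (m + 1)) (PD3 g hu hv hw k m)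
      ?_ ?_
    · intro u v w
      have p := plu1 (fun i n => g i n u v w) k m 1 2 3
      norm_num at p
      rw [DT_sw2 _ _ _ 0 2 3] at p
      simp only [TT]
      linear_combination p
    · intro u v w
      have p := plu1 (fun i n => g i n u v w) k m 1 2 4
      norm_num at p
      rw [DT_sw2 _ _ _ 0 2 4] at p
      have p' := plu2 (fun i n => g i n u v w) k m 0 2 3
      norm_num at p'
      rw [DT_sw1 _ _ _ 1 3 2, DT_sw2 _ _ _ 1 2 3, DT_sw2 _ _ _ 0 2 4, DT_sw2 _ _ _ 0 2 3] at p'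
      simp only [TT]
      linear_combination p + p'
end
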